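/- arXiv:2111.10249 — 6 statements merged into one kernel-verified Lean document; each statement's English description precedes it below -/
import Mathlib

section
/- Let G be a finite multigraph, let n ≥ 1, let v₁,…,v_{2n} be 2n pairwise distinct vertices of G, and let p be a chain of edges with ∂(p) = v₁ + v₂ + ⋯ + v_{2n}. Then there exist n paths P₁,…,P_n such that each P_i goes between two vertices v_{i,1} and v_{i,2}, the 2n endpoints v_{1,1}, v_{1,2}, …, v_{n,1}, v_{n,2} are exactly the vertices v₁,…,v_{2n} (each occurring once), every edge appearing in any of the paths P₁,…,P_n is a summand of p, and no two of the paths P₁,…,P_n have any common edge. -/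
/-!
The chain `p` is decomposed greedily.  Starting at a vertex `u` of odd degree in `p`, some edge `e`
of `p` leaves `u`, say towards `x`.  Removing `e` from `p` flips the parity at `u` and at `x` only.
If `x` was odd, the trail stops there; otherwise `x` is odd in the smaller chain and the trail is
continued from `x` by induction on the size of the chain.  The trail thus ends at a second odd
vertex `w`, and deleting its edges removes exactly `u` and `w` from the boundary
(`exists_trail`).  Repeating this `n` times on the remaining chain yields `n` edge-disjoint paths
with `2n` distinct ends in `∂p` (`exists_paths`), and counting shows that all of `∂p` is used.
-/

/-- Boundary of an `F₂`-chain of edges (a finite set of edges of a multigraph with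
boundary function `bnd`): the set of vertices incident to an odd number of edges
of the chain.  This is the `F₂`-linear extension of `bnd`. -/
def chainBnd {V E : Type} [Fintype V] [DecidableEq V] [DecidableEq E]
    (bnd : E → Finset V) (p : Finset E) : Finset V :=
  Finset.univ.filter fun v => Odd (p.filter (fun e => v ∈ bnd e)).card

/-- `IsPath bnd u v ws es` : the alternating sequence of vertices `ws` and
edges `es` forms a path between `u` and `v` in the multigraph with boundary
function `bnd`: there is one more vertex than edges, the ends of the vertex
list are `u` and `v` (in either order), each edge's boundary consists of the
two consecutive vertices it joins, and the edges are pairwise distinct. -/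
def IsPath {V E : Type} [DecidableEq V] (bnd : E → Finset V) (u v : V)
    (ws : List V) (es : List E) : Prop :=
  ws.length = es.length + 1 ∧
  ((ws.head? = some u ∧ ws.getLast? = some v) ∨
   (ws.head? = some v ∧ ws.getLast? = some u)) ∧
  (∀ (i : ℕ) (e : E), es[i]? = some e → bnd e = {ws.getD i u, ws.getD (i + 1) u}) ∧
  es.Nodup

/-- `Trail bnd w u ws es`: the vertices `ws` and edges `es` form a walk from `u` to `w`
(the fixed end `w` comes first, as a parameter).
Distinctness of the edges is not part of the definition. -/
inductive Trail {V E : Type} [DecidableEq V] (bnd : E → Finset V) (w : V) :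
    V → List V → List E → Prop
  | nil : Trail bnd w w [w] []
  | cons {u x : V} {ws : List V} {es : List E} (e : E) (he : bnd e = {u, x})
      (h : Trail bnd w x ws es) : Trail bnd w u (u :: ws) (e :: es)

theorem Trail.spec {V E : Type} [DecidableEq V] {bnd : E → Finset V} {w u : V}
    {ws : List V} {es : List E} (h : Trail bnd w u ws es) :
    ws.length = es.length + 1 ∧ ws.head? = some u ∧ ws.getLast? = some w ∧
    ∀ (d : V) (i : ℕ) (e : E), es[i]? = some e →
      bnd e = {ws.getD i d, ws.getD (i + 1) d} := by
  induction h with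
  | nil => simp
  | @cons u x ws es e he h ih =>
    obtain ⟨h1, h2, h3, h4⟩ := ih
    cases ws with
    | nil => simp at h1
    | cons y ws =>
      simp only [List.head?_cons, Option.some.injEq] at h2
      subst h2
      refine ⟨by simpa using h1, rfl, by simpa using h3, ?_⟩
      intro d i e' hi
      cases i with
      | zero =>
        simp only [List.getElem?_cons_zero, Option.some.injEq] at hi
        subst hi
        simpa using he
      | succ i =>
        simp only [List.getElem?_cons_succ] at hi
        simpa using h4 d i e' hi

theorem Trail.isPath {V E : Type} [DecidableEq V] {bnd : E → Finset V} {w u : V}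
    {ws : List V} {es : List E} (h : Trail bnd w u ws es) (hes : es.Nodup) :
    IsPath bnd u w ws es :=
  ⟨h.spec.1, Or.inl ⟨h.spec.2.1, h.spec.2.2.1⟩, h.spec.2.2.2 u, hes⟩

/-- Removing an edge from a chain flips the parity exactly at the two ends of that edge. -/
theorem mem_chainBnd_erase {V E : Type} [Fintype V] [DecidableEq V] [DecidableEq E]
    (bnd : E → Finset V) {p : Finset E} {e : E} (he : e ∈ p) (x : V) :
    x ∈ chainBnd bnd (p.erase e) ↔ ¬ (x ∈ chainBnd bnd p ↔ x ∈ bnd e) := by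
  simp only [chainBnd, Finset.mem_filter, Finset.mem_univ, true_and, Finset.filter_erase]
  by_cases hx : x ∈ bnd e
  · have hm : e ∈ p.filter (fun e => x ∈ bnd e) := by simp [he, hx]
    rw [← Finset.card_erase_add_one hm, Nat.odd_add_one]
    simp [hx]
  · rw [Finset.erase_eq_of_notMem (by simp [hx])]
    simp [hx]

/-- From every odd vertex `u` of a chain there is a trail inside the chain to another odd vertex
`w`, whose removal deletes precisely `u` and `w` from the boundary. -/
theorem exists_trail {V E : Type} [Fintype V] [DecidableEq V] [DecidableEq E]
    (bnd : E → Finset V) (hbnd : ∀ e, (bnd e).card = 2) (k : ℕ) :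
    ∀ (p : Finset E), p.card = k → ∀ u ∈ chainBnd bnd p,
      ∃ w ∈ chainBnd bnd p, w ≠ u ∧ ∃ ws es, Trail bnd w u ws es ∧ es.Nodup ∧
        (∀ e ∈ es, e ∈ p) ∧
        chainBnd bnd (p \ es.toFinset) = chainBnd bnd p \ {u, w} := by
  induction k with
  | zero =>
    intro p hp u hu
    rw [Finset.card_eq_zero] at hp
    subst hp
    simp [chainBnd] at hu
  | succ k ih =>
    intro p hp u hu
    obtain ⟨e, hep, x, hxu, hex⟩ : ∃ e ∈ p, ∃ x, x ≠ u ∧ bnd e = {u, x} := by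
      have h1 : 0 < (p.filter (fun e => u ∈ bnd e)).card := by
        simp only [chainBnd, Finset.mem_filter, Finset.mem_univ, true_and] at hu
        exact hu.pos
      obtain ⟨e, he⟩ := Finset.card_pos.mp h1
      rw [Finset.mem_filter] at he
      obtain ⟨a, b, hab, h⟩ := Finset.card_eq_two.mp (hbnd e)
      have hu' := he.2
      rw [h] at hu'
      simp only [Finset.mem_insert, Finset.mem_singleton] at hu'
      rcases hu' with rfl | rfl
      · exact ⟨e, he.1, b, hab.symm, h⟩
      · exact ⟨e, he.1, a, hab, by rw [h, Finset.pair_comm]⟩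
    have hB : ∀ y, y ∈ chainBnd bnd (p.erase e) ↔
        ¬ (y ∈ chainBnd bnd p ↔ (y = u ∨ y = x)) := by
      intro y
      rw [mem_chainBnd_erase bnd hep, hex]
      simp
    by_cases hx : x ∈ chainBnd bnd p
    · refine ⟨x, hx, hxu, [u, x], [e], .cons e hex .nil, by simp, by simpa using hep, ?_⟩
      ext y
      have hs : p \ [e].toFinset = p.erase e := by
        ext; simp [and_comm]
      rw [hs, hB]
      simp only [Finset.mem_sdiff, Finset.mem_insert, Finset.mem_singleton]
      grind
    · obtain ⟨w, hw, hwx, ws, es, ht, hnd, hsub, hb⟩ :=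
        ih (p.erase e) (by rw [Finset.card_erase_of_mem hep, hp]; rfl) x
          (by rw [hB]; simp [hx])
      have hwp : w ∈ chainBnd bnd p ∧ w ≠ u := by
        rw [hB] at hw
        grind
      refine ⟨w, hwp.1, hwp.2, u :: ws, e :: es, .cons e hex ht, ?_, ?_, ?_⟩
      · refine List.nodup_cons.mpr ⟨fun h => ?_, hnd⟩
        simpa using hsub e h
      · intro e' he'
        rcases List.mem_cons.mp he' with rfl | h
        · exact hep
        · exact Finset.mem_of_mem_erase (hsub e' h)
      · have hs : p \ (e :: es).toFinset = p.erase e \ es.toFinset := by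
          ext; simp; tauto
        rw [hs, hb]
        ext y
        rw [Finset.mem_sdiff, hB]
        simp only [Finset.mem_sdiff, Finset.mem_insert, Finset.mem_singleton]
        grind

/-- A chain with `2n` odd vertices contains `n` edge-disjoint paths whose `2n` ends are distinct
odd vertices. -/
theorem exists_paths {V E : Type} [Fintype V] [DecidableEq V] [DecidableEq E]
    (bnd : E → Finset V) (hbnd : ∀ e, (bnd e).card = 2) (n : ℕ) :
    ∀ (p : Finset E), (chainBnd bnd p).card = 2 * n →
      ∃ (s : Fin n × Bool → V) (ws : Fin n → List V) (es : Fin n → List E),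
        Function.Injective s ∧ (∀ x, s x ∈ chainBnd bnd p) ∧
        (∀ i, IsPath bnd (s (i, true)) (s (i, false)) (ws i) (es i)) ∧
        (∀ i, ∀ e ∈ es i, e ∈ p) ∧
        (∀ i j, i ≠ j → ∀ e ∈ es i, e ∉ es j) := by
  induction n with
  | zero =>
    intro p _
    exact ⟨fun x => x.1.elim0, fun i => i.elim0, fun i => i.elim0, fun x => x.1.elim0,
      fun x => x.1.elim0, fun i => i.elim0, fun i => i.elim0, fun i => i.elim0⟩
  | succ n ih =>
    intro p hp
    obtain ⟨u, hu⟩ : (chainBnd bnd p).Nonempty := Finset.card_pos.mp (by omega)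
    obtain ⟨w, hw, hwu, ws₀, es₀, ht, hnd, hsub, hb⟩ := exists_trail bnd hbnd _ p rfl u hu
    obtain ⟨s, ws, es, hs, hmem, hpath, hp', hdis⟩ := ih (p \ es₀.toFinset) (by
      rw [hb, Finset.card_sdiff_of_subset (by simp [Finset.insert_subset_iff, hu, hw]),
        Finset.card_pair hwu.symm, hp]
      omega)
    simp only [hb, Finset.mem_sdiff, Finset.mem_insert, Finset.mem_singleton, not_or] at hmem
    simp only [Finset.mem_sdiff, List.mem_toFinset] at hp'
    refine ⟨fun x => Fin.cases (if x.2 then u else w) (fun i => s (i, x.2)) x.1,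
      Fin.cons ws₀ ws, Fin.cons es₀ es, ?_, ?_, ?_, ?_, ?_⟩
    · rintro ⟨i, c⟩ ⟨j, d⟩ h
      induction i using Fin.cases with
      | zero =>
        induction j using Fin.cases with
        | zero => cases c <;> cases d <;> simp_all
        | succ j =>
          have := hmem (j, d)
          cases c <;> simp_all
      | succ i =>
        induction j using Fin.cases with
        | zero =>
          have := hmem (i, c)
          cases d <;> simp_all
        | succ j =>
          have := hs h
          simp_all
    · rintro ⟨i, c⟩
      induction i using Fin.cases with
      | zero => cases c <;> simp [hu, hw]
      | succ i => exact (hmem (i, c)).1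
    · intro i
      induction i using Fin.cases with
      | zero => simpa using ht.isPath hnd
      | succ i => simpa using hpath i
    · intro i
      induction i using Fin.cases with
      | zero => simpa using hsub
      | succ i => intro e he; exact (hp' i e (by simpa using he)).1
    · intro i j hij e hi hj
      induction i using Fin.cases with
      | zero =>
        induction j using Fin.cases with
        | zero => exact hij rfl
        | succ j => exact (hp' j e (by simpa using hj)).2 (by simpa using hi)
      | succ i =>
        induction j using Fin.cases with
        | zero => exact (hp' i e (by simpa using hi)).2 (by simpa using hj)
        | succ j =>
          exact hdis i j (fun h => hij (by rw [h])) e (by simpa using hi) (by simpa using hj)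

theorem stmt0 {V E : Type} [Fintype V] [Fintype E] [DecidableEq V] [DecidableEq E]
    (bnd : E → Finset V) (hbnd : ∀ e, (bnd e).card = 2)
    (n : ℕ) (hn : 1 ≤ n) (v : Fin (2 * n) → V) (hv : Function.Injective v)
    (p : Finset E) (hp : chainBnd bnd p = Finset.univ.image v) :
    ∃ (a b : Fin n → Fin (2 * n)) (ws : Fin n → List V) (es : Fin n → List E),
      Function.Bijective (fun x : Fin n × Bool => if x.2 then a x.1 else b x.1) ∧
      (∀ i, IsPath bnd (v (a i)) (v (b i)) (ws i) (es i)) ∧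
      (∀ i, ∀ e ∈ es i, e ∈ p) ∧
      (∀ i j, i ≠ j → ∀ e ∈ es i, e ∉ es j) := by
  obtain ⟨s, ws, es, hs, hmem, hpath, hsub, hdis⟩ := exists_paths bnd hbnd n p (by
    rw [hp, Finset.card_image_of_injective _ hv, Finset.card_univ, Fintype.card_fin])
  have hex : ∀ x, ∃ k, v k = s x := fun x => by simpa [hp] using hmem x
  choose f hf using hex
  have hf_inj : Function.Injective f := fun x y h => hs (by rw [← hf, ← hf, h])
  refine ⟨fun i => f (i, true), fun i => f (i, false), ws, es, ?_, ?_, hsub, hdis⟩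
  · have hfe : (fun x : Fin n × Bool => if x.2 then f (x.1, true) else f (x.1, false)) = f := by
      funext ⟨i, c⟩
      cases c <;> rfl
    rw [hfe, Fintype.bijective_iff_injective_and_card]
    exact ⟨hf_inj, by simp [mul_comm]⟩
  · intro i
    simpa only [hf] using hpath i
end

section
/- Let k be a positive integer and let G be a finite multigraph whose vertex set is exactly {v₁,v₂,v₃,v₄} (four pairwise distinct vertices) and in which each of the vertices v₁,v₂,v₃,v₄ has degree at least k. Then there exist k chains of edges p₁,…,p_k in G, no two of which have any common nontrivial summands, satisfying ∂(p₁) = ⋯ = ∂(p_k) = v₁ + v₂ + v₃ + v₄. -/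
/-- Degree of a vertex in a multigraph with boundary function `bnd`. -/
def vdeg {V E : Type} [Fintype E] [DecidableEq V] (bnd : E → Finset V) (v : V) : ℕ :=
  (Finset.univ.filter fun e => v ∈ bnd e).card

/-- Degree of `v` in the subgraph with edge set `S`. -/
def degIn {V E : Type} [DecidableEq V] (bnd : E → Finset V) (S : Finset E) (v : V) : ℕ :=
  (S.filter fun e => v ∈ bnd e).card

/-- `S` contains a chain with odd degree at every vertex whose deletion leaves all degrees at
least `k`. -/
def Step {V E : Type} [DecidableEq V] [DecidableEq E] (bnd : E → Finset V) (S : Finset E)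
    (k : ℕ) : Prop :=
  ∃ T ⊆ S, (∀ v, Odd (degIn bnd T v)) ∧ ∀ v, k ≤ degIn bnd (S \ T) v

section

set_option linter.unusedSectionVars false
set_option linter.unusedSimpArgs false

variable {V E : Type} [DecidableEq V] [DecidableEq E] {bnd : E → Finset V} {S : Finset E} {k : ℕ}

lemma degIn_sdiff {T : Finset E} (hT : T ⊆ S) (v : V) :
    degIn bnd (S \ T) v + degIn bnd T v = degIn bnd S v := by
  unfold degIn
  rw [← Finset.card_union_of_disjoint, ← Finset.filter_union, Finset.sdiff_union_of_subset hT]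
  exact Finset.disjoint_filter_filter Finset.sdiff_disjoint

lemma exists_of_degIn_pos {v : V} (h : 0 < degIn bnd S v) : ∃ e ∈ S, v ∈ bnd e := by
  obtain ⟨e, he⟩ := Finset.card_pos.1 h
  exact ⟨e, (Finset.mem_filter.1 he).1, (Finset.mem_filter.1 he).2⟩

lemma bnd_cases {a b c d : V} (hcov : ∀ v, v = a ∨ v = b ∨ v = c ∨ v = d)
    (hbnd : ∀ e, (bnd e).card = 2) (e : E) :
    bnd e = {a, b} ∨ bnd e = {a, c} ∨ bnd e = {a, d} ∨
      bnd e = {b, c} ∨ bnd e = {b, d} ∨ bnd e = {c, d} := by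
  obtain ⟨x, y, hxy, h⟩ := Finset.card_eq_two.1 (hbnd e)
  rw [h]
  rcases hcov x with rfl | rfl | rfl | rfl <;> rcases hcov y with rfl | rfl | rfl | rfl <;>
    first
      | exact absurd rfl hxy
      | simp
      | (rw [Finset.pair_comm]; simp)

/-- Removing a perfect matching lowers every degree by one. -/
lemma step_of_matching {a b c d : V} (hcov : ∀ v, v = a ∨ v = b ∨ v = c ∨ v = d)
    (hac : a ≠ c) (had : a ≠ d) (hbc : b ≠ c) (hbd : b ≠ d)
    (hdeg : ∀ v, k + 1 ≤ degIn bnd S v)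
    (h1 : ∃ e ∈ S, bnd e = {a, b}) (h2 : ∃ e ∈ S, bnd e = {c, d}) : Step bnd S k := by
  obtain ⟨e, heS, he⟩ := h1
  obtain ⟨f, hfS, hf⟩ := h2
  have hT : ({e, f} : Finset E) ⊆ S := by
    intro x hx
    simp only [Finset.mem_insert, Finset.mem_singleton] at hx
    rcases hx with rfl | rfl <;> assumption
  have hone : ∀ v, degIn bnd ({e, f} : Finset E) v = 1 := by
    intro v
    unfold degIn
    rcases hcov v with rfl | rfl | rfl | rfl <;>
      simp [Finset.filter_insert, Finset.filter_singleton, he, hf, hac, had, hbc, hbd,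
        hac.symm, had.symm, hbc.symm, hbd.symm]
  refine ⟨{e, f}, hT, fun v => by rw [hone]; exact odd_one, fun v => ?_⟩
  have := degIn_sdiff (bnd := bnd) hT v
  have := hone v
  have := hdeg v
  omega

/-- If every edge of `S` contains `a`, then `a` has degree at least `3(k + 1)`, and one edge from
`a` to each other vertex can be removed. -/
lemma step_of_star {a b c d : V} (hcov : ∀ v, v = a ∨ v = b ∨ v = c ∨ v = d)
    (hab : a ≠ b) (hac : a ≠ c) (had : a ≠ d) (hbc : b ≠ c) (hbd : b ≠ d) (hcd : c ≠ d)
    (hdeg : ∀ v, k + 1 ≤ degIn bnd S v)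
    (hS : ∀ e ∈ S, bnd e = {a, b} ∨ bnd e = {a, c} ∨ bnd e = {a, d}) : Step bnd S k := by
  obtain ⟨e, heS, he'⟩ := exists_of_degIn_pos (lt_of_lt_of_le k.succ_pos (hdeg b))
  obtain ⟨f, hfS, hf'⟩ := exists_of_degIn_pos (lt_of_lt_of_le k.succ_pos (hdeg c))
  obtain ⟨g, hgS, hg'⟩ := exists_of_degIn_pos (lt_of_lt_of_le k.succ_pos (hdeg d))
  have he : bnd e = {a, b} := by
    rcases hS e heS with h | h | h <;> rw [h] at he' ⊢ <;>
      simp [hab.symm, hbc, hbd] at he'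
  have hf : bnd f = {a, c} := by
    rcases hS f hfS with h | h | h <;> rw [h] at hf' ⊢ <;>
      simp [hac.symm, hbc.symm, hcd] at hf'
  have hg : bnd g = {a, d} := by
    rcases hS g hgS with h | h | h <;> rw [h] at hg' ⊢ <;>
      simp [had.symm, hbd.symm, hcd.symm] at hg'
  have hef : e ≠ f := by
    rintro rfl
    rw [he] at hf'
    simp [hac.symm, hbc.symm] at hf'
  have heg : e ≠ g := by
    rintro rfl
    rw [he] at hg'
    simp [had.symm, hbd.symm] at hg'
  have hfg : f ≠ g := by
    rintro rfl
    rw [hf] at hg'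
    simp [had.symm, hcd.symm] at hg'
  have hT : ({e, f, g} : Finset E) ⊆ S := by
    intro x hx
    simp only [Finset.mem_insert, Finset.mem_singleton] at hx
    rcases hx with rfl | rfl | rfl <;> assumption
  have hTa : degIn bnd ({e, f, g} : Finset E) a = 3 := by
    simp [degIn, Finset.filter_insert, Finset.filter_singleton, he, hf, hg, hef, heg, hfg]
  have hTb : degIn bnd ({e, f, g} : Finset E) b = 1 := by
    simp [degIn, Finset.filter_insert, Finset.filter_singleton, he, hf, hg, hab.symm, hbc, hbd]
  have hTc : degIn bnd ({e, f, g} : Finset E) c = 1 := by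
    simp [degIn, Finset.filter_insert, Finset.filter_singleton, he, hf, hg, hac.symm,
      hbc.symm, hcd]
  have hTd : degIn bnd ({e, f, g} : Finset E) d = 1 := by
    simp [degIn, Finset.filter_insert, Finset.filter_singleton, he, hf, hg, had.symm,
      hbd.symm, hcd.symm]
  have hsum : degIn bnd S b + degIn bnd S c + degIn bnd S d ≤ degIn bnd S a := by
    unfold degIn
    rw [← Finset.card_union_of_disjoint, ← Finset.card_union_of_disjoint]
    · apply Finset.card_le_card
      intro x hx
      simp only [Finset.mem_union, Finset.mem_filter] at hx ⊢
      have hxS : x ∈ S := by tauto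
      refine ⟨hxS, ?_⟩
      rcases hS x hxS with h | h | h <;> simp [h]
    · rw [Finset.disjoint_left]
      intro x hx hx'
      simp only [Finset.mem_union, Finset.mem_filter] at hx hx'
      rcases hS x hx'.1 with h | h | h <;>
        simp [h, hab.symm, hac.symm, had.symm, hbc, hbd, hcd, hbc.symm, hbd.symm, hcd.symm]
          at hx hx'
    · rw [Finset.disjoint_left]
      intro x hx hx'
      simp only [Finset.mem_filter] at hx hx'
      rcases hS x hx'.1 with h | h | h <;>
        simp [h, hab.symm, hac.symm, had.symm, hbc, hbd, hcd, hbc.symm, hbd.symm, hcd.symm]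
          at hx hx'
  refine ⟨{e, f, g}, hT, fun v => ?_, fun v => ?_⟩
  · rcases hcov v with rfl | rfl | rfl | rfl
    · rw [hTa]; decide
    · rw [hTb]; decide
    · rw [hTc]; decide
    · rw [hTd]; decide
  · have h0 := degIn_sdiff (bnd := bnd) hT v
    have hb := hdeg b
    have hc := hdeg c
    have hd := hdeg d
    rcases hcov v with rfl | rfl | rfl | rfl <;> omega

lemma exists_step {a b c d : V} (hcov : ∀ v, v = a ∨ v = b ∨ v = c ∨ v = d)
    (hab : a ≠ b) (hac : a ≠ c) (had : a ≠ d) (hbc : b ≠ c) (hbd : b ≠ d) (hcd : c ≠ d)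
    (hbnd : ∀ e, (bnd e).card = 2) (hdeg : ∀ v, k + 1 ≤ degIn bnd S v) : Step bnd S k := by
  by_cases m1 : (∃ e ∈ S, bnd e = {a, b}) ∧ (∃ e ∈ S, bnd e = {c, d})
  · exact step_of_matching hcov hac had hbc hbd hdeg m1.1 m1.2
  by_cases m2 : (∃ e ∈ S, bnd e = {a, c}) ∧ (∃ e ∈ S, bnd e = {b, d})
  · exact step_of_matching (a := a) (b := c) (c := b) (d := d) (fun v => by have := hcov v; tauto)
      hab had hbc.symm hcd hdeg m2.1 m2.2
  by_cases m3 : (∃ e ∈ S, bnd e = {a, d}) ∧ (∃ e ∈ S, bnd e = {b, c})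
  · exact step_of_matching (a := a) (b := d) (c := b) (d := c) (fun v => by have := hcov v; tauto)
      hab hac hbd.symm hcd.symm hdeg m3.1 m3.2
  have hpos := fun v => exists_of_degIn_pos (lt_of_lt_of_le k.succ_pos (hdeg v))
  have hcase := bnd_cases hcov hbnd
  rw [not_and_or] at m1 m2 m3
  push Not at m1 m2 m3
  rcases m1 with m1 | m1 <;> rcases m2 with m2 | m2 <;> rcases m3 with m3 | m3
  -- In order, the missing pairs form: the star at `a`, the triangles `abc` and `abd`, the star
  -- at `b`, the triangle `acd`, the stars at `c` and `d`, the triangle `bcd`.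
  · obtain ⟨e, heS, he⟩ := hpos a
    exfalso
    have := m1 e heS
    have := m2 e heS
    have := m3 e heS
    rcases hcase e with h | h | h | h | h | h <;> first
      | contradiction
      | (rw [h] at he; simp [hab, hac, had, hbc, hbd, hcd, hab.symm, hac.symm, had.symm,
          hbc.symm, hbd.symm, hcd.symm] at he)
  · exact step_of_star (a := d) (b := a) (c := b) (d := c) (fun v => by have := hcov v; tauto)
      had.symm hbd.symm hcd.symm hab hac hbc hdeg fun e he => by
        have := m1 e he
        have := m2 e he
        have := m3 e he
        have := hcase e
        rw [Finset.pair_comm d a, Finset.pair_comm d b, Finset.pair_comm d c]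
        tauto
  · exact step_of_star (a := c) (b := a) (c := b) (d := d) (fun v => by have := hcov v; tauto)
      hac.symm hbc.symm hcd hab had hbd hdeg fun e he => by
        have := m1 e he
        have := m2 e he
        have := m3 e he
        have := hcase e
        rw [Finset.pair_comm c a, Finset.pair_comm c b]
        tauto
  · obtain ⟨e, heS, he⟩ := hpos b
    exfalso
    have := m1 e heS
    have := m2 e heS
    have := m3 e heS
    rcases hcase e with h | h | h | h | h | h <;> first
      | contradiction
      | (rw [h] at he; simp [hab, hac, had, hbc, hbd, hcd, hab.symm, hac.symm, had.symm,
          hbc.symm, hbd.symm, hcd.symm] at he)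
  · exact step_of_star (a := b) (b := a) (c := c) (d := d) (fun v => by have := hcov v; tauto)
      hab.symm hbc hbd hac had hcd hdeg fun e he => by
        have := m1 e he
        have := m2 e he
        have := m3 e he
        have := hcase e
        rw [Finset.pair_comm b a]
        tauto
  · obtain ⟨e, heS, he⟩ := hpos c
    exfalso
    have := m1 e heS
    have := m2 e heS
    have := m3 e heS
    rcases hcase e with h | h | h | h | h | h <;> first
      | contradiction
      | (rw [h] at he; simp [hab, hac, had, hbc, hbd, hcd, hab.symm, hac.symm, had.symm,
          hbc.symm, hbd.symm, hcd.symm] at he)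
  · obtain ⟨e, heS, he⟩ := hpos d
    exfalso
    have := m1 e heS
    have := m2 e heS
    have := m3 e heS
    rcases hcase e with h | h | h | h | h | h <;> first
      | contradiction
      | (rw [h] at he; simp [hab, hac, had, hbc, hbd, hcd, hab.symm, hac.symm, had.symm,
          hbc.symm, hbd.symm, hcd.symm] at he)
  · exact step_of_star hcov hab hac had hbc hbd hcd hdeg fun e he => by
      have := m1 e he
      have := m2 e he
      have := m3 e he
      have := hcase e
      tauto

lemma exists_packing {a b c d : V} (hcov : ∀ v, v = a ∨ v = b ∨ v = c ∨ v = d)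
    (hab : a ≠ b) (hac : a ≠ c) (had : a ≠ d) (hbc : b ≠ c) (hbd : b ≠ d) (hcd : c ≠ d)
    (hbnd : ∀ e, (bnd e).card = 2) (k : ℕ) (S : Finset E) (hdeg : ∀ v, k ≤ degIn bnd S v) :
    ∃ p : Fin k → Finset E, (∀ i, p i ⊆ S) ∧ (∀ i j, i ≠ j → Disjoint (p i) (p j)) ∧
      ∀ i v, Odd (degIn bnd (p i) v) := by
  induction k generalizing S with
  | zero => exact ⟨fun _ => ∅, fun i => i.elim0, fun i => i.elim0, fun i => i.elim0⟩
  | succ k ih =>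
    obtain ⟨T, hTS, hodd, hrest⟩ := exists_step hcov hab hac had hbc hbd hcd hbnd hdeg
    obtain ⟨p, hpS, hdisj, hp⟩ := ih (S \ T) hrest
    have hTp : ∀ i, Disjoint T (p i) := fun i =>
      Finset.disjoint_of_subset_right (hpS i) Finset.disjoint_sdiff
    refine ⟨Fin.cons T p, fun i => ?_, fun i j hij => ?_, fun i => ?_⟩
    · refine Fin.cases ?_ (fun i => ?_) i
      · simpa using hTS
      · simpa using (hpS i).trans Finset.sdiff_subset
    · induction i using Fin.cases with
      | zero =>
        induction j using Fin.cases with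
        | zero => exact absurd rfl hij
        | succ j => simpa using hTp j
      | succ i =>
        induction j using Fin.cases with
        | zero => simpa using (hTp i).symm
        | succ j => simpa using hdisj i j fun h => hij (by rw [h])
    · refine Fin.cases ?_ (fun i => ?_) i
      · simpa using hodd
      · simpa using hp i

end

theorem stmt3 {V E : Type} [Fintype V] [Fintype E] [DecidableEq V] [DecidableEq E]
    (bnd : E → Finset V) (hbnd : ∀ e, (bnd e).card = 2)
    (k : ℕ) (hk : 1 ≤ k)
    (v1 v2 v3 v4 : V) (hdist : ({v1, v2, v3, v4} : Finset V).card = 4)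
    (hV : (Finset.univ : Finset V) = {v1, v2, v3, v4})
    (hdeg : ∀ u ∈ ({v1, v2, v3, v4} : Finset V), k ≤ vdeg bnd u) :
    ∃ p : Fin k → Finset E,
      (∀ i j, i ≠ j → Disjoint (p i) (p j)) ∧
      ∀ i, chainBnd bnd (p i) = {v1, v2, v3, v4} := by
  have hcov : ∀ v, v = v1 ∨ v = v2 ∨ v = v3 ∨ v = v4 := fun v => by
    have h := Finset.mem_univ v
    rw [hV] at h
    simpa using h
  -- If two of the vertices coincided, the set would have at most three elements.
  have h3 : ∀ x y z : V, ({v1, v2, v3, v4} : Finset V) ≠ {x, y, z} := fun x y z h => by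
    have := Finset.card_le_three (a := x) (b := y) (c := z)
    rw [← h, hdist] at this
    omega
  have h12 : v1 ≠ v2 := by
    rintro rfl
    exact h3 v1 v3 v4 (by simp)
  have h13 : v1 ≠ v3 := by
    rintro rfl
    exact h3 v1 v2 v4 (by ext; simp; tauto)
  have h14 : v1 ≠ v4 := by
    rintro rfl
    exact h3 v1 v2 v3 (by ext; simp; tauto)
  have h23 : v2 ≠ v3 := by
    rintro rfl
    exact h3 v1 v2 v4 (by simp)
  have h24 : v2 ≠ v4 := by
    rintro rfl
    exact h3 v1 v2 v3 (by ext; simp; tauto)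
  have h34 : v3 ≠ v4 := by
    rintro rfl
    exact h3 v1 v2 v3 (by simp)
  obtain ⟨p, -, hdisj, hp⟩ := exists_packing hcov h12 h13 h14 h23 h24 h34 hbnd k Finset.univ
    fun v => hdeg v (hV ▸ Finset.mem_univ v)
  refine ⟨p, hdisj, fun i => ?_⟩
  rw [← hV]
  exact Finset.filter_true_of_mem fun v _ => hp i v
end

section
/- Let k be a positive integer and let G be a finite multigraph whose vertex set V is the disjoint union of a four-element set {v₁,v₂,v₃,v₄} and a (possibly empty) set Y, such that every edge of G has at least one boundary vertex in {v₁,v₂,v₃,v₄}. Suppose: (i) each of v₁,v₂,v₃,v₄ has degree at least k; (ii) every vertex of Y has even degree; (iii) for every y ∈ Y and every i ∈ {1,2,3,4}, the number of edges e with ∂(e) = {y, v_i} is at most the total number of edges a with ∂(a) = {y, w} for some vertex w ≠ v_i. Then there exist k chains of edges p₁,…,p_k in G, no two of which have any common nontrivial summands, satisfying ∂(p₁) = ⋯ = ∂(p_k) = v₁ + v₂ + v₃ + v₄. -/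
/-! ### Pairing elements of different colours -/

/-- A monotone colouring of `2m` positions whose colour classes have at most `m` elements gives
positions at distance `m` different colours. -/
lemma sorted_ne {α : Type} [LinearOrder α] {m : ℕ} (g : Fin (m + m) → α) (hg : Monotone g)
    (hc : ∀ a, (Finset.univ.filter fun i => g i = a).card ≤ m)
    (i j : Fin (m + m)) (hij : i.val + m = j.val) : g i ≠ g j := by
  intro h
  have hsub : Finset.Icc i j ⊆ Finset.univ.filter fun l => g l = g i := by
    intro l hl
    rw [Finset.mem_Icc] at hl
    simp only [Finset.mem_filter, Finset.mem_univ, true_and]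
    exact le_antisymm ((hg hl.2).trans h.ge) (hg hl.1)
  have h1 := (Finset.card_le_card hsub).trans (hc (g i))
  rw [Fin.card_Icc] at h1
  omega

/-- An even set in which no colour class exceeds half the size has a colour-changing
involution. -/
lemma exists_pairing {E α : Type} [DecidableEq E] [Fintype α] [DecidableEq α] (c : E → α)
    (S : Finset E) (m : ℕ) (hS : S.card = m + m)
    (hc : ∀ a, (S.filter fun e => c e = a).card ≤ m) :
    ∃ φ : E → E, ∀ e ∈ S, φ e ∈ S ∧ φ (φ e) = e ∧ c (φ e) ≠ c e := by
  classical
  let q : α ≃ Fin (Fintype.card α) := Fintype.equivFin α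
  let s₀ : Fin (m + m) ≃ S := (S.equivFinOfCardEq hS).symm
  let s : Fin (m + m) ≃ S := (Tuple.sort fun i => q (c (s₀ i))).trans s₀
  have hmono : Monotone fun i => q (c (s i)) := Tuple.monotone_sort fun i => q (c (s₀ i))
  have hcard : ∀ a, (Finset.univ.filter fun i => q (c (s i)) = a).card ≤ m := by
    intro a
    refine le_trans ?_ (hc (q.symm a))
    refine Finset.card_le_card_of_injOn (fun i => (s i : E)) ?_ ?_
    · intro i hi
      simp only [Finset.coe_filter, Finset.mem_univ, true_and, Set.mem_ofPred_eq] at hi ⊢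
      exact ⟨(s i).2, by rw [← hi]; simp⟩
    · intro i _ j _ hij
      exact s.injective (Subtype.ext hij)
  have hne := sorted_ne _ hmono hcard
  -- the rotation by `m` of the `2m` positions
  let r : Fin (m + m) → Fin (m + m) := fun i =>
    if h : i.val < m then ⟨i.val + m, by omega⟩ else ⟨i.val - m, by omega⟩
  have hrr : ∀ i, r (r i) = i := by
    intro i
    by_cases h : i.val < m
    · simp [r, h]
    · have h2 : i.val - m < m := by omega
      ext
      simp [r, h, h2]
      omega
  have hrne : ∀ i, c (s (r i)) ≠ c (s i) := by
    intro i h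
    by_cases hi : i.val < m
    · exact hne i (r i) (by simp [r, hi]) (by simp [h])
    · exact hne (r i) i (by simp [r, hi]; omega) (by simp [h])
  refine ⟨fun e => if h : e ∈ S then s (r (s.symm ⟨e, h⟩)) else e, fun e he => ?_⟩
  have h1 := hrne (s.symm ⟨e, he⟩)
  rw [Equiv.apply_symm_apply] at h1
  refine ⟨by simp [he], by simp [he, hrr], by simpa [he] using h1⟩

/-! ### Packing on four vertices -/

section Four

variable {ι V : Type} [DecidableEq V]

/-- Degree of `u` in the set `F` of edges, with boundary function `b`. -/
def degOn (b : ι → Finset V) (F : Finset ι) (u : V) : ℕ :=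
  (F.filter fun j => u ∈ b j).card

/-- Number of edges of `F` with boundary `{u, w}`. -/
def multOn (b : ι → Finset V) (F : Finset ι) (u w : V) : ℕ :=
  (F.filter fun j => b j = {u, w}).card

lemma multOn_comm (b : ι → Finset V) (F : Finset ι) (u w : V) :
    multOn b F u w = multOn b F w u := by
  simp only [multOn, Finset.pair_comm]

lemma exists_of_multOn_pos {b : ι → Finset V} {F : Finset ι} {u w : V}
    (h : multOn b F u w ≠ 0) : ∃ j ∈ F, b j = {u, w} := by
  obtain ⟨j, hj⟩ := Finset.card_pos.1 (Nat.pos_of_ne_zero h)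
  exact ⟨j, (Finset.mem_filter.1 hj).1, (Finset.mem_filter.1 hj).2⟩

lemma degOn_sdiff [DecidableEq ι] (b : ι → Finset V) {F p : Finset ι} (hp : p ⊆ F) (u : V) :
    degOn b (F \ p) u + degOn b p u = degOn b F u := by
  unfold degOn
  rw [← Finset.card_union_of_disjoint, ← Finset.filter_union, Finset.sdiff_union_of_subset hp]
  exact Finset.disjoint_filter_filter Finset.sdiff_disjoint

lemma degOn_eq [DecidableEq ι] (b : ι → Finset V) (F : Finset ι) {T : Finset V} {u x y z : V}
    (hux : u ≠ x) (huy : u ≠ y) (huz : u ≠ z) (hxy : x ≠ y) (hxz : x ≠ z) (hyz : y ≠ z)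
    (hT : T = {u, x, y, z}) (hb : ∀ j ∈ F, (b j).card = 2 ∧ b j ⊆ T) :
    degOn b F u = multOn b F u x + multOn b F u y + multOn b F u z := by
  have hne : ∀ {s t : V}, u ≠ s → u ≠ t → s ≠ t → ({u, s} : Finset V) ≠ {u, t} := by
    intro s t hs ht hst h
    have : s ∈ ({u, t} : Finset V) := h ▸ by simp
    simp only [Finset.mem_insert, Finset.mem_singleton] at this
    rcases this with h | h
    · exact hs h.symm
    · exact hst h
  unfold degOn multOn
  rw [← Finset.card_union_of_disjoint, ← Finset.card_union_of_disjoint]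
  · congr 1
    ext j
    simp only [Finset.mem_filter, Finset.mem_union]
    constructor
    · rintro ⟨hj, hu⟩
      obtain ⟨h2, hs⟩ := hb j hj
      obtain ⟨w, hw⟩ : ∃ w, b j = {u, w} ∧ u ≠ w := by
        obtain ⟨s, t, hst, h⟩ := Finset.card_eq_two.1 h2
        rw [h] at hu
        simp only [Finset.mem_insert, Finset.mem_singleton] at hu
        rcases hu with rfl | rfl
        · exact ⟨t, h, hst⟩
        · exact ⟨s, by rw [h, Finset.pair_comm], hst.symm⟩
      have hwT : w ∈ T := hs (by rw [hw.1]; simp)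
      rw [hT] at hwT
      simp only [Finset.mem_insert, Finset.mem_singleton] at hwT
      rcases hwT with h | h | h | h
      · exact absurd h.symm hw.2
      · subst h; exact Or.inl (Or.inl ⟨hj, hw.1⟩)
      · subst h; exact Or.inl (Or.inr ⟨hj, hw.1⟩)
      · subst h; exact Or.inr ⟨hj, hw.1⟩
    · rintro ((⟨hj, h⟩ | ⟨hj, h⟩) | ⟨hj, h⟩) <;> exact ⟨hj, by rw [h]; simp⟩
  · rw [Finset.disjoint_left]
    intro j h1 h2
    simp only [Finset.mem_filter, Finset.mem_union] at h1 h2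
    rcases h1 with h1 | h1
    · exact hne hux huz hxz (h1.2.symm.trans h2.2)
    · exact hne huy huz hyz (h1.2.symm.trans h2.2)
  · rw [Finset.disjoint_left]
    intro j h1 h2
    simp only [Finset.mem_filter] at h1 h2
    exact hne hux huy hxy (h1.2.symm.trans h2.2)

/-- Two disjoint edges form a `T`-join whose removal lowers each degree by one. -/
lemma matching_step [DecidableEq ι] (b : ι → Finset V) (F : Finset ι) {T : Finset V} {x y z w : V} {k : ℕ}
    (hxy : x ≠ y) (hxz : x ≠ z) (hxw : x ≠ w) (hyz : y ≠ z) (hyw : y ≠ w) (hzw : z ≠ w)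
    (hT : T = {x, y, z, w}) (hk : ∀ u ∈ T, k + 1 ≤ degOn b F u)
    (h1 : multOn b F x y ≠ 0) (h2 : multOn b F z w ≠ 0) :
    ∃ p ⊆ F, (∀ u ∈ T, Odd (degOn b p u)) ∧ ∀ u ∈ T, k ≤ degOn b (F \ p) u := by
  obtain ⟨i, hi, hbi⟩ := exists_of_multOn_pos h1
  obtain ⟨j, hj, hbj⟩ := exists_of_multOn_pos h2
  have hp : {i, j} ⊆ F := by
    intro l hl
    simp only [Finset.mem_insert, Finset.mem_singleton] at hl
    rcases hl with rfl | rfl <;> assumption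
  have hd : ∀ u ∈ T, degOn b {i, j} u = 1 := by
    intro u hu
    rw [hT] at hu
    simp only [Finset.mem_insert, Finset.mem_singleton] at hu
    unfold degOn
    rcases hu with rfl | rfl | rfl | rfl <;>
      simp [Finset.filter_insert, Finset.filter_singleton, *] <;> grind
  refine ⟨{i, j}, hp, fun u hu => by rw [hd u hu]; exact odd_one, fun u hu => ?_⟩
  have := degOn_sdiff b hp u
  have := hd u hu
  have := hk u hu
  omega

/-- The three edges of a star with centre `x` form a `T`-join whose removal lowers the degree of
`x` by three and the other degrees by one. -/
lemma star_step [DecidableEq ι] (b : ι → Finset V) (F : Finset ι) {T : Finset V} {x y z w : V} {k : ℕ}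
    (hxy : x ≠ y) (hxz : x ≠ z) (hxw : x ≠ w) (hyz : y ≠ z) (hyw : y ≠ w) (hzw : z ≠ w)
    (hT : T = {x, y, z, w}) (hk : ∀ u ∈ T, k + 1 ≤ degOn b F u) (hx : k + 3 ≤ degOn b F x)
    (h1 : multOn b F x y ≠ 0) (h2 : multOn b F x z ≠ 0) (h3 : multOn b F x w ≠ 0) :
    ∃ p ⊆ F, (∀ u ∈ T, Odd (degOn b p u)) ∧ ∀ u ∈ T, k ≤ degOn b (F \ p) u := by
  obtain ⟨i, hi, hbi⟩ := exists_of_multOn_pos h1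
  obtain ⟨j, hj, hbj⟩ := exists_of_multOn_pos h2
  obtain ⟨l, hl, hbl⟩ := exists_of_multOn_pos h3
  have hp : {i, j, l} ⊆ F := by
    intro l hl
    simp only [Finset.mem_insert, Finset.mem_singleton] at hl
    rcases hl with rfl | rfl | rfl <;> assumption
  have hyi : y ∈ b i := by simp [hbi]
  have hyj : y ∉ b j := by simp [hbj, hxy.symm, hyz]
  have hyl : y ∉ b l := by simp [hbl, hxy.symm, hyw]
  have hzi : z ∉ b i := by simp [hbi, hxz.symm, hyz.symm]
  have hzj : z ∈ b j := by simp [hbj]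
  have hzl : z ∉ b l := by simp [hbl, hxz.symm, hzw]
  have hwi : w ∉ b i := by simp [hbi, hxw.symm, hyw.symm]
  have hwj : w ∉ b j := by simp [hbj, hxw.symm, hzw.symm]
  have hwl : w ∈ b l := by simp [hbl]
  have hij : i ≠ j := by rintro rfl; exact hyj hyi
  have hil : i ≠ l := by rintro rfl; exact hyl hyi
  have hjl : j ≠ l := by rintro rfl; exact hzl hzj
  have hdx : degOn b {i, j, l} x = 3 := by
    simp [degOn, Finset.filter_insert, Finset.filter_singleton, hbi, hbj, hbl, hij, hil, hjl]
  have hdy : degOn b {i, j, l} y = 1 := by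
    simp [degOn, Finset.filter_insert, Finset.filter_singleton, hyi, hyj, hyl]
  have hdz : degOn b {i, j, l} z = 1 := by
    simp [degOn, Finset.filter_insert, Finset.filter_singleton, hzi, hzj, hzl]
  have hdw : degOn b {i, j, l} w = 1 := by
    simp [degOn, Finset.filter_insert, Finset.filter_singleton, hwi, hwj, hwl]
  refine ⟨{i, j, l}, hp, fun u hu => ?_, fun u hu => ?_⟩
  · rw [hT] at hu
    simp only [Finset.mem_insert, Finset.mem_singleton] at hu
    rcases hu with rfl | rfl | rfl | rfl
    · rw [hdx]; decide
    · rw [hdy]; decide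
    · rw [hdz]; decide
    · rw [hdw]; decide
  · have h4 := degOn_sdiff b hp u
    have h5 := hk u hu
    rw [hT] at hu
    simp only [Finset.mem_insert, Finset.mem_singleton] at hu
    rcases hu with rfl | rfl | rfl | rfl <;> omega

lemma four_vertex_step [DecidableEq ι] (b : ι → Finset V) (F : Finset ι) {T : Finset V} {x y z w : V} {k : ℕ}
    (hxy : x ≠ y) (hxz : x ≠ z) (hxw : x ≠ w) (hyz : y ≠ z) (hyw : y ≠ w) (hzw : z ≠ w)
    (hT : T = {x, y, z, w}) (hb : ∀ j ∈ F, (b j).card = 2 ∧ b j ⊆ T)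
    (hk : ∀ u ∈ T, k + 1 ≤ degOn b F u) :
    ∃ p ⊆ F, (∀ u ∈ T, Odd (degOn b p u)) ∧ ∀ u ∈ T, k ≤ degOn b (F \ p) u := by
  have hTy : T = {y, x, z, w} := by rw [hT]; grind
  have hTz : T = {z, x, y, w} := by rw [hT]; grind
  have hTw : T = {w, x, y, z} := by rw [hT]; grind
  have hTxz : T = {x, z, y, w} := by rw [hT]; grind
  have hTxw : T = {x, w, y, z} := by rw [hT]; grind
  have dx := degOn_eq b F hxy hxz hxw hyz hyw hzw hT hb
  have dy := degOn_eq b F hxy.symm hyz hyw hxz hxw hzw hTy hb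
  have dz := degOn_eq b F hxz.symm hyz.symm hzw hxy hxw hyw hTz hb
  have dw := degOn_eq b F hxw.symm hyw.symm hzw.symm hxy hxz hyz hTw hb
  have kx := hk x (by simp [hT])
  have ky := hk y (by simp [hT])
  have kz := hk z (by simp [hT])
  have kw := hk w (by simp [hT])
  have c1 := multOn_comm b F x y
  have c2 := multOn_comm b F x z
  have c3 := multOn_comm b F x w
  have c4 := multOn_comm b F y z
  have c5 := multOn_comm b F y w
  have c6 := multOn_comm b F z w
  by_cases m1 : multOn b F x y ≠ 0 ∧ multOn b F z w ≠ 0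
  · exact matching_step b F hxy hxz hxw hyz hyw hzw hT hk m1.1 m1.2
  by_cases m2 : multOn b F x z ≠ 0 ∧ multOn b F y w ≠ 0
  · exact matching_step b F hxz hxy hxw hyz.symm hzw hyw hTxz hk m2.1 m2.2
  by_cases m3 : multOn b F x w ≠ 0 ∧ multOn b F y z ≠ 0
  · exact matching_step b F hxw hxy hxz hyw.symm hzw.symm hyz hTxw hk m3.1 m3.2
  -- no two edges are disjoint, and no vertex is isolated, so the edges form a star
  have hstar : (multOn b F y z = 0 ∧ multOn b F y w = 0 ∧ multOn b F z w = 0) ∨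
      (multOn b F x z = 0 ∧ multOn b F x w = 0 ∧ multOn b F z w = 0) ∨
      (multOn b F x y = 0 ∧ multOn b F x w = 0 ∧ multOn b F y w = 0) ∨
      (multOn b F x y = 0 ∧ multOn b F x z = 0 ∧ multOn b F y z = 0) := by
    omega
  rcases hstar with h | h | h | h
  · exact star_step b F hxy hxz hxw hyz hyw hzw hT hk (by omega) (by omega) (by omega) (by omega)
  · exact star_step b F hxy.symm hyz hyw hxz hxw hzw hTy hk
      (by omega) (by omega) (by omega) (by omega)
  · exact star_step b F hxz.symm hyz.symm hzw hxy hxw hyw hTz hk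
      (by omega) (by omega) (by omega) (by omega)
  · exact star_step b F hxw.symm hyw.symm hzw.symm hxy hxz hyz hTw hk
      (by omega) (by omega) (by omega) (by omega)

/-- A multigraph on four vertices with all degrees at least `k` contains `k` disjoint `T`-joins,
where `T` is the set of all four vertices. -/
lemma four_vertex_packing [DecidableEq ι] (b : ι → Finset V) {T : Finset V} {x y z w : V}
    (hxy : x ≠ y) (hxz : x ≠ z) (hxw : x ≠ w) (hyz : y ≠ z) (hyw : y ≠ w) (hzw : z ≠ w)
    (hT : T = {x, y, z, w}) (k : ℕ) (F : Finset ι)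
    (hb : ∀ j ∈ F, (b j).card = 2 ∧ b j ⊆ T) (hk : ∀ u ∈ T, k ≤ degOn b F u) :
    ∃ p : Fin k → Finset ι, (∀ i, p i ⊆ F) ∧ (∀ i j, i ≠ j → Disjoint (p i) (p j)) ∧
      ∀ i, ∀ u ∈ T, Odd (degOn b (p i) u) := by
  induction k generalizing F with
  | zero => exact ⟨fun _ => ∅, fun i => i.elim0, fun i => i.elim0, fun i => i.elim0⟩
  | succ k ih =>
    obtain ⟨p₀, hp₀, hodd, hrest⟩ := four_vertex_step b F hxy hxz hxw hyz hyw hzw hT hb hk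
    obtain ⟨p, hp, hdisj, hpo⟩ := ih (F \ p₀) (fun j hj => hb j (Finset.mem_sdiff.1 hj).1) hrest
    have h0 : ∀ i, Disjoint p₀ (p i) := fun i => Finset.disjoint_sdiff.mono_right (hp i)
    refine ⟨Fin.cons p₀ p, ?_, ?_, ?_⟩
    · intro i
      refine Fin.cases ?_ (fun i => ?_) i
      · simpa using hp₀
      · simpa using (hp i).trans Finset.sdiff_subset
    · intro i j
      refine Fin.cases ?_ (fun i => ?_) i <;> refine Fin.cases ?_ (fun j => ?_) j
      · intro h; exact absurd rfl h
      · intro _; simpa using h0 j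
      · intro _; simpa using (h0 i).symm
      · intro h; simpa using hdisj i j (fun h' => h (by rw [h']))
    · intro i
      refine Fin.cases ?_ (fun i => ?_) i
      · simpa using hodd
      · simpa using hpo i

end Four

/-! ### Splitting off the remaining vertices -/

section Split

variable {V E : Type} [Fintype V] [DecidableEq V] [DecidableEq E]

/-- The boundary is additive: for disjoint chains `s ∈ Q`, the multiplicity of `v` in the boundary
of their union has the parity of the number of `s` having `v` in their boundary. -/
lemma odd_biUnion (bnd : E → Finset V) (Q : Finset (Finset E))
    (hQ : ∀ s ∈ Q, ∀ t ∈ Q, s ≠ t → Disjoint s t) (v : V) :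
    v ∈ chainBnd bnd (Q.biUnion id) ↔ Odd (degOn (chainBnd bnd) Q v) := by
  have h : ((Q.biUnion id).filter fun e => v ∈ bnd e).card =
      ∑ s ∈ Q, (s.filter fun e => v ∈ bnd e).card := by
    rw [Finset.filter_biUnion, Finset.card_biUnion]
    · rfl
    · intro s hs t ht hst
      exact Finset.disjoint_filter_filter (hQ s hs t ht hst)
  simp only [chainBnd, degOn, Finset.mem_filter, Finset.mem_univ, true_and]
  rw [h, Finset.odd_sum_iff_odd_card_odd]

lemma chainBnd_singleton (bnd : E → Finset V) (e : E) : chainBnd bnd {e} = bnd e := by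
  ext v
  by_cases h : v ∈ bnd e <;> simp [chainBnd, Finset.filter_singleton, h]

lemma mem_chainBnd_pair (bnd : E → Finset V) {e f : E} (hef : e ≠ f) (v : V) :
    v ∈ chainBnd bnd {e, f} ↔ ¬ (v ∈ bnd e ↔ v ∈ bnd f) := by
  by_cases h : v ∈ bnd e <;> by_cases h' : v ∈ bnd f <;>
    simp [chainBnd, Finset.filter_insert, Finset.filter_singleton, h, h', hef]

/-- There is an involution of the edges that fixes the edges inside `T` and
exchanges every edge leaving `T` with a non-parallel edge having the same endpoint outside `T`. -/
lemma exists_mate [Fintype E] (bnd : E → Finset V) (hbnd : ∀ e, (bnd e).card = 2)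
    (T : Finset V) (htouch : ∀ e : E, ∃ u ∈ T, u ∈ bnd e)
    (heven : ∀ y : V, y ∉ T → Even (vdeg bnd y))
    (hbal : ∀ y : V, y ∉ T → ∀ u ∈ T,
        (Finset.univ.filter fun e : E => bnd e = {y, u}).card ≤
        (Finset.univ.filter fun e : E => ∃ w : V, w ≠ u ∧ bnd e = {y, w}).card) :
    ∃ φ : E → E, (∀ e, φ (φ e) = e) ∧ ∀ e, (bnd e ⊆ T ∧ φ e = e) ∨
      ∃ y ∉ T, ∃ u ∈ T, ∃ w ∈ T, u ≠ w ∧ bnd e = {y, u} ∧ bnd (φ e) = {y, w} := by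
  have hform : ∀ y, y ∉ T → ∀ e, y ∈ bnd e → ∃ u ∈ T, bnd e = {y, u} := by
    intro y hy e hye
    obtain ⟨u, hu, hue⟩ := htouch e
    have hyu : y ≠ u := by rintro rfl; exact hy hu
    refine ⟨u, hu, (Finset.eq_of_subset_of_card_le ?_ ?_).symm⟩
    · intro t ht
      simp only [Finset.mem_insert, Finset.mem_singleton] at ht
      rcases ht with rfl | rfl <;> assumption
    · rw [hbnd, Finset.card_pair hyu]
  have hpair : ∀ y, y ∉ T → ∃ φ : E → E, ∀ e, y ∈ bnd e →
      y ∈ bnd (φ e) ∧ φ (φ e) = e ∧ bnd (φ e) ≠ bnd e := by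
    intro y hy
    obtain ⟨m, hm⟩ := heven y hy
    obtain ⟨φ, hφ⟩ := exists_pairing bnd (Finset.univ.filter fun e => y ∈ bnd e) m hm (by
      intro a
      by_cases ha : ∃ u ∈ T, a = {y, u}
      · obtain ⟨u, hu, rfl⟩ := ha
        have h1 := hbal y hy u hu
        have h2 : (Finset.univ.filter fun e : E => bnd e = {y, u}).card +
            (Finset.univ.filter fun e : E => ∃ w : V, w ≠ u ∧ bnd e = {y, w}).card
            ≤ vdeg bnd y := by
          rw [← Finset.card_union_of_disjoint]
          · refine Finset.card_le_card ?_
            intro e he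
            simp only [Finset.mem_union, Finset.mem_filter, Finset.mem_univ, true_and] at he ⊢
            rcases he with h | ⟨w, _, h⟩ <;> simp [h]
          · rw [Finset.disjoint_left]
            intro e he he'
            simp only [Finset.mem_filter, Finset.mem_univ, true_and] at he he'
            obtain ⟨w, hw, h⟩ := he'
            have : u ∈ ({y, w} : Finset V) := by rw [← h, he]; simp
            simp only [Finset.mem_insert, Finset.mem_singleton] at this
            rcases this with rfl | rfl
            · exact hy hu
            · exact hw rfl
        have h3 : ((Finset.univ.filter fun e => y ∈ bnd e).filter fun e => bnd e = {y, u}).card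
            ≤ (Finset.univ.filter fun e : E => bnd e = {y, u}).card :=
          Finset.card_le_card (Finset.filter_subset_filter _ (Finset.filter_subset _ _))
        omega
      · rw [Finset.card_eq_zero.2]
        · exact Nat.zero_le _
        · rw [Finset.filter_eq_empty_iff]
          intro e he h
          obtain ⟨u, hu, hu'⟩ := hform y hy e (by simpa using he)
          exact ha ⟨u, hu, h ▸ hu'⟩)
    exact ⟨φ, fun e he => by simpa using hφ e (by simpa using he)⟩
  have : Nonempty (E → E) := ⟨id⟩
  choose! ψ hψ using hpair
  have huniq : ∀ e y y', y ∉ T → y ∈ bnd e → y' ∉ T → y' ∈ bnd e → y = y' := by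
    intro e y y' hy hye hy' hye'
    obtain ⟨u, hu, h⟩ := hform y hy e hye
    rw [h] at hye'
    simp only [Finset.mem_insert, Finset.mem_singleton] at hye'
    rcases hye' with h | h
    · exact h.symm
    · exact absurd (h ▸ hu) hy'
  classical
  let φ : E → E := fun e => if h : ∃ y, y ∉ T ∧ y ∈ bnd e then ψ h.choose e else e
  have hφ : ∀ y e, y ∉ T → y ∈ bnd e → φ e = ψ y e := by
    intro y e hy hye
    have h : ∃ y, y ∉ T ∧ y ∈ bnd e := ⟨y, hy, hye⟩
    have h' := huniq e _ y h.choose_spec.1 h.choose_spec.2 hy hye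
    simp only [φ, dif_pos h]
    rw [h']
  have hφ' : ∀ e, bnd e ⊆ T → φ e = e := by
    intro e he
    have h : ¬ ∃ y, y ∉ T ∧ y ∈ bnd e := by
      rintro ⟨y, hy, hye⟩
      exact hy (he hye)
    simp only [φ, dif_neg h]
  have hcase : ∀ e, bnd e ⊆ T ∨ ∃ y, y ∉ T ∧ y ∈ bnd e := by
    intro e
    by_cases h : bnd e ⊆ T
    · exact Or.inl h
    · obtain ⟨y, hy, hy'⟩ := Finset.not_subset.1 h
      exact Or.inr ⟨y, hy', hy⟩
  refine ⟨φ, fun e => ?_, fun e => ?_⟩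
  · rcases hcase e with h | ⟨y, hy, hye⟩
    · rw [hφ' e h, hφ' e h]
    · obtain ⟨h1, h2, _⟩ := hψ y hy e hye
      rw [hφ y e hy hye, hφ y _ hy h1, h2]
  · rcases hcase e with h | ⟨y, hy, hye⟩
    · exact Or.inl ⟨h, hφ' e h⟩
    · obtain ⟨h1, _, h3⟩ := hψ y hy e hye
      obtain ⟨u, hu, hu'⟩ := hform y hy e hye
      obtain ⟨w, hw, hw'⟩ := hform y hy _ h1
      refine Or.inr ⟨y, hy, u, hu, w, hw, ?_, hu', ?_⟩
      · rintro rfl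
        exact h3 (hw'.trans hu'.symm)
      · rw [hφ y e hy hye, hw']

end Split

theorem stmt4 {V E : Type} [Fintype V] [Fintype E] [DecidableEq V] [DecidableEq E]
    (bnd : E → Finset V) (hbnd : ∀ e, (bnd e).card = 2)
    (k : ℕ) (hk : 1 ≤ k)
    (v1 v2 v3 v4 : V) (hdist : ({v1, v2, v3, v4} : Finset V).card = 4)
    (htouch : ∀ e : E, ∃ u ∈ ({v1, v2, v3, v4} : Finset V), u ∈ bnd e)
    (hdeg : ∀ u ∈ ({v1, v2, v3, v4} : Finset V), k ≤ vdeg bnd u)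
    (heven : ∀ y : V, y ∉ ({v1, v2, v3, v4} : Finset V) → Even (vdeg bnd y))
    (hbal : ∀ y : V, y ∉ ({v1, v2, v3, v4} : Finset V) →
      ∀ u ∈ ({v1, v2, v3, v4} : Finset V),
        (Finset.univ.filter fun e : E => bnd e = {y, u}).card ≤
        (Finset.univ.filter fun e : E => ∃ w : V, w ≠ u ∧ bnd e = {y, w}).card) :
    ∃ p : Fin k → Finset E,
      (∀ i j, i ≠ j → Disjoint (p i) (p j)) ∧
      ∀ i, chainBnd bnd (p i) = {v1, v2, v3, v4} := by
  have hd : v1 ≠ v2 ∧ v1 ≠ v3 ∧ v1 ≠ v4 ∧ v2 ≠ v3 ∧ v2 ≠ v4 ∧ v3 ≠ v4 := by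
    refine ⟨?_, ?_, ?_, ?_, ?_, ?_⟩ <;> rintro rfl <;>
      simp only [Finset.mem_insert, Finset.mem_singleton, true_or, or_true,
        Finset.insert_eq_of_mem] at hdist <;>
      exact absurd hdist (Nat.ne_of_lt (lt_of_le_of_lt Finset.card_le_three (by norm_num)))
  obtain ⟨h12, h13, h14, h23, h24, h34⟩ := hd
  generalize hT : ({v1, v2, v3, v4} : Finset V) = T at *
  obtain ⟨φ, hφφ, hφ⟩ := exists_mate bnd hbnd T htouch heven hbal
  -- the chains `{e, φ e}` are the edges of the multigraph on `T`
  let s : E → Finset E := fun e => {e, φ e}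
  let F : Finset (Finset E) := Finset.univ.image s
  have hdisj : ∀ a ∈ F, ∀ c ∈ F, a ≠ c → Disjoint a c := by
    intro a ha c hc hac
    obtain ⟨e, -, rfl⟩ := Finset.mem_image.1 ha
    obtain ⟨f, -, rfl⟩ := Finset.mem_image.1 hc
    rw [Finset.disjoint_left]
    intro g hg hg'
    apply hac
    have key : ∀ e', g ∈ s e' → s e' = s g := by
      intro e' hge
      simp only [s, Finset.mem_insert, Finset.mem_singleton] at hge ⊢
      rcases hge with rfl | rfl
      · rfl
      · rw [hφφ, Finset.pair_comm]
    rw [key e hg, key f hg']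
  have hF : ∀ a ∈ F, (chainBnd bnd a).card = 2 ∧ chainBnd bnd a ⊆ T := by
    intro a ha
    obtain ⟨e, -, rfl⟩ := Finset.mem_image.1 ha
    rcases hφ e with ⟨h, he⟩ | ⟨y, hy, u, hu, w, hw, huw, he, hfe⟩
    · have : s e = {e} := by simp [s, he]
      rw [this, chainBnd_singleton]
      exact ⟨hbnd e, h⟩
    · have hyu : y ≠ u := by rintro rfl; exact hy hu
      have hyw : y ≠ w := by rintro rfl; exact hy hw
      have hne : e ≠ φ e := by
        intro h
        rw [← h, he] at hfe
        have : u ∈ ({y, w} : Finset V) := hfe ▸ by simp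
        simp only [Finset.mem_insert, Finset.mem_singleton] at this
        rcases this with h | h
        · exact hyu h.symm
        · exact huw h
      have : chainBnd bnd (s e) = {u, w} := by
        ext v
        rw [mem_chainBnd_pair bnd hne, he, hfe]
        simp only [Finset.mem_insert, Finset.mem_singleton]
        grind
      rw [this]
      refine ⟨Finset.card_pair huw, ?_⟩
      intro t ht
      simp only [Finset.mem_insert, Finset.mem_singleton] at ht
      rcases ht with rfl | rfl <;> assumption
  -- an edge at `u ∈ T` is not paired with another edge at `u`
  have hmate : ∀ u ∈ T, ∀ e, u ∈ bnd e → φ e = e ∨ u ∉ bnd (φ e) := by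
    intro u hu e hue
    rcases hφ e with ⟨h, he⟩ | ⟨y, hy, u', hu', w, hw, huw, he, hfe⟩
    · exact Or.inl he
    · right
      have hyu : u ≠ y := by rintro rfl; exact hy hu
      rw [he] at hue
      rw [hfe]
      simp only [Finset.mem_insert, Finset.mem_singleton] at hue ⊢
      grind
  have hdegF : ∀ u ∈ T, k ≤ degOn (chainBnd bnd) F u := by
    intro u hu
    refine (hdeg u hu).trans ?_
    refine Finset.card_le_card_of_injOn s ?_ ?_
    · intro e he
      simp only [Finset.coe_filter, Finset.mem_univ, true_and, Set.mem_ofPred_eq] at he ⊢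
      refine ⟨Finset.mem_image_of_mem s (Finset.mem_univ e), ?_⟩
      by_cases h : φ e = e
      · have : s e = {e} := by simp [s, h]
        rw [this, chainBnd_singleton]
        exact he
      · have h' := (hmate u hu e he).resolve_left h
        rw [mem_chainBnd_pair bnd (Ne.symm h)]
        exact fun hiff => h' (hiff.1 he)
    · intro e he f hf hef
      simp only [Finset.coe_filter, Finset.mem_univ, true_and, Set.mem_ofPred_eq] at he hf
      have hfe : f ∈ s e := by rw [hef]; simp [s]
      simp only [s, Finset.mem_insert, Finset.mem_singleton] at hfe
      rcases hfe with h | h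
      · exact h.symm
      · rcases hmate u hu e he with h' | h'
        · exact (h.trans h').symm
        · exact absurd (h ▸ hf) h'
  obtain ⟨p, hpF, hpd, hpo⟩ :=
    four_vertex_packing (chainBnd bnd) h12 h13 h14 h23 h24 h34 hT.symm k F hF hdegF
  refine ⟨fun i => (p i).biUnion id, fun i j hij => ?_, fun i => ?_⟩
  · rw [Finset.disjoint_biUnion_left]
    intro a ha
    rw [Finset.disjoint_biUnion_right]
    intro c hc
    refine hdisj a (hpF i ha) c (hpF j hc) ?_
    rintro rfl
    exact Finset.disjoint_left.1 (hpd i j hij) ha hc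
  · ext v
    rw [odd_biUnion bnd (p i) (fun a ha c hc => hdisj a (hpF i ha) c (hpF i hc))]
    refine ⟨fun h => ?_, hpo i v⟩
    obtain ⟨a, ha⟩ := Finset.card_pos.1 h.pos
    rw [Finset.mem_filter] at ha
    exact (hF a (hpF i ha.1)).2 ha.2
end

section
/- Let k be a positive integer and let G be a finite multigraph whose vertex set V is the disjoint union of a four-element set {v₁,v₂,v₃,v₄} and a (possibly empty) set Y, such that every edge of G has at least one boundary vertex in {v₁,v₂,v₃,v₄}. Let y₁,…,y_m be exactly the vertices of Y whose degree in G is odd. Suppose that after deleting any k−1 or fewer edges from G there still exists a chain of edges p with ∂(p) = v₁ + v₂ + v₃ + v₄. Let GN be any multigraph obtained from G by adjoining new edges ε₁,…,ε_n such that the boundary of each ε_i is a two-element set consisting of one vertex from {y₁,…,y_m} and one vertex from {v₁,v₂,v₃,v₄,y₁,…,y_m}, and such that each of y₁,…,y_m lies in the boundary of exactly one of the new edges ε₁,…,ε_n. Then in GN there exist k chains of edges p₁,…,p_k, no two of which have any common nontrivial summands, satisfying ∂(p₁) = ⋯ = ∂(p_k) = v₁ + v₂ + v₃ + v₄ in GN.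 -/
/-! ### Cuts, degrees and splitting off -/

/-- The edges of `A` crossing the cut `Z`, i.e. those having an odd number of ends in `Z`. -/
def cut {V E : Type} [DecidableEq V] (bnd : E → Finset V) (A : Finset E) (Z : Finset V) :
    Finset E :=
  A.filter fun e => Odd (bnd e ∩ Z).card

/-- The degree of `y` in the multigraph with edge set `A`. -/
def dg {V E : Type} [DecidableEq V] (bnd : E → Finset V) (A : Finset E) (y : V) : ℕ :=
  (A.filter fun e => y ∈ bnd e).card

/-- The number of edges of `A` joining `a` and `y` (when `a ≠ y` and edges have two ends). -/
def adj {V E : Type} [DecidableEq V] (bnd : E → Finset V) (A : Finset E) (a y : V) : ℕ :=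
  (A.filter fun e => a ∈ bnd e ∧ y ∈ bnd e).card

/-- The boundary function after splitting off: `e₂` becomes the join of `e₁` and `e₂`
(and `e₁` is to be removed from the edge set). -/
def splitBnd {V E : Type} [DecidableEq V] [DecidableEq E] (bnd : E → Finset V) (e₁ e₂ : E) :
    E → Finset V :=
  Function.update bnd e₂ (symmDiff (bnd e₁) (bnd e₂))

set_option linter.unusedSectionVars false

section
variable {V E : Type} [DecidableEq V] [DecidableEq E]

lemma odd_card_symmDiff_inter (s t Z : Finset V) :
    Odd (symmDiff s t ∩ Z).card ↔ Xor (Odd (s ∩ Z).card) (Odd (t ∩ Z).card) := by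
  have key : (symmDiff s t ∩ Z).card + 2 * (s ∩ t ∩ Z).card = (s ∩ Z).card + (t ∩ Z).card := by
    have h1 : (symmDiff s t ∩ Z) ∪ (s ∩ t ∩ Z) = (s ∩ Z) ∪ (t ∩ Z) := by
      ext x; simp only [Finset.mem_union, Finset.mem_inter, Finset.mem_symmDiff]; tauto
    have h2 : Disjoint (symmDiff s t ∩ Z) (s ∩ t ∩ Z) := by
      rw [Finset.disjoint_left]; intro x
      simp only [Finset.mem_inter, Finset.mem_symmDiff]; tauto
    have h3 : (s ∩ Z) ∩ (t ∩ Z) = s ∩ t ∩ Z := by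
      ext x; simp only [Finset.mem_inter]; tauto
    have h4 := Finset.card_union_add_card_inter (s ∩ Z) (t ∩ Z)
    have h5 := Finset.card_union_of_disjoint h2
    rw [h1] at h5
    rw [h3] at h4
    omega
  simp only [Xor, Nat.odd_iff]
  omega

lemma odd_card_inter_symmDiff (b Z : Finset V) (y : V) :
    Odd (b ∩ symmDiff Z {y}).card ↔ Xor (Odd (b ∩ Z).card) (y ∈ b) := by
  rw [Finset.inter_comm, odd_card_symmDiff_inter, Finset.inter_comm Z b]
  by_cases h : y ∈ b <;> simp [h]

lemma odd_card_pair_inter {x y : V} (h : x ≠ y) (Z : Finset V) :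
    Odd (({x, y} : Finset V) ∩ Z).card ↔ Xor (x ∈ Z) (y ∈ Z) := by
  by_cases hx : x ∈ Z <;> by_cases hy : y ∈ Z <;>
    simp [Finset.insert_inter_of_mem, Finset.insert_inter_of_notMem, hx, hy, h, Xor]

lemma dg_eq_cut (bnd : E → Finset V) (A : Finset E) (y : V) :
    dg bnd A y = (cut bnd A {y}).card := by
  unfold dg cut
  congr 1
  apply Finset.filter_congr
  intro e _
  by_cases h : y ∈ bnd e <;> simp [h]

/-- Splitting off `e₁, e₂` changes the number of edges crossing `Z` only when both cross,
in which case it drops by two. -/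
lemma card_cut_split (bnd : E → Finset V) (A : Finset E) {e₁ e₂ : E} (h₁ : e₁ ∈ A) (h₂ : e₂ ∈ A)
    (hne : e₁ ≠ e₂) (Z : Finset V) :
    (cut (splitBnd bnd e₁ e₂) (A.erase e₁) Z).card +
      (if Odd (bnd e₁ ∩ Z).card ∧ Odd (bnd e₂ ∩ Z).card then 2 else 0) = (cut bnd A Z).card := by
  have h₂' : e₂ ∈ A.erase e₁ := Finset.mem_erase.2 ⟨hne.symm, h₂⟩
  have hB : ∑ e ∈ (A.erase e₁).erase e₂, (if Odd (splitBnd bnd e₁ e₂ e ∩ Z).card then 1 else 0)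
      = ∑ e ∈ (A.erase e₁).erase e₂, (if Odd (bnd e ∩ Z).card then 1 else 0) := by
    apply Finset.sum_congr rfl
    intro e he
    rw [splitBnd, Function.update_of_ne (Finset.ne_of_mem_erase he)]
  unfold cut
  rw [Finset.card_filter, Finset.card_filter, ← Finset.add_sum_erase A _ h₁,
    ← Finset.add_sum_erase (A.erase e₁) _ h₂', ← Finset.add_sum_erase (A.erase e₁) _ h₂', hB]
  have : splitBnd bnd e₁ e₂ e₂ = symmDiff (bnd e₁) (bnd e₂) := by simp [splitBnd]
  rw [this]
  have := odd_card_symmDiff_inter (bnd e₁) (bnd e₂) Z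
  by_cases o1 : Odd (bnd e₁ ∩ Z).card <;> by_cases o2 : Odd (bnd e₂ ∩ Z).card <;>
    simp only [o1, o2, Xor] at this <;> simp [o1, o2, this]; omega

/-- Moving `y` across the cut `Z` exchanges the crossing and non-crossing edges at `y`. -/
lemma card_cut_flip (bnd : E → Finset V) (A : Finset E) (Z : Finset V) (y : V) :
    (cut bnd A (symmDiff Z {y})).card + 2 * ((cut bnd A Z).filter fun e => y ∈ bnd e).card
      = (cut bnd A Z).card + dg bnd A y := by
  unfold cut dg
  rw [Finset.filter_filter]
  simp only [Finset.card_filter, Finset.mul_sum, ← Finset.sum_add_distrib]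
  apply Finset.sum_congr rfl
  intro e _
  have := odd_card_inter_symmDiff (bnd e) Z y
  by_cases o1 : Odd (bnd e ∩ Z).card <;> by_cases o2 : y ∈ bnd e <;>
    simp only [o1, o2, Xor] at this <;> simp [o1, o2, this]

lemma adj_three (bnd : E → Finset V) (A : Finset E) (hcard : ∀ e ∈ A, (bnd e).card = 2)
    {a b c y : V} (hab : a ≠ b) (hac : a ≠ c) (hbc : b ≠ c) (ha : a ≠ y) (hb : b ≠ y)
    (hc : c ≠ y) : adj bnd A a y + adj bnd A b y + adj bnd A c y ≤ dg bnd A y := by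
  unfold adj dg
  simp only [Finset.card_filter, ← Finset.sum_add_distrib]
  apply Finset.sum_le_sum
  intro e he
  obtain ⟨u, v, huv, h⟩ := Finset.card_eq_two.1 (hcard e he)
  rw [h]
  simp only [Finset.mem_insert, Finset.mem_singleton]
  split_ifs <;> grind

lemma eq_pair_of_mem {s : Finset V} (hs : s.card = 2) {a b : V} (ha : a ∈ s) (hb : b ∈ s)
    (hab : a ≠ b) : s = {a, b} := by
  symm
  apply Finset.eq_of_subset_of_card_le
  · intro x; simp only [Finset.mem_insert, Finset.mem_singleton]; rintro (rfl | rfl) <;> assumption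
  · rw [hs, Finset.card_pair hab]

lemma exists_pair_of_mem {s : Finset V} (hs : s.card = 2) {b : V} (hb : b ∈ s) :
    ∃ a, a ≠ b ∧ s = {a, b} := by
  obtain ⟨u, v, huv, rfl⟩ := Finset.card_eq_two.1 hs
  simp only [Finset.mem_insert, Finset.mem_singleton] at hb
  rcases hb with rfl | rfl
  · exact ⟨v, huv.symm, Finset.pair_comm _ _⟩
  · exact ⟨u, huv, rfl⟩

/-- If `Z` separates the terminal `a` from the others and contains `y` but none of the
nonterminal neighbours of `y`, and fewer than half of the edges at `y` go to `a`, then taking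
`y` out of `Z` shrinks the cut, by at least two since `y` has even degree. -/
lemma card_cut_flip_add_two_le (bnd : E → Finset V) (A : Finset E) (T : Finset V)
    (hcard : ∀ e ∈ A, (bnd e).card = 2) {y a : V} {Z : Finset V}
    (heven : Even (dg bnd A y)) (hZ : Z ∩ T = {a}) (hyZ : y ∈ Z)
    (hnb : ∀ e ∈ A, y ∈ bnd e → ∀ w ∈ bnd e, w ≠ y → w ∉ T → w ∉ Z)
    (hlt : 2 * adj bnd A a y < dg bnd A y) :
    (cut bnd A (symmDiff Z {y})).card + 2 ≤ (cut bnd A Z).card := by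
  have hflip := card_cut_flip bnd A Z y
  have hle : dg bnd A y ≤ ((cut bnd A Z).filter fun e => y ∈ bnd e).card + adj bnd A a y := by
    unfold dg adj cut
    rw [Finset.filter_filter]
    simp only [Finset.card_filter, ← Finset.sum_add_distrib]
    apply Finset.sum_le_sum
    intro e he
    by_cases hy : y ∈ bnd e
    · obtain ⟨w, hwy, hw⟩ := exists_pair_of_mem (hcard e he) hy
      have hw' : w ∈ bnd e := by simp [hw]
      by_cases hwZ : w ∈ Z
      · have hwT : w ∈ T := by
          by_contra hwT
          exact hnb e he hy w hw' hwy hwT hwZ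
        have : w ∈ Z ∩ T := Finset.mem_inter.2 ⟨hwZ, hwT⟩
        rw [hZ, Finset.mem_singleton] at this
        subst this
        simp [hy, hw']
      · have : Odd (bnd e ∩ Z).card := by
          rw [hw, odd_card_pair_inter hwy]; simp [Xor, hwZ, hyZ]
        simp [hy, this]
    · simp [hy]
  obtain ⟨m, hm⟩ := heven
  omega

lemma symmDiff_singleton_inter {T Z : Finset V} {y : V} (hy : y ∉ T) :
    symmDiff Z {y} ∩ T = Z ∩ T := by
  ext x
  simp only [Finset.mem_inter, Finset.mem_symmDiff, Finset.mem_singleton]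
  grind

/-! ### Packings of chains -/

/-- `A` contains `k` pairwise disjoint chains, each with boundary `T`. -/
def HasPacking (bnd : E → Finset V) (A : Finset E) (T : Finset V) (k : ℕ) : Prop :=
  ∃ p : Fin k → Finset E, (∀ i, p i ⊆ A) ∧ (∀ i j, i ≠ j → Disjoint (p i) (p j)) ∧
    ∀ i v, Odd (dg bnd (p i) v) ↔ v ∈ T

/-- A packing after splitting off lifts to a packing before it: put `e₁` back next to `e₂`. -/
lemma hasPacking_of_split {bnd : E → Finset V} {A : Finset E} {T : Finset V} {k : ℕ} {e₁ e₂ : E}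
    (h₁ : e₁ ∈ A) (hne : e₁ ≠ e₂)
    (h : HasPacking (splitBnd bnd e₁ e₂) (A.erase e₁) T k) : HasPacking bnd A T k := by
  obtain ⟨p, hpA, hpd, hp⟩ := h
  have hn : ∀ i, e₁ ∉ p i := fun i hi => by simpa using hpA i hi
  refine ⟨fun i => if e₂ ∈ p i then insert e₁ (p i) else p i, ?_, ?_, ?_⟩
  · intro i
    have := (hpA i).trans (Finset.erase_subset _ _)
    dsimp only
    split_ifs
    · exact Finset.insert_subset h₁ this
    · exact this
  · intro i j hij
    have hd := hpd i j hij
    have := hn i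
    have := hn j
    dsimp only
    rw [Finset.disjoint_left] at hd ⊢
    intro x
    split_ifs <;> grind
  · intro i v
    rw [← hp i v]
    dsimp only
    split_ifs with h2
    · have := card_cut_split bnd (insert e₁ (p i)) (Finset.mem_insert_self _ _)
        (Finset.mem_insert_of_mem h2) hne {v}
      rw [Finset.erase_insert (hn i), ← dg_eq_cut, ← dg_eq_cut] at this
      rw [← this]
      split_ifs <;> simp [Nat.odd_add]
    · have : dg bnd (p i) v = dg (splitBnd bnd e₁ e₂) (p i) v := by
        unfold dg
        congr 1
        apply Finset.filter_congr
        intro e he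
        have : e ≠ e₂ := by rintro rfl; exact h2 he
        rw [splitBnd, Function.update_of_ne this]
      rw [this]

lemma hasPacking_mono {bnd : E → Finset V} {A B : Finset E} {T : Finset V} {k : ℕ}
    (h : HasPacking bnd A T k) (hAB : A ⊆ B) : HasPacking bnd B T k := by
  obtain ⟨p, h1, h2, h3⟩ := h
  exact ⟨p, fun i => (h1 i).trans hAB, h2, h3⟩

lemma hasPacking_succ {bnd : E → Finset V} {A q : Finset E} {T : Finset V} {k : ℕ}
    (hq : q ⊆ A) (hqT : ∀ v, Odd (dg bnd q v) ↔ v ∈ T) (h : HasPacking bnd (A \ q) T k) :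
    HasPacking bnd A T (k + 1) := by
  obtain ⟨p, h1, h2, h3⟩ := h
  have hd : ∀ i, Disjoint q (p i) := fun i =>
    Finset.disjoint_of_subset_right (h1 i) Finset.disjoint_sdiff
  refine ⟨Fin.cons q p, ?_, ?_, ?_⟩
  · intro i
    refine Fin.cases ?_ (fun i => ?_) i
    · simpa using hq
    · simpa using (h1 i).trans Finset.sdiff_subset
  · intro i j
    refine Fin.cases ?_ (fun i => ?_) i <;> refine Fin.cases ?_ (fun j => ?_) j
    · simp
    · intro _; simpa using hd j
    · intro _; simpa using (hd i).symm
    · intro hij; simpa using h2 i j (by simpa using hij)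
  · intro i
    refine Fin.cases ?_ (fun i => ?_) i
    · simpa using hqT
    · simpa using h3 i

lemma dg_insert (bnd : E → Finset V) {q : Finset E} {e : E} (he : e ∉ q) (v : V) :
    dg bnd (insert e q) v = dg bnd q v + if v ∈ bnd e then 1 else 0 := by
  unfold dg
  rw [Finset.card_filter, Finset.card_filter, Finset.sum_insert he, add_comm]

lemma dg_singleton (bnd : E → Finset V) (e : E) (v : V) :
    dg bnd {e} v = if v ∈ bnd e then 1 else 0 := by
  unfold dg
  rw [Finset.card_filter, Finset.sum_singleton]

lemma dg_sdiff (bnd : E → Finset V) {A q : Finset E} (hq : q ⊆ A) (v : V) :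
    dg bnd (A \ q) v + dg bnd q v = dg bnd A v := by
  unfold dg
  simp only [Finset.card_filter]
  exact Finset.sum_sdiff hq

lemma exists_of_dg_pos {bnd : E → Finset V} {A : Finset E} {a : V} (h : 0 < dg bnd A a) :
    ∃ e ∈ A, a ∈ bnd e := by
  obtain ⟨e, he⟩ := Finset.card_pos.1 h
  exact ⟨e, (Finset.mem_filter.1 he).1, (Finset.mem_filter.1 he).2⟩

lemma hasPacking_zero (bnd : E → Finset V) (A : Finset E) (T : Finset V) :
    HasPacking bnd A T 0 :=
  ⟨fun i => i.elim0, fun i => i.elim0, fun i => i.elim0, fun i => i.elim0⟩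

/-! ### Multigraphs on four vertices -/

/-- If all edges pass through `c` and every other terminal has degree at least `k`, then there
are `k` disjoint stars centred at `c`. -/
lemma hasPacking_star (bnd : E → Finset V) (A : Finset E) {c x y z : V}
    (hcx : c ≠ x) (hcy : c ≠ y) (hcz : c ≠ z) (hxy : x ≠ y) (hxz : x ≠ z) (hyz : y ≠ z)
    (hcard : ∀ e ∈ A, (bnd e).card = 2) (hcA : ∀ e ∈ A, c ∈ bnd e)
    (k : ℕ) (hx : k ≤ dg bnd A x) (hy : k ≤ dg bnd A y) (hz : k ≤ dg bnd A z) :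
    HasPacking bnd A {c, x, y, z} k := by
  induction k generalizing A with
  | zero => exact hasPacking_zero _ _ _
  | succ k ih =>
    obtain ⟨e, he, hex⟩ := exists_of_dg_pos (show 0 < dg bnd A x by omega)
    obtain ⟨f, hf, hfy⟩ := exists_of_dg_pos (show 0 < dg bnd A y by omega)
    obtain ⟨g, hg, hgz⟩ := exists_of_dg_pos (show 0 < dg bnd A z by omega)
    have be := eq_pair_of_mem (hcard e he) (hcA e he) hex hcx
    have bf := eq_pair_of_mem (hcard f hf) (hcA f hf) hfy hcy
    have bg := eq_pair_of_mem (hcard g hg) (hcA g hg) hgz hcz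
    have hef : e ≠ f := by
      rintro rfl; rw [be] at hfy; simp [hcy.symm, hxy.symm] at hfy
    have heg : e ≠ g := by
      rintro rfl; rw [be] at hgz; simp [hcz.symm, hxz.symm] at hgz
    have hfg : f ≠ g := by
      rintro rfl; rw [bf] at hgz; simp [hcz.symm, hyz.symm] at hgz
    have hq : ({e, f, g} : Finset E) ⊆ A := by
      intro u; simp only [Finset.mem_insert, Finset.mem_singleton]
      rintro (rfl | rfl | rfl) <;> assumption
    have hdq : ∀ v, dg bnd {e, f, g} v = (if v = c ∨ v = z then 1 else 0) +
        (if v = c ∨ v = y then 1 else 0) + if v = c ∨ v = x then 1 else 0 := by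
      intro v
      rw [dg_insert _ (by simp [hef, heg]), dg_insert _ (by simp [hfg]), dg_singleton, be, bf, bg]
      simp only [Finset.mem_insert, Finset.mem_singleton]
    refine hasPacking_succ hq ?_ (ih (A \ {e, f, g})
      (fun u hu => hcard u (Finset.sdiff_subset hu)) (fun u hu => hcA u (Finset.sdiff_subset hu))
      ?_ ?_ ?_)
    · intro v
      rw [hdq]
      simp only [Finset.mem_insert, Finset.mem_singleton]
      split_ifs <;> grind
    · have h1 := dg_sdiff bnd hq x
      have h2 := hdq x
      simp only [hcx.symm, hxy, hxz, or_self, or_true, if_true, if_false] at h2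
      omega
    · have h1 := dg_sdiff bnd hq y
      have h2 := hdq y
      simp only [hcy.symm, hxy.symm, hyz, or_self, or_true, if_true, if_false] at h2
      omega
    · have h1 := dg_sdiff bnd hq z
      have h2 := hdq z
      simp only [hcz.symm, hxz.symm, hyz.symm, or_self, or_true, if_true, if_false] at h2
      omega

/-- A multigraph on the four terminals in which every terminal has degree at least `k` contains
`k` disjoint chains with boundary `T`: peel off perfect matchings as long as possible; once no
two edges are disjoint, the edges all share a vertex, since a triangle would miss a terminal. -/
lemma hasPacking_of_subset (bnd : E → Finset V) (A : Finset E) (T : Finset V) (hT : T.card = 4)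
    (hcard : ∀ e ∈ A, (bnd e).card = 2) (hsub : ∀ e ∈ A, bnd e ⊆ T)
    (k : ℕ) (hdeg : ∀ a ∈ T, k ≤ dg bnd A a) : HasPacking bnd A T k := by
  induction k generalizing A with
  | zero => exact hasPacking_zero _ _ _
  | succ k ih =>
    by_cases hm : ∃ e ∈ A, ∃ f ∈ A, Disjoint (bnd e) (bnd f)
    · obtain ⟨e, he, f, hf, hd⟩ := hm
      have hun : bnd e ∪ bnd f = T := by
        apply Finset.eq_of_subset_of_card_le (Finset.union_subset (hsub e he) (hsub f hf))
        rw [Finset.card_union_of_disjoint hd, hcard e he, hcard f hf, hT]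
      have hef : e ≠ f := by
        rintro rfl
        have := hcard e he
        rw [disjoint_self.1 hd] at this
        simp at this
      have hq : ({e, f} : Finset E) ⊆ A := by
        intro u; simp only [Finset.mem_insert, Finset.mem_singleton]
        rintro (rfl | rfl) <;> assumption
      have hdq : ∀ v, dg bnd {e, f} v = if v ∈ T then 1 else 0 := by
        intro v
        rw [dg_insert _ (by simp [hef]), dg_singleton, ← hun]
        have hdv : v ∈ bnd e → v ∉ bnd f := fun h => Finset.disjoint_left.1 hd h
        by_cases h1 : v ∈ bnd e <;> by_cases h2 : v ∈ bnd f <;> simp [h1, h2]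
        exact hdv h1 h2
      refine hasPacking_succ hq ?_ (ih (A \ {e, f})
        (fun u hu => hcard u (Finset.sdiff_subset hu))
        (fun u hu => hsub u (Finset.sdiff_subset hu)) ?_)
      · intro v
        rw [hdq]
        split_ifs with h <;> simp [h]
      · intro a ha
        have h1 := dg_sdiff bnd hq a
        have h2 := hdeg a ha
        rw [hdq, if_pos ha] at h1
        omega
    · push Not at hm
      have hint : ∀ e ∈ A, ∀ f ∈ A, ∃ v, v ∈ bnd e ∧ v ∈ bnd f := fun e he f hf =>
        Finset.not_disjoint_iff.1 (hm e he f hf)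
      have hcov : ∀ a ∈ T, ∃ e ∈ A, a ∈ bnd e := fun a ha =>
        exists_of_dg_pos (by have := hdeg a ha; omega)
      -- Three edges at a common vertex `c`, reaching the three other terminals.
      have hstar : ∃ c x y z, T = {c, x, y, z} ∧ c ≠ x ∧ c ≠ y ∧ c ≠ z ∧ x ≠ y ∧ x ≠ z ∧ y ≠ z ∧
          (∃ e ∈ A, bnd e = {c, x}) ∧ (∃ e ∈ A, bnd e = {c, y}) ∧ (∃ e ∈ A, bnd e = {c, z}) := by
        obtain ⟨a0, ha0⟩ := Finset.card_pos.1 (show 0 < T.card by omega)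
        obtain ⟨e, he, -⟩ := hcov a0 ha0
        obtain ⟨a, b, hab, be⟩ := Finset.card_eq_two.1 (hcard e he)
        have hTe : (T \ bnd e).card = 2 := by
          rw [Finset.card_sdiff_of_subset (hsub e he), hT, hcard e he]
        obtain ⟨c, d, hcd, hcdT⟩ := Finset.card_eq_two.1 hTe
        have hTeq : T = {a, b, c, d} := by
          rw [← Finset.union_sdiff_of_subset (hsub e he), hcdT, be]
          ext v; simp only [Finset.mem_union, Finset.mem_insert, Finset.mem_singleton]; tauto
        have hc : c ∈ T \ bnd e := by simp [hcdT]
        have hd : d ∈ T \ bnd e := by simp [hcdT]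
        rw [Finset.mem_sdiff, be] at hc hd
        simp only [Finset.mem_insert, Finset.mem_singleton, not_or] at hc hd
        obtain ⟨f, hf, hcf⟩ := hcov c hc.1
        obtain ⟨g, hg, hdg⟩ := hcov d hd.1
        obtain ⟨w, hw1, hw2⟩ := hint e he f hf
        obtain ⟨u, hu1, hu2⟩ := hint e he g hg
        obtain ⟨t, ht1, ht2⟩ := hint f hf g hg
        rw [be] at hw1 hu1
        simp only [Finset.mem_insert, Finset.mem_singleton] at hw1 hu1
        have hwc : w ≠ c := by grind
        have hud : u ≠ d := by grind
        have bf := eq_pair_of_mem (hcard f hf) hw2 hcf hwc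
        have bg := eq_pair_of_mem (hcard g hg) hu2 hdg hud
        have hwu : w = u := by
          rw [bf] at ht1; rw [bg] at ht2
          simp only [Finset.mem_insert, Finset.mem_singleton] at ht1 ht2
          grind
        subst hwu
        rcases hw1 with rfl | rfl
        · exact ⟨w, b, c, d, hTeq, hab, Ne.symm hc.2.1, Ne.symm hd.2.1, Ne.symm hc.2.2,
            Ne.symm hd.2.2, hcd, ⟨e, he, be⟩, ⟨f, hf, bf⟩, ⟨g, hg, bg⟩⟩
        · exact ⟨w, a, c, d, by rw [hTeq, Finset.insert_comm], hab.symm, Ne.symm hc.2.2,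
            Ne.symm hd.2.2, Ne.symm hc.2.1, Ne.symm hd.2.1, hcd,
            ⟨e, he, by rw [be, Finset.pair_comm]⟩, ⟨f, hf, bf⟩, ⟨g, hg, bg⟩⟩
      obtain ⟨c, x, y, z, rfl, hcx, hcy, hcz, hxy, hxz, hyz, ⟨e, he, be⟩, ⟨f, hf, bf⟩,
        ⟨g, hg, bg⟩⟩ := hstar
      refine hasPacking_star bnd A hcx hcy hcz hxy hxz hyz hcard ?_ _
        (hdeg x (by simp)) (hdeg y (by simp)) (hdeg z (by simp))
      intro h hh
      by_contra hch
      obtain ⟨u, v, huv, bh⟩ := Finset.card_eq_two.1 (hcard h hh)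
      obtain ⟨r, hr1, hr2⟩ := hint e he h hh
      obtain ⟨s, hs1, hs2⟩ := hint f hf h hh
      obtain ⟨t, ht1, ht2⟩ := hint g hg h hh
      rw [be] at hr1; rw [bf] at hs1; rw [bg] at ht1
      rw [bh] at hch hr2 hs2 ht2
      simp only [Finset.mem_insert, Finset.mem_singleton] at *
      grind

/-! ### Splittings that preserve the cut condition -/

/-- Splitting off `e₁, e₂` keeps all terminal-separating cuts of size at least `k`, provided each
such cut crossed by both edges exceeds another one by two. -/
lemma cut_split_ge (bnd : E → Finset V) (A : Finset E) (T : Finset V) (k : ℕ)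
    (h4 : ∀ Z a, Z ∩ T = {a} → k ≤ (cut bnd A Z).card) {e₁ e₂ : E} (h₁ : e₁ ∈ A) (h₂ : e₂ ∈ A)
    (hne : e₁ ≠ e₂)
    (hcr : ∀ Z a, Z ∩ T = {a} → Odd (bnd e₁ ∩ Z).card → Odd (bnd e₂ ∩ Z).card →
      ∃ y ∉ T, (cut bnd A (symmDiff Z {y})).card + 2 ≤ (cut bnd A Z).card) :
    ∀ Z a, Z ∩ T = {a} → k ≤ (cut (splitBnd bnd e₁ e₂) (A.erase e₁) Z).card := by
  intro Z a hZ
  have hs := card_cut_split bnd A h₁ h₂ hne Z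
  by_cases ho : Odd (bnd e₁ ∩ Z).card ∧ Odd (bnd e₂ ∩ Z).card
  · obtain ⟨y, hy, hle⟩ := hcr Z a hZ ho.1 ho.2
    have := h4 (symmDiff Z {y}) a (by rw [symmDiff_singleton_inter hy, hZ])
    rw [if_pos ho] at hs
    omega
  · have := h4 Z a hZ
    rw [if_neg ho] at hs
    omega

lemma even_dg_split (bnd : E → Finset V) (A : Finset E) {e₁ e₂ : E} (h₁ : e₁ ∈ A) (h₂ : e₂ ∈ A)
    (hne : e₁ ≠ e₂) (y : V) (h : Even (dg bnd A y)) :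
    Even (dg (splitBnd bnd e₁ e₂) (A.erase e₁) y) := by
  have hs := card_cut_split bnd A h₁ h₂ hne {y}
  rw [← dg_eq_cut, ← dg_eq_cut] at hs
  rw [← hs] at h
  split_ifs at h
  · simpa [Nat.even_add] using h
  · simpa using h

lemma symmDiff_pairs {x y z : V} (hxy : x ≠ y) (hxz : x ≠ z) (hyz : y ≠ z) :
    symmDiff ({x, y} : Finset V) {z, y} = {x, z} := by
  ext v
  simp only [Finset.mem_symmDiff, Finset.mem_insert, Finset.mem_singleton]
  grind

/-- Conditions inherited under splitting off: edges have two ends, nonterminals have even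
degree, edges without terminal ends are pairwise disjoint, and every cut separating one terminal
from the others has at least `k` edges. -/
structure Good (bnd : E → Finset V) (A : Finset E) (T : Finset V) (k : ℕ) : Prop where
  card_two : ∀ e ∈ A, (bnd e).card = 2
  even_dg : ∀ y ∉ T, Even (dg bnd A y)
  inner_disj : ∀ e ∈ A, ∀ f ∈ A, e ≠ f → Disjoint (bnd e) T → Disjoint (bnd f) T →
    Disjoint (bnd e) (bnd f)
  cut_ge : ∀ Z a, Z ∩ T = {a} → k ≤ (cut bnd A Z).card

/-- Splitting off two edges `{x, y}` and `{z, y}` with `x` a terminal preserves `Good`, under the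
hypothesis of `cut_split_ge`. -/
lemma Good.split {bnd : E → Finset V} {A : Finset E} {T : Finset V} {k : ℕ}
    (hG : Good bnd A T k) {e₁ e₂ : E} (h₁ : e₁ ∈ A) (h₂ : e₂ ∈ A) {x y z : V}
    (hxy : x ≠ y) (hxz : x ≠ z) (hyz : y ≠ z) (hx : x ∈ T)
    (b₁ : bnd e₁ = {x, y}) (b₂ : bnd e₂ = {z, y})
    (hcr : ∀ Z a, Z ∩ T = {a} → Odd (bnd e₁ ∩ Z).card → Odd (bnd e₂ ∩ Z).card →
      ∃ y ∉ T, (cut bnd A (symmDiff Z {y})).card + 2 ≤ (cut bnd A Z).card) :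
    e₁ ≠ e₂ ∧ Good (splitBnd bnd e₁ e₂) (A.erase e₁) T k := by
  have hne : e₁ ≠ e₂ := by
    rintro rfl
    have : x ∈ ({z, y} : Finset V) := by rw [← b₂, b₁]; simp
    simp [hxy, hxz] at this
  have hs : splitBnd bnd e₁ e₂ e₂ = {x, z} := by
    simp [splitBnd, b₁, b₂, symmDiff_pairs hxy hxz hyz]
  have ho : ∀ e, e ≠ e₂ → splitBnd bnd e₁ e₂ e = bnd e := fun e he => by
    rw [splitBnd, Function.update_of_ne he]
  have hnd : ¬ Disjoint (splitBnd bnd e₁ e₂ e₂) T := by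
    rw [hs, Finset.not_disjoint_iff]; exact ⟨x, by simp, hx⟩
  refine ⟨hne, ?_, ?_, ?_, cut_split_ge bnd A T k hG.cut_ge h₁ h₂ hne hcr⟩
  · intro e he
    by_cases h : e = e₂
    · rw [h, hs, Finset.card_pair hxz]
    · rw [ho e h, hG.card_two e (Finset.mem_of_mem_erase he)]
  · exact fun y hy => even_dg_split bnd A h₁ h₂ hne y (hG.even_dg y hy)
  · intro e he f hf hef hde hdf
    have h1 : e ≠ e₂ := by rintro rfl; exact hnd hde
    have h2 : f ≠ e₂ := by rintro rfl; exact hnd hdf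
    rw [ho e h1] at hde ⊢
    rw [ho f h2] at hdf ⊢
    exact hG.inner_disj e (Finset.mem_of_mem_erase he) f (Finset.mem_of_mem_erase hf) hef hde hdf

lemma disjoint_pair {T : Finset V} {x y : V} (hx : x ∉ T) (hy : y ∉ T) :
    Disjoint ({x, y} : Finset V) T := by
  rw [Finset.disjoint_left]
  intro v
  simp only [Finset.mem_insert, Finset.mem_singleton]
  rintro (rfl | rfl) <;> assumption

lemma adj_pos {bnd : E → Finset V} {A : Finset E} {e : E} (he : e ∈ A) {x y : V}
    (hx : x ∈ bnd e) (hy : y ∈ bnd e) : 1 ≤ adj bnd A x y :=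
  Finset.card_pos.2 ⟨e, Finset.mem_filter.2 ⟨he, hx, hy⟩⟩

/-- Choice of the edge to be split off with an inner edge `{y, y'}`: an edge `{i, y}` such that no
other terminal takes half of the edges at `y`, and either `i` takes half of the edges at `y` (all
quantities in the strict inequality are even), or it does not take half of the edges at `y'`. -/
lemma Good.exists_inner_pair {bnd : E → Finset V} {A : Finset E} {T : Finset V} {k : ℕ}
    (hG : Good bnd A T k) {f : E} (hf : f ∈ A) {y y' : V} (hyy : y ≠ y') (hy : y ∉ T)
    (hy' : y' ∉ T) (bf : bnd f = {y', y}) :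
    ∃ e ∈ A, ∃ i ∈ T, bnd e = {i, y} ∧ (∀ a ∈ T, a ≠ i → 2 * adj bnd A a y < dg bnd A y) ∧
      (dg bnd A y < 2 * adj bnd A i y + 2 ∨ 2 * adj bnd A i y' < dg bnd A y') := by
  have hfy : 1 ≤ adj bnd A y' y := adj_pos hf (by simp [bf]) (by simp [bf])
  have hfy' : 1 ≤ adj bnd A y y' := adj_pos hf (by simp [bf]) (by simp [bf])
  have hT : ∀ {a}, a ∈ T → a ≠ y ∧ a ≠ y' := fun {a} ha =>
    ⟨by rintro rfl; exact hy ha, by rintro rfl; exact hy' ha⟩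
  have h3 : ∀ {a b}, a ∈ T → b ∈ T → a ≠ b →
      adj bnd A a y + adj bnd A b y + adj bnd A y' y ≤ dg bnd A y := fun {a b} ha hb hab =>
    adj_three bnd A hG.card_two hab (hT ha).2 (hT hb).2 (hT ha).1 (hT hb).1 hyy.symm
  have h3' : ∀ {a b}, a ∈ T → b ∈ T → a ≠ b →
      adj bnd A a y' + adj bnd A b y' + adj bnd A y y' ≤ dg bnd A y' := fun {a b} ha hb hab =>
    adj_three bnd A hG.card_two hab (hT ha).1 (hT hb).1 (hT ha).2 (hT hb).2 hyy
  -- The edges at `y` other than `f` go to terminals.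
  have hter : ∀ e ∈ A, e ≠ f → y ∈ bnd e → ∃ i ∈ T, bnd e = {i, y} := by
    intro e he hef hye
    obtain ⟨i, hiy, be⟩ := exists_pair_of_mem (hG.card_two e he) hye
    refine ⟨i, ?_, be⟩
    by_contra hi
    have := hG.inner_disj e he f hf hef (be ▸ disjoint_pair hi hy) (bf ▸ disjoint_pair hy' hy)
    exact Finset.disjoint_left.1 this hye (by simp [bf])
  have hD : 2 ≤ dg bnd A y := by
    have h1 : 0 < dg bnd A y := Finset.card_pos.2 ⟨f, by simp [hf, bf]⟩
    obtain ⟨m, hm⟩ := hG.even_dg y hy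
    omega
  by_cases hdom : ∃ i ∈ T, dg bnd A y ≤ 2 * adj bnd A i y
  · obtain ⟨i, hi, hle⟩ := hdom
    obtain ⟨e, he⟩ := Finset.card_pos.1 (show 0 < adj bnd A i y by omega)
    obtain ⟨he, hie, hye⟩ := Finset.mem_filter.1 he
    refine ⟨e, he, i, hi, eq_pair_of_mem (hG.card_two e he) hie hye (hT hi).1, ?_,
      Or.inl (by omega)⟩
    intro a ha hai
    have := h3 ha hi hai
    omega
  · push Not at hdom
    obtain ⟨e, he, hef⟩ := Finset.exists_mem_ne
      (show 1 < (A.filter fun e => y ∈ bnd e).card from hD) f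
    obtain ⟨he, hye⟩ := Finset.mem_filter.1 he
    obtain ⟨i, hi, be⟩ := hter e he hef hye
    by_cases hd' : 2 * adj bnd A i y' < dg bnd A y'
    · exact ⟨e, he, i, hi, be, fun a ha _ => hdom a ha, Or.inr hd'⟩
    -- `i` takes less than half of the edges at `y`, so there is an edge to another terminal.
    have hex : ∃ e' ∈ A.filter (fun e => y ∈ bnd e),
        e' ∉ insert f (A.filter fun e => i ∈ bnd e ∧ y ∈ bnd e) := by
      apply Finset.exists_mem_notMem_of_card_lt_card
      refine lt_of_le_of_lt (Finset.card_insert_le _ _) ?_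
      have := hdom i hi
      have hpos : 1 ≤ adj bnd A i y := adj_pos he (by simp [be]) hye
      change adj bnd A i y + 1 < dg bnd A y
      obtain ⟨m, hm⟩ := hG.even_dg y hy
      omega
    obtain ⟨e', he', hn⟩ := hex
    obtain ⟨he', hye'⟩ := Finset.mem_filter.1 he'
    rw [Finset.mem_insert, not_or, Finset.mem_filter] at hn
    obtain ⟨j, hj, be'⟩ := hter e' he' hn.1 hye'
    have hji : j ≠ i := by
      rintro rfl
      exact hn.2 ⟨he', by simp [be'], hye'⟩
    have := h3' hj hi hji
    exact ⟨e', he', j, hj, be', fun a ha _ => hdom a ha, Or.inr (by omega)⟩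

lemma eq_of_mem_of_inter_eq {T Z : Finset V} {a b : V} (hZ : Z ∩ T = {a}) (hb : b ∈ Z)
    (hbT : b ∈ T) : b = a := by
  have : b ∈ Z ∩ T := Finset.mem_inter.2 ⟨hb, hbT⟩
  simpa [hZ] using this

lemma mem_of_inter_eq {T Z : Finset V} {a : V} (hZ : Z ∩ T = {a}) : a ∈ Z ∧ a ∈ T :=
  Finset.mem_inter.1 (by simp [hZ])

/-- As long as there is an edge between nonterminals, some splitting off preserves `Good`. -/
lemma Good.exists_split_inner {bnd : E → Finset V} {A : Finset E} {T : Finset V} {k : ℕ}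
    (hG : Good bnd A T k) {f : E} (hf : f ∈ A) (hfT : Disjoint (bnd f) T) :
    ∃ e₁ ∈ A, ∃ e₂, e₁ ≠ e₂ ∧ Good (splitBnd bnd e₁ e₂) (A.erase e₁) T k := by
  obtain ⟨y', y, hyy, bf⟩ := Finset.card_eq_two.1 (hG.card_two f hf)
  have hy : y ∉ T := Finset.disjoint_left.1 hfT (by simp [bf])
  have hy' : y' ∉ T := Finset.disjoint_left.1 hfT (by simp [bf])
  obtain ⟨e, he, i, hi, be, h1, h2⟩ := hG.exists_inner_pair hf hyy.symm hy hy' bf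
  have hiy : i ≠ y := by rintro rfl; exact hy hi
  have hiy' : i ≠ y' := by rintro rfl; exact hy' hi
  -- `f` is the only edge from `y` or `y'` to a nonterminal.
  have huniq : ∀ g ∈ A, ∀ u ∈ bnd g, u ∈ bnd f → ∀ w ∈ bnd g, w ≠ u → w ∉ T → w ∈ bnd f := by
    intro g hg u hu huf w hw hwu hwT
    by_cases hgf : g = f
    · rwa [← hgf]
    · have huT := Finset.disjoint_left.1 hfT huf
      have bg := eq_pair_of_mem (hG.card_two g hg) hw hu hwu
      have := hG.inner_disj g hg f hf hgf (bg ▸ disjoint_pair hwT huT) hfT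
      exact absurd huf (Finset.disjoint_left.1 this hu)
  refine ⟨e, he, f, hG.split he hf hiy hiy' hyy.symm hi be bf ?_⟩
  intro Z a hZ ho1 ho2
  rw [be, odd_card_pair_inter hiy] at ho1
  rw [bf, odd_card_pair_inter hyy] at ho2
  simp only [Xor] at ho1 ho2
  by_cases hyZ : y ∈ Z
  · have hiZ : i ∉ Z := by tauto
    have hyZ' : y' ∉ Z := by tauto
    have hai : a ≠ i := by rintro rfl; exact hiZ (mem_of_inter_eq hZ).1
    refine ⟨y, hy, card_cut_flip_add_two_le bnd A T hG.card_two (hG.even_dg y hy) hZ hyZ ?_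
      (h1 a (mem_of_inter_eq hZ).2 hai)⟩
    intro g hg hyg w hw hwy hwT
    have := huniq g hg y hyg (by simp [bf]) w hw hwy hwT
    rw [bf] at this
    simp only [Finset.mem_insert, Finset.mem_singleton, hwy, or_false] at this
    rwa [this]
  · have hiZ : i ∈ Z := by tauto
    have hyZ' : y' ∈ Z := by tauto
    obtain rfl := eq_of_mem_of_inter_eq hZ hiZ hi
    rcases h2 with h2 | h2
    · refine ⟨y, hy, ?_⟩
      have hflip := card_cut_flip bnd A Z y
      have hge : adj bnd A i y + 1 ≤ ((cut bnd A Z).filter fun e => y ∈ bnd e).card := by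
        have hfn : f ∉ A.filter fun e => i ∈ bnd e ∧ y ∈ bnd e := by
          simp [bf, hiy, hiy']
        unfold adj
        rw [← Finset.card_insert_of_notMem hfn]
        apply Finset.card_le_card
        intro g hg
        rw [Finset.mem_insert, Finset.mem_filter] at hg
        rw [cut, Finset.mem_filter, Finset.mem_filter]
        rcases hg with rfl | ⟨hg, hig, hyg⟩
        · refine ⟨⟨hf, ?_⟩, by simp [bf]⟩
          rw [bf, odd_card_pair_inter hyy]
          simp [Xor, hyZ, hyZ']
        · refine ⟨⟨hg, ?_⟩, hyg⟩
          rw [eq_pair_of_mem (hG.card_two g hg) hig hyg hiy, odd_card_pair_inter hiy]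
          simp [Xor, hyZ, hiZ]
      obtain ⟨m, hm⟩ := hG.even_dg y hy
      omega
    · refine ⟨y', hy', card_cut_flip_add_two_le bnd A T hG.card_two (hG.even_dg y' hy') hZ hyZ' ?_
        h2⟩
      intro g hg hyg w hw hwy hwT
      have := huniq g hg y' hyg (by simp [bf]) w hw hwy hwT
      rw [bf] at this
      simp only [Finset.mem_insert, Finset.mem_singleton, hwy, false_or] at this
      rwa [this]

/-- If every edge has a terminal end and some nonterminal `y` is joined to two different
terminals, then some splitting off preserves `Good`: use the terminal with the largest number of
edges to `y`, and any other neighbour. -/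
lemma Good.exists_split_outer {bnd : E → Finset V} {A : Finset E} {T : Finset V} {k : ℕ}
    (hG : Good bnd A T k) (hAT : ∀ e ∈ A, ¬ Disjoint (bnd e) T) {y : V} (hy : y ∉ T)
    {x x' : V} (hx : x ∈ T) (hx' : x' ∈ T) (hxx : x ≠ x') (h : 1 ≤ adj bnd A x y)
    (h' : 1 ≤ adj bnd A x' y) :
    ∃ e₁ ∈ A, ∃ e₂, e₁ ≠ e₂ ∧ Good (splitBnd bnd e₁ e₂) (A.erase e₁) T k := by
  obtain ⟨j, hj, hmax⟩ := Finset.exists_max_image T (fun a => adj bnd A a y) ⟨x, hx⟩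
  have hi : ∃ i ∈ T, i ≠ j ∧ 1 ≤ adj bnd A i y := by
    by_cases hxj : x = j
    · exact ⟨x', hx', by rintro rfl; exact hxx hxj, h'⟩
    · exact ⟨x, hx, hxj, h⟩
  obtain ⟨i, hi, hij, hpi⟩ := hi
  have hT : ∀ {a}, a ∈ T → a ≠ y := fun {a} ha => by rintro rfl; exact hy ha
  have hpj : 1 ≤ adj bnd A j y := h.trans (hmax x hx)
  obtain ⟨e, he⟩ := Finset.card_pos.1 hpi
  obtain ⟨he, hie, hye⟩ := Finset.mem_filter.1 he
  obtain ⟨f, hf⟩ := Finset.card_pos.1 hpj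
  obtain ⟨hf, hjf, hyf⟩ := Finset.mem_filter.1 hf
  have be := eq_pair_of_mem (hG.card_two e he) hie hye (hT hi)
  have bf := eq_pair_of_mem (hG.card_two f hf) hjf hyf (hT hj)
  refine ⟨e, he, f, hG.split he hf (hT hi) hij (hT hj).symm hi be bf ?_⟩
  intro Z a hZ ho1 ho2
  rw [be, odd_card_pair_inter (hT hi)] at ho1
  rw [bf, odd_card_pair_inter (hT hj)] at ho2
  simp only [Xor] at ho1 ho2
  by_cases hyZ : y ∈ Z
  · have haZ := mem_of_inter_eq hZ
    have hai : a ≠ i := by rintro rfl; tauto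
    have haj : a ≠ j := by rintro rfl; tauto
    refine ⟨y, hy, card_cut_flip_add_two_le bnd A T hG.card_two (hG.even_dg y hy) hZ hyZ ?_ ?_⟩
    · intro g hg hyg w hw hwy hwT
      have bg := eq_pair_of_mem (hG.card_two g hg) hw hyg hwy
      exact absurd (bg ▸ disjoint_pair hwT hy) (hAT g hg)
    · have h3 := adj_three bnd A hG.card_two hai haj hij (hT haZ.2) (hT hi) (hT hj)
      have := hmax a haZ.2
      omega
  · have h1 := eq_of_mem_of_inter_eq hZ (show i ∈ Z by tauto) hi
    have h2 := eq_of_mem_of_inter_eq hZ (show j ∈ Z by tauto) hj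
    exact absurd (h1.trans h2.symm) hij

/-- If every edge has a terminal end and no nonterminal is joined to two terminals, then the edges
between terminals alone give every terminal degree at least `k`. -/
lemma Good.hasPacking_base {bnd : E → Finset V} {A : Finset E} {T : Finset V} {k : ℕ}
    (hG : Good bnd A T k) (hT4 : T.card = 4) (hAT : ∀ e ∈ A, ¬ Disjoint (bnd e) T)
    (hB : ∀ y ∉ T, ∀ x ∈ T, ∀ x' ∈ T, 1 ≤ adj bnd A x y → 1 ≤ adj bnd A x' y → x = x') :
    HasPacking bnd A T k := by
  refine hasPacking_mono (hasPacking_of_subset bnd (A.filter fun e => bnd e ⊆ T) T hT4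
    (fun e he => hG.card_two e (Finset.mem_filter.1 he).1)
    (fun e he => (Finset.mem_filter.1 he).2) k ?_) (Finset.filter_subset _ _)
  intro a ha
  -- The cut around `a` together with all its nonterminal neighbours.
  set Z : Finset V := insert a ((A.biUnion bnd).filter fun y => y ∉ T ∧ 1 ≤ adj bnd A a y) with hZd
  have hmem : ∀ v, v ∈ Z ↔ v = a ∨ (v ∈ A.biUnion bnd ∧ v ∉ T ∧ 1 ≤ adj bnd A a v) := by
    intro v; rw [hZd, Finset.mem_insert, Finset.mem_filter]
  have hZ : Z ∩ T = {a} := by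
    ext v
    rw [Finset.mem_inter, hmem, Finset.mem_singleton]
    constructor
    · tauto
    · rintro rfl; exact ⟨Or.inl rfl, ha⟩
  refine (hG.cut_ge Z a hZ).trans ?_
  unfold cut dg
  rw [Finset.filter_filter]
  apply Finset.card_le_card
  intro e he
  rw [Finset.mem_filter] at he ⊢
  obtain ⟨he, ho⟩ := he
  refine ⟨he, ?_⟩
  obtain ⟨x, hxe, hxT⟩ := Finset.not_disjoint_iff.1 (hAT e he)
  obtain ⟨w, hwx, be⟩ := exists_pair_of_mem (hG.card_two e he) hxe
  have hwe : w ∈ bnd e := by simp [be]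
  have hxw : 1 ≤ adj bnd A x w := adj_pos he hxe hwe
  rw [be, odd_card_pair_inter hwx] at ho
  have hxZ : x ∈ Z ↔ x = a := by rw [hmem]; tauto
  by_cases hwT : w ∈ T
  · have hwZ : w ∈ Z ↔ w = a := by rw [hmem]; tauto
    rw [hxZ, hwZ] at ho
    refine ⟨?_, ?_⟩
    · rw [be]
      intro v
      simp only [Finset.mem_insert, Finset.mem_singleton]
      rintro (rfl | rfl) <;> assumption
    · rw [be]
      simp only [Finset.mem_insert, Finset.mem_singleton]
      rcases ho with h | h
      · exact Or.inl h.1.symm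
      · exact Or.inr h.1.symm
  · exfalso
    have hwZ : w ∈ Z ↔ x = a := by
      rw [hmem]
      constructor
      · rintro (rfl | h)
        · exact absurd ha hwT
        · exact hB w hwT x hxT a ha hxw h.2.2
      · rintro rfl
        exact Or.inr ⟨Finset.mem_biUnion.2 ⟨e, he, hwe⟩, hwT, hxw⟩
    rw [hxZ, hwZ] at ho
    simp [Xor] at ho

/-- Induction on the number of edges, each splitting off removing one. -/
lemma Good.hasPacking {T : Finset V} {k : ℕ} (hT4 : T.card = 4) (N : ℕ) :
    ∀ (bnd : E → Finset V) (A : Finset E), A.card = N → Good bnd A T k →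
      HasPacking bnd A T k := by
  induction N with
  | zero =>
    intro bnd A hA hG
    rw [Finset.card_eq_zero] at hA
    subst hA
    exact hG.hasPacking_base hT4 (by simp) (by simp [adj])
  | succ N ih =>
    intro bnd A hA hG
    have step : (∃ e₁ ∈ A, ∃ e₂, e₁ ≠ e₂ ∧ Good (splitBnd bnd e₁ e₂) (A.erase e₁) T k) →
        HasPacking bnd A T k := by
      rintro ⟨e₁, h₁, e₂, hne, hG'⟩
      exact hasPacking_of_split h₁ hne
        (ih _ _ (by rw [Finset.card_erase_of_mem h₁, hA]; rfl) hG')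
    by_cases hAT : ∃ f ∈ A, Disjoint (bnd f) T
    · obtain ⟨f, hf, hfT⟩ := hAT
      exact step (hG.exists_split_inner hf hfT)
    · push Not at hAT
      by_contra hno
      refine hno (hG.hasPacking_base hT4 hAT ?_)
      intro y hy x hx x' hx' h h'
      by_contra hxx
      exact hno (step (hG.exists_split_outer hAT hy hx hx' hxx h h'))

/-! ### Back to the deletion hypothesis -/

/-- A chain none of whose edges crosses `Z` has an even number of boundary vertices in `Z`. -/
lemma not_odd_of_disjoint_cut [Fintype V] [Fintype E] (bnd : E → Finset V) (p : Finset E)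
    (Z : Finset V) (h : Disjoint p (cut bnd Finset.univ Z)) :
    ¬ Odd (Z ∩ chainBnd bnd p).card := by
  have h1 : Z ∩ chainBnd bnd p = Z.filter fun v => Odd (dg bnd p v) := by
    ext v; rw [Finset.mem_filter]; simp [chainBnd, dg]
  have h2 : ∑ v ∈ Z, dg bnd p v = ∑ e ∈ p, (bnd e ∩ Z).card := by
    have := Finset.sum_card_bipartiteAbove_eq_sum_card_bipartiteBelow
      (s := Z) (t := p) (fun v e => v ∈ bnd e)
    simp only [Finset.bipartiteAbove, Finset.bipartiteBelow] at this
    unfold dg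
    rw [this]
    apply Finset.sum_congr rfl
    intro e _
    congr 1
    ext v; simp [and_comm]
  rw [h1, ← Finset.odd_sum_iff_odd_card_odd, h2, Finset.odd_sum_iff_odd_card_odd]
  have : (p.filter fun e => Odd (bnd e ∩ Z).card) = ∅ := by
    rw [Finset.filter_eq_empty_iff]
    intro e he ho
    exact Finset.disjoint_left.1 h he (by simp [cut, ho])
  simp [this]

end

theorem stmt6 {V E : Type} [Fintype V] [Fintype E] [DecidableEq V] [DecidableEq E]
    (bnd : E → Finset V) (hbnd : ∀ e, (bnd e).card = 2)
    (k : ℕ) (hk : 1 ≤ k)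
    (v1 v2 v3 v4 : V) (hdist : ({v1, v2, v3, v4} : Finset V).card = 4)
    -- every edge of `G` has at least one boundary vertex among the four:
    (htouch : ∀ e : E, ∃ u ∈ ({v1, v2, v3, v4} : Finset V), u ∈ bnd e)
    -- after deleting any `k-1` or fewer edges there is still a suitable chain:
    (hdel : ∀ S : Finset E, S.card ≤ k - 1 →
      ∃ p : Finset E, Disjoint p S ∧ chainBnd bnd p = {v1, v2, v3, v4})
    -- `GN` : adjoin `n` new edges (indexed by `Fin n`) with boundaries `newbnd`:
    (n : ℕ) (newbnd : Fin n → Finset V)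
    -- each new edge joins an odd-degree vertex outside the four to a vertex which
    -- is one of the four or another odd-degree vertex outside the four:
    (hnew : ∀ i : Fin n, ∃ a b : V,
      (a ∉ ({v1, v2, v3, v4} : Finset V) ∧ Odd (vdeg bnd a)) ∧
      (b ∈ ({v1, v2, v3, v4} : Finset V) ∨
        (b ∉ ({v1, v2, v3, v4} : Finset V) ∧ Odd (vdeg bnd b))) ∧
      a ≠ b ∧ newbnd i = {a, b})
    -- each odd-degree vertex outside the four lies in the boundary of exactly one new edge:
    (hcover : ∀ y : V, y ∉ ({v1, v2, v3, v4} : Finset V) → Odd (vdeg bnd y) →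
      ∃! i : Fin n, y ∈ newbnd i) :
    ∃ p : Fin k → Finset (E ⊕ Fin n),
      (∀ i j, i ≠ j → Disjoint (p i) (p j)) ∧
      ∀ i, chainBnd (Sum.elim bnd newbnd) (p i) = {v1, v2, v3, v4} := by
  set T : Finset V := {v1, v2, v3, v4} with hTdef
  have hG : Good (Sum.elim bnd newbnd) (Finset.univ : Finset (E ⊕ Fin n)) T k := by
    refine ⟨?_, ?_, ?_, ?_⟩
    · rintro (e | i) -
      · exact hbnd e
      · obtain ⟨a, b, -, -, hab, hi⟩ := hnew i
        simp [hi, Finset.card_pair hab]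
    · intro y hy
      have hsum : dg (Sum.elim bnd newbnd) (Finset.univ : Finset (E ⊕ Fin n)) y
          = vdeg bnd y + (Finset.univ.filter fun i => y ∈ newbnd i).card := by
        unfold dg vdeg
        simp only [Finset.card_filter, Fintype.sum_sum_type, Sum.elim_inl, Sum.elim_inr]
        rfl
      rw [hsum]
      by_cases ho : Odd (vdeg bnd y)
      · obtain ⟨i, hi, hu⟩ := hcover y hy ho
        have : (Finset.univ.filter fun i => y ∈ newbnd i) = {i} := by
          ext j
          simp only [Finset.mem_filter, Finset.mem_univ, true_and, Finset.mem_singleton]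
          exact ⟨fun h => hu j h, fun h => h ▸ hi⟩
        rw [this, Finset.card_singleton]
        exact ho.add_odd odd_one
      · have : (Finset.univ.filter fun i => y ∈ newbnd i) = ∅ := by
          rw [Finset.filter_eq_empty_iff]
          intro i _ hyi
          obtain ⟨a, b, ha, hb, -, hi⟩ := hnew i
          rw [hi] at hyi
          simp only [Finset.mem_insert, Finset.mem_singleton] at hyi
          rcases hyi with rfl | rfl
          · exact ho ha.2
          · rcases hb with hb | hb
            · exact hy hb
            · exact ho hb.2
        rw [this, Finset.card_empty, add_zero]
        exact Nat.not_odd_iff_even.1 ho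
    · have hold : ∀ e : E, ¬ Disjoint (bnd e) T := fun e => by
        obtain ⟨u, hu, hue⟩ := htouch e
        exact Finset.not_disjoint_iff.2 ⟨u, hue, hu⟩
      rintro (e | i) - (f | j) - hne h1 h2
      · exact absurd h1 (hold e)
      · exact absurd h1 (hold e)
      · exact absurd h2 (hold f)
      · rw [Finset.disjoint_left]
        intro y hyi hyj
        simp only [Sum.elim_inr] at hyi hyj h1 h2
        have hyT : y ∉ T := Finset.disjoint_left.1 h1 hyi
        have hodd : Odd (vdeg bnd y) := by
          obtain ⟨a, b, ha, hb, -, hi⟩ := hnew i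
          rw [hi] at hyi
          simp only [Finset.mem_insert, Finset.mem_singleton] at hyi
          rcases hyi with rfl | rfl
          · exact ha.2
          · rcases hb with hb | hb
            · exact absurd hb hyT
            · exact hb.2
        exact hne (congrArg Sum.inr ((hcover y hyT hodd).unique hyi hyj))
    · intro Z a hZ
      have hG : k ≤ (cut bnd Finset.univ Z).card := by
        by_contra hlt
        obtain ⟨p, hp, hpT⟩ := hdel (cut bnd Finset.univ Z) (by omega)
        refine not_odd_of_disjoint_cut bnd p Z hp ?_
        rw [hpT, hZ, Finset.card_singleton]
        exact odd_one
      refine hG.trans ?_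
      rw [← Finset.card_map (Function.Embedding.inl : E ↪ E ⊕ Fin n)]
      apply Finset.card_le_card
      intro x
      rw [Finset.mem_map]
      rintro ⟨e, he, rfl⟩
      simpa [cut] using he
  obtain ⟨p, -, hd, hp⟩ := Good.hasPacking hdist _ _ _ rfl hG
  refine ⟨p, hd, fun i => ?_⟩
  ext v
  rw [← hp i v]
  simp [chainBnd, dg]
end

section
/- Let G be a finite multigraph, k a positive integer, and v₁, v₂ two distinct vertices of G. The following are equivalent: (a) after deleting any k−1 or fewer edges from G there still exists a chain of edges p with ∂(p) = v₁ + v₂; (b) there exist k chains of edges p₁,…,p_k in G, no two of which have any common nontrivial summands, satisfying ∂(p₁) = ⋯ = ∂(p_k) = v₁ + v₂. -/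
namespace ChainMenger

variable {V E : Type} [DecidableEq V]

/-- The coefficient at `v` of the `F₂`-boundary of the chain `p`, for a graph in which the edge `e`
has end points `s e` and `t e`. -/
def bd (s t : E → V) (p : Finset E) (v : V) : ZMod 2 :=
  ∑ e ∈ p, ((if s e = v then 1 else 0) + (if t e = v then 1 else 0))

/-- The edges of `F` with exactly one end point in `U`. -/
def cut (s t : E → V) (F : Finset E) (U : Finset V) : Finset E :=
  F.filter fun e => ¬ (s e ∈ U ↔ t e ∈ U)

/-- `p` is a chain from `A` to `B`: after contracting `A` and `B` to points `a` and `b`, its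
boundary is `a + b`. The condition at `b` is omitted, as it follows from the others. -/
def JoinChain (s t : E → V) (A B : Finset V) (p : Finset E) : Prop :=
  (∀ v, v ∉ A → v ∉ B → bd s t p v = 0) ∧ ∑ v ∈ A, bd s t p v = 1

variable {s t : E → V}

theorem mem_cut {F : Finset E} {U : Finset V} {e : E} :
    e ∈ cut s t F U ↔ e ∈ F ∧ ¬ (s e ∈ U ↔ t e ∈ U) := by
  simp [cut]

/-- The boundary of a chain, summed over `U`, counts the edges of the chain leaving `U` mod 2. -/
theorem sum_bd (p : Finset E) (U : Finset V) :
    ∑ v ∈ U, bd s t p v = ((cut s t p U).card : ZMod 2) := by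
  unfold bd cut
  rw [Finset.sum_comm, Finset.card_filter]
  push_cast
  refine Finset.sum_congr rfl fun e _ => ?_
  rw [Finset.sum_add_distrib, Finset.sum_ite_eq, Finset.sum_ite_eq]
  by_cases h1 : s e ∈ U <;> by_cases h2 : t e ∈ U <;> simp [h1, h2]
  decide

/-- The boundary coefficient at `v` depends only on the edges of the chain incident to `v`. -/
theorem bd_congr {p q : Finset E} {v : V}
    (h : ∀ e, s e = v ∨ t e = v → (e ∈ p ↔ e ∈ q)) : bd s t p v = bd s t q v := by
  classical
  have key : ∀ r : Finset E, bd s t r v = bd s t (r.filter fun e => s e = v ∨ t e = v) v := by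
    intro r
    unfold bd
    symm
    apply Finset.sum_subset (Finset.filter_subset _ _)
    intro e he hne
    simp only [Finset.mem_filter, not_and, not_or] at hne
    obtain ⟨h1, h2⟩ := hne he
    simp [h1, h2]
  rw [key p, key q]
  congr 1
  ext e
  simp only [Finset.mem_filter]
  have := h e
  tauto

/-- A chain from `A` to `B` meets every cut separating `A` from `B`. -/
theorem JoinChain.cut_nonempty {A B U : Finset V} {p : Finset E} (hp : JoinChain s t A B p)
    (hA : A ⊆ U) (hB : Disjoint U B) : (cut s t p U).Nonempty := by
  by_contra hne
  rw [Finset.not_nonempty_iff_eq_empty] at hne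
  have h1 := sum_bd (s := s) (t := t) p U
  rw [hne, ← Finset.sum_subset hA, hp.2] at h1
  · simp at h1
  · intro v hv hvA
    exact hp.1 v hvA (Finset.disjoint_left.mp hB hv)

/-- `k` pairwise disjoint sets that all meet a `k`-element set `C` meet it in one element each. -/
theorem exists_transversal [DecidableEq E] {k : ℕ} {p : Fin k → Finset E} {C : Finset E}
    (hd : ∀ i j, i ≠ j → Disjoint (p i) (p j)) (hC : C.card = k)
    (hne : ∀ i, ∃ e ∈ C, e ∈ p i) :
    ∃ σ : Fin k ≃ C, ∀ i, ∀ e ∈ C, e ∈ p i ↔ e = (σ i : E) := by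
  choose c hcC hcp using hne
  have uniq : ∀ e i j, e ∈ p i → e ∈ p j → i = j := fun e i j hi hj => by
    by_contra hij
    exact Finset.disjoint_left.mp (hd i j hij) hi hj
  let c' : Fin k → C := fun i => ⟨c i, hcC i⟩
  have hinj : Function.Injective c' := by
    intro i j hij
    have h : c i = c j := congrArg Subtype.val hij
    exact uniq (c i) i j (hcp i) (h ▸ hcp j)
  have hbij : Function.Bijective c' := by
    rw [Fintype.bijective_iff_injective_and_card]
    exact ⟨hinj, by simp [hC]⟩
  refine ⟨Equiv.ofBijective c' hbij, fun i e he => ?_⟩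
  rw [Equiv.ofBijective_apply]
  constructor
  · intro hei
    obtain ⟨j, hj⟩ := hbij.2 ⟨e, he⟩
    have hj' : c j = e := congrArg Subtype.val hj
    have : i = j := uniq e i j hei (hj' ▸ hcp j)
    rw [this]
    exact hj'.symm
  · rintro rfl
    exact hcp i

/-- The part of `p` not inside `U` together with the part of `q` not outside `U`. -/
def glue [DecidableEq E] (s t : E → V) (U : Finset V) (p q : Finset E) : Finset E :=
  p.filter (fun e => ¬ (s e ∈ U ∧ t e ∈ U)) ∪ q.filter (fun e => s e ∈ U ∨ t e ∈ U)

theorem mem_glue [DecidableEq E] {U : Finset V} {p q : Finset E} {e : E} :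
    e ∈ glue s t U p q ↔
      (e ∈ p ∧ ¬ (s e ∈ U ∧ t e ∈ U)) ∨ (e ∈ q ∧ (s e ∈ U ∨ t e ∈ U)) := by
  simp [glue]

/-- A chain from `U` to `B` and a chain from `A` to the complement of `U` that contain the same
edges leaving `U` glue to a chain from `A` to `B`. -/
theorem joinChain_glue [Fintype V] [DecidableEq E] {A B U : Finset V} {p q : Finset E}
    (hA : A ⊆ U) (hp : JoinChain s t U B p) (hq : JoinChain s t A Uᶜ q)
    (h : ∀ e, ¬ (s e ∈ U ↔ t e ∈ U) → (e ∈ p ↔ e ∈ q)) :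
    JoinChain s t A B (glue s t U p q) := by
  have hin : ∀ v ∈ U, bd s t (glue s t U p q) v = bd s t q v := by
    intro v hv
    apply bd_congr
    intro e he
    have := h e
    rw [mem_glue]
    rcases he with rfl | rfl <;> tauto
  have hout : ∀ v, v ∉ U → bd s t (glue s t U p q) v = bd s t p v := by
    intro v hv
    apply bd_congr
    intro e he
    have := h e
    rw [mem_glue]
    rcases he with rfl | rfl <;> tauto
  constructor
  · intro v hvA hvB
    by_cases hv : v ∈ U
    · rw [hin v hv]
      exact hq.1 v hvA (by simpa using hv)
    · rw [hout v hv]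
      exact hp.1 v hv hvB
  · rw [Finset.sum_congr rfl fun v hv => hin v (hA hv)]
    exact hq.2

/-- If all cuts separating `A` from `B` are nonempty and every edge of `F` leaves `A` or the
complement of `B`, then `F` contains a path of length one or two from `A` to `B`, and such a path
meets each of these cuts at most once. -/
theorem exists_short_path [Fintype V] [DecidableEq E] {A B : Finset V} {F : Finset E}
    (hAB : Disjoint A B)
    (hcut : ∀ U, A ⊆ U → Disjoint U B → (cut s t F U).Nonempty)
    (hF : ∀ e ∈ F, e ∈ cut s t F A ∨ e ∈ cut s t F Bᶜ) :
    ∃ r ⊆ F, r.Nonempty ∧ JoinChain s t A B r ∧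
      ∀ U, A ⊆ U → Disjoint U B → (cut s t r U).card ≤ 1 := by
  have hAB' : ∀ v, v ∈ A → v ∉ B := fun v hv => Finset.disjoint_left.mp hAB hv
  -- `A` together with its neighbours outside `B`; an edge leaving this set ends a short path.
  let U : Finset V := Finset.univ.filter fun w => w ∈ A ∨ (w ∉ B ∧ ∃ f ∈ F,
    (s f ∈ A ∧ t f = w) ∨ (t f ∈ A ∧ s f = w))
  have memU : ∀ w, w ∈ U ↔ w ∈ A ∨ (w ∉ B ∧ ∃ f ∈ F,
    (s f ∈ A ∧ t f = w) ∨ (t f ∈ A ∧ s f = w)) := fun w => by simp [U]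
  obtain ⟨e, he⟩ := hcut U (fun w hw => (memU w).2 (Or.inl hw))
    (Finset.disjoint_left.mpr fun w hw => by
      rcases (memU w).1 hw with h | h
      · exact hAB' w h
      · exact h.1)
  obtain ⟨heF, he⟩ := mem_cut.1 he
  have heAB := hF e heF
  simp only [mem_cut, Finset.mem_compl] at heAB
  by_cases hdir : (s e ∈ A ∧ t e ∈ B) ∨ (t e ∈ A ∧ s e ∈ B)
  · refine ⟨{e}, by simpa using heF, by simp, ⟨?_, ?_⟩, ?_⟩
    · intro v hvA hvB
      have h1 : s e ≠ v := by rintro rfl; tauto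
      have h2 : t e ≠ v := by rintro rfl; tauto
      simp [bd, h1, h2]
    · rw [sum_bd]
      have : cut s t {e} A = {e} := by
        ext x
        simp only [mem_cut, Finset.mem_singleton]
        have h1 := hAB' (s e)
        have h2 := hAB' (t e)
        constructor
        · tauto
        · rintro rfl; tauto
      simp [this]
    · intro W _ _
      exact (Finset.card_le_card (Finset.filter_subset _ _)).trans (by simp)
  · -- the edge `e` joins `B` to a vertex `x` outside `A ∪ B`, and `f` joins `x` to `A`
    have hx : ∃ x y, ((s e = x ∧ t e = y) ∨ (s e = y ∧ t e = x)) ∧ x ∉ A ∧ x ∉ B ∧ y ∈ B ∧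
        ∃ f ∈ F, (s f ∈ A ∧ t f = x) ∨ (t f ∈ A ∧ s f = x) := by
      obtain ⟨x, y, hxy, hxU, hyU⟩ :
          ∃ x y, ((s e = x ∧ t e = y) ∨ (s e = y ∧ t e = x)) ∧ x ∈ U ∧ y ∉ U := by
        by_cases hsU : s e ∈ U
        · exact ⟨s e, t e, Or.inl ⟨rfl, rfl⟩, hsU, fun h => he ⟨fun _ => h, fun _ => hsU⟩⟩
        · refine ⟨t e, s e, Or.inr ⟨rfl, rfl⟩, ?_, hsU⟩
          by_contra h
          exact he ⟨fun h' => absurd h' hsU, fun h' => absurd h' h⟩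
      have hyA : y ∉ A := fun h => hyU ((memU y).2 (Or.inl h))
      have hxA : x ∉ A := by
        intro hxA
        have hyB : y ∈ B := by
          by_contra hyB
          apply hyU
          rw [memU]
          refine Or.inr ⟨hyB, e, heF, ?_⟩
          rcases hxy with ⟨rfl, rfl⟩ | ⟨rfl, rfl⟩
          · exact Or.inl ⟨hxA, rfl⟩
          · exact Or.inr ⟨hxA, rfl⟩
        rcases hxy with ⟨rfl, rfl⟩ | ⟨rfl, rfl⟩
        · exact hdir (Or.inl ⟨hxA, hyB⟩)
        · exact hdir (Or.inr ⟨hxA, hyB⟩)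
      obtain ⟨hxB, hf⟩ := ((memU x).1 hxU).resolve_left hxA
      refine ⟨x, y, hxy, hxA, hxB, ?_, hf⟩
      clear hf memU hdir
      rcases hxy with ⟨rfl, rfl⟩ | ⟨rfl, rfl⟩ <;> simpa [hxA, hyA, hxB, heF] using heAB
    obtain ⟨x, y, hxy, hxA, hxB, hyB, f, hfF, hf⟩ := hx
    obtain ⟨z, hzA, hf⟩ : ∃ z ∈ A, (s f = z ∧ t f = x) ∨ (s f = x ∧ t f = z) := by
      rcases hf with ⟨h1, h2⟩ | ⟨h1, h2⟩
      · exact ⟨_, h1, Or.inl ⟨rfl, h2⟩⟩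
      · exact ⟨_, h1, Or.inr ⟨h2, rfl⟩⟩
    have hzB := hAB' z hzA
    have hyA : y ∉ A := fun h => hAB' y h hyB
    have hef : f ≠ e := by
      rintro rfl
      rcases hxy with ⟨h1, h2⟩ | ⟨h1, h2⟩ <;> rcases hf with ⟨h3, h4⟩ | ⟨h3, h4⟩ <;> simp_all
    refine ⟨{f, e}, ?_, by simp, ⟨?_, ?_⟩, ?_⟩
    · intro a ha
      rcases Finset.mem_insert.1 ha with rfl | ha
      · exact hfF
      · rwa [Finset.mem_singleton.1 ha]
    · intro v hvA hvB
      have hzv : z ≠ v := by rintro rfl; exact hvA hzA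
      have hyv : y ≠ v := by rintro rfl; exact hvB hyB
      rw [bd, Finset.sum_pair hef]
      rcases hxy with ⟨h1, h2⟩ | ⟨h1, h2⟩ <;> rcases hf with ⟨h3, h4⟩ | ⟨h3, h4⟩ <;>
        rw [h1, h2, h3, h4] <;> simp only [hzv, hyv, if_false] <;> split_ifs <;> decide
    · rw [sum_bd]
      have : cut s t {f, e} A = {f} := by
        ext a
        simp only [mem_cut, Finset.mem_singleton, Finset.mem_insert]
        constructor
        · rintro ⟨rfl | rfl, h⟩
          · rfl
          · rcases hxy with ⟨h1, h2⟩ | ⟨h1, h2⟩ <;> simp_all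
        · rintro rfl
          rcases hf with ⟨h3, h4⟩ | ⟨h3, h4⟩ <;> simp_all
      simp [this]
    · intro W hAW hWB
      rw [Finset.card_le_one]
      have hzW := hAW hzA
      have hyW : y ∉ W := fun h => Finset.disjoint_left.mp hWB h hyB
      intro a ha b hb
      simp only [mem_cut, Finset.mem_singleton, Finset.mem_insert] at ha hb
      have key : ¬ (¬ (s f ∈ W ↔ t f ∈ W) ∧ ¬ (s e ∈ W ↔ t e ∈ W)) := by
        rcases hxy with ⟨h1, h2⟩ | ⟨h1, h2⟩ <;> rcases hf with ⟨h3, h4⟩ | ⟨h3, h4⟩ <;>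
          rw [h1, h2, h3, h4] <;> by_cases hxW : x ∈ W <;> simp [hzW, hyW, hxW]
      rcases ha with ⟨rfl | rfl, ha⟩ <;> rcases hb with ⟨rfl | rfl, hb⟩
      · rfl
      · exact absurd ⟨ha, hb⟩ key
      · exact absurd ⟨hb, ha⟩ key
      · rfl

/-- Menger's theorem for chains between disjoint vertex sets: if all cuts separating `A` from `B`
have at least `k` edges in `F`, there are `k` pairwise disjoint chains from `A` to `B` in `F`. The
number `n` bounds the quantity on which the induction runs. -/
theorem exists_disjoint_chains [Fintype V] [DecidableEq E] (n : ℕ) :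
    ∀ (k : ℕ) (F : Finset E) (A B : Finset V), F.card + ((A ∪ B)ᶜ).card < n → Disjoint A B →
      (∀ U, A ⊆ U → Disjoint U B → k ≤ (cut s t F U).card) →
      ∃ p : Fin k → Finset E, (∀ i, p i ⊆ F) ∧ (∀ i j, i ≠ j → Disjoint (p i) (p j)) ∧
        ∀ i, JoinChain s t A B (p i) := by
  induction n with
  | zero => intro k F A B h; omega
  | succ n ih =>
    intro k F A B hn hAB hcut
    by_cases hdel : ∃ e ∈ F, ∀ U, A ⊆ U → Disjoint U B → k ≤ (cut s t (F.erase e) U).card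
    · obtain ⟨e, he, hdel⟩ := hdel
      have hc := Finset.card_erase_lt_of_mem he
      obtain ⟨p, hpF, hpd, hpc⟩ := ih k (F.erase e) A B (by omega) hAB hdel
      exact ⟨p, fun i => (hpF i).trans (Finset.erase_subset _ _), hpd, hpc⟩
    by_cases htight : ∃ U, A ⊆ U ∧ Disjoint U B ∧ (cut s t F U).card = k ∧ U ≠ A ∧ U ≠ Bᶜ
    · obtain ⟨U, hAU, hUB, hUk, hUA, hUB'⟩ := htight
      have hm1 : ((U ∪ B)ᶜ).card < ((A ∪ B)ᶜ).card := by
        apply Finset.card_lt_card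
        obtain ⟨w, hwU, hwA⟩ := Finset.exists_of_ssubset (hAU.ssubset_of_ne (Ne.symm hUA))
        have hwB := Finset.disjoint_left.mp hUB hwU
        rw [Finset.ssubset_iff_of_subset]
        · exact ⟨w, by simp [hwA, hwB], by simp [hwU]⟩
        · exact Finset.compl_subset_compl.2 (Finset.union_subset_union_left hAU)
      have hUBc : U ⊆ Bᶜ := fun w hw => by simpa using Finset.disjoint_left.mp hUB hw
      have hm2 : ((A ∪ Uᶜ)ᶜ).card < ((A ∪ B)ᶜ).card := by
        apply Finset.card_lt_card
        obtain ⟨w, hwB, hwU⟩ := Finset.exists_of_ssubset (hUBc.ssubset_of_ne hUB')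
        have hwA : w ∉ A := fun h => hwU (hAU h)
        rw [Finset.ssubset_iff_of_subset]
        · exact ⟨w, by simpa [hwA] using hwB, by simp [hwU]⟩
        · apply Finset.compl_subset_compl.2
          apply Finset.union_subset_union_right
          intro b hb
          rw [Finset.mem_compl]
          exact Finset.disjoint_right.mp hUB hb
      obtain ⟨p, hpF, hpd, hpc⟩ := ih k F U B (by omega) hUB
        fun W hW hWB => hcut W (hAU.trans hW) hWB
      obtain ⟨q, hqF, hqd, hqc⟩ := ih k F A Uᶜ (by omega)
        (Finset.disjoint_left.mpr fun w hw => by simpa using hAU hw)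
        fun W hW hWU => hcut W hW (Finset.disjoint_left.mpr fun w hw =>
          Finset.disjoint_left.mp hUB (by simpa using Finset.disjoint_left.mp hWU hw))
      obtain ⟨σ, hσ⟩ := exists_transversal (C := cut s t F U) hpd hUk fun i => by
        obtain ⟨e, he⟩ := (hpc i).cut_nonempty subset_rfl hUB
        obtain ⟨h1, h2⟩ := mem_cut.1 he
        exact ⟨e, mem_cut.2 ⟨hpF i h1, h2⟩, h1⟩
      obtain ⟨τ, hτ⟩ := exists_transversal (C := cut s t F U) hqd hUk fun i => by
        obtain ⟨e, he⟩ := (hqc i).cut_nonempty hAU disjoint_compl_right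
        obtain ⟨h1, h2⟩ := mem_cut.1 he
        exact ⟨e, mem_cut.2 ⟨hqF i h1, h2⟩, h1⟩
      -- `ρ` matches the chains that use the same edge of the tight cut
      let ρ : Fin k ≃ Fin k := σ.trans τ.symm
      have hρ : ∀ i e, ¬ (s e ∈ U ↔ t e ∈ U) → (e ∈ p i ↔ e ∈ q (ρ i)) := by
        intro i e he
        by_cases heF : e ∈ F
        · rw [hσ i e (mem_cut.2 ⟨heF, he⟩), hτ (ρ i) e (mem_cut.2 ⟨heF, he⟩)]
          simp [ρ]
        · exact ⟨fun h => absurd (hpF _ h) heF, fun h => absurd (hqF _ h) heF⟩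
      refine ⟨fun i => glue s t U (p i) (q (ρ i)), fun i e he => ?_, fun i j hij => ?_,
        fun i => joinChain_glue hAU (hpc i) (hqc (ρ i)) (hρ i)⟩
      · rcases mem_glue.1 he with h | h
        · exact hpF i h.1
        · exact hqF _ h.1
      · rw [Finset.disjoint_left]
        intro e h1 h2
        rw [mem_glue] at h1 h2
        have a1 := hρ i e
        have a2 := hρ j e
        have a3 : e ∈ p i → e ∉ p j := fun h => Finset.disjoint_left.mp (hpd i j hij) h
        have a4 : e ∈ q (ρ i) → e ∉ q (ρ j) := fun h =>
          Finset.disjoint_left.mp (hqd _ _ (ρ.injective.ne hij)) h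
        tauto
    cases k with
    | zero => exact ⟨fun i => i.elim0, fun i => i.elim0, fun i => i.elim0, fun i => i.elim0⟩
    | succ k =>
      have hF : ∀ e ∈ F, e ∈ cut s t F A ∨ e ∈ cut s t F Bᶜ := by
        intro e he
        push Not at hdel htight
        obtain ⟨U, hAU, hUB, hlt⟩ := hdel e he
        have hge := hcut U hAU hUB
        have herase : cut s t (F.erase e) U = (cut s t F U).erase e := by
          simp [cut, Finset.filter_erase]
        rw [herase] at hlt
        have heU : e ∈ cut s t F U := by
          by_contra hcon
          rw [Finset.erase_eq_of_notMem hcon] at hlt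
          omega
        rw [Finset.card_erase_of_mem heU] at hlt
        have hU := htight U hAU hUB (by omega)
        by_cases h : U = A
        · left; rwa [← h]
        · right; rwa [← hU h]
      obtain ⟨r, hrF, hrne, hrc, hr1⟩ := exists_short_path hAB
        (fun U hU hUB => Finset.card_pos.1 (by have := hcut U hU hUB; omega)) hF
      have hcard : (F \ r).card < F.card :=
        Finset.card_lt_card (Finset.sdiff_ssubset hrF hrne)
      obtain ⟨p, hpF, hpd, hpc⟩ := ih k (F \ r) A B (by omega) hAB fun U hU hUB => by
        have h1 := hr1 U hU hUB
        have h2 := hcut U hU hUB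
        have h3 : cut s t F U ⊆ cut s t (F \ r) U ∪ cut s t r U := by
          intro e he
          simp only [mem_cut, Finset.mem_union, Finset.mem_sdiff] at he ⊢
          tauto
        have h4 := (Finset.card_le_card h3).trans (Finset.card_union_le _ _)
        omega
      have hrp : ∀ i, Disjoint r (p i) := fun i =>
        Finset.disjoint_of_subset_right (hpF i) Finset.disjoint_sdiff
      refine ⟨Fin.cons r p, fun i => ?_, fun i j hij => ?_, fun i => ?_⟩
      · refine Fin.cases ?_ (fun i => ?_) i
        · exact hrF
        · exact (hpF i).trans Finset.sdiff_subset
      · induction i using Fin.cases with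
        | zero =>
          induction j using Fin.cases with
          | zero => exact absurd rfl hij
          | succ j => exact hrp j
        | succ i =>
          induction j using Fin.cases with
          | zero => exact (hrp i).symm
          | succ j => exact hpd i j fun h => hij (h ▸ rfl)
      · refine Fin.cases ?_ (fun i => ?_) i
        · exact hrc
        · exact hpc i

/-- The boundary used in the statement is the support of `bd`. -/
theorem mem_chainBnd_iff [Fintype V] [DecidableEq E] {bnd : E → Finset V}
    (hne : ∀ e, s e ≠ t e) (hst : ∀ e, bnd e = {s e, t e}) (p : Finset E) (v : V) :
    v ∈ chainBnd bnd p ↔ bd s t p v = 1 := by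
  have h : bd s t p v = ((p.filter fun e => v ∈ bnd e).card : ZMod 2) := by
    rw [Finset.card_filter, bd]
    push_cast
    refine Finset.sum_congr rfl fun e _ => ?_
    have := hne e
    by_cases h1 : s e = v <;> by_cases h2 : t e = v
    · exact absurd (h1.trans h2.symm) this
    all_goals simp [hst, h1, h2, eq_comm (a := v)]
  rw [h, ZMod.natCast_eq_one_iff_odd]
  simp [chainBnd]

theorem chainBnd_eq_pair_iff [Fintype V] [DecidableEq E] {bnd : E → Finset V}
    (hne : ∀ e, s e ≠ t e) (hst : ∀ e, bnd e = {s e, t e}) (p : Finset E) {v1 v2 : V}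
    (hv : v1 ≠ v2) :
    chainBnd bnd p = {v1, v2} ↔ JoinChain s t {v1} {v2} p := by
  have hz : ∀ x : ZMod 2, x ≠ 1 ↔ x = 0 := by decide
  constructor
  · intro h
    have h' : ∀ v, bd s t p v = 1 ↔ v = v1 ∨ v = v2 := fun v => by
      rw [← mem_chainBnd_iff hne hst, h]; simp
    refine ⟨fun v h1 h2 => ?_, ?_⟩
    · rw [← hz, Ne, h']
      simpa using ⟨by simpa using h1, by simpa using h2⟩
    · simpa using (h' v1).2 (Or.inl rfl)
  · rintro ⟨h0, h1⟩
    rw [Finset.sum_singleton] at h1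
    -- the boundary coefficients of a chain add up to zero, which determines the one at `v2`
    have htot := sum_bd (s := s) (t := t) p Finset.univ
    have hemp : cut s t p Finset.univ = ∅ := by simp [cut]
    have hsub : ∑ v ∈ ({v1, v2} : Finset V), bd s t p v = ∑ v, bd s t p v := by
      apply Finset.sum_subset (Finset.subset_univ _)
      intro v _ hv'
      simp only [Finset.mem_insert, Finset.mem_singleton, not_or] at hv'
      exact h0 v (by simpa using hv'.1) (by simpa using hv'.2)
    rw [← hsub, Finset.sum_pair hv, hemp, h1] at htot
    have h2 : bd s t p v2 = 1 := by
      have : ∀ x : ZMod 2, 1 + x = ((0 : ℕ) : ZMod 2) → x = 1 := by decide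
      exact this _ (by simpa using htot)
    ext v
    rw [mem_chainBnd_iff hne hst]
    by_cases e1 : v = v1
    · simp [e1, h1]
    by_cases e2 : v = v2
    · simp [e2, h2]
    rw [h0 v (by simpa using e1) (by simpa using e2)]
    simp [e1, e2]

end ChainMenger

open ChainMenger in
theorem stmt7 {V E : Type} [Fintype V] [Fintype E] [DecidableEq V] [DecidableEq E]
    (bnd : E → Finset V) (hbnd : ∀ e, (bnd e).card = 2)
    (k : ℕ) (hk : 1 ≤ k) (v1 v2 : V) (hv : v1 ≠ v2) :
    (∀ S : Finset E, S.card ≤ k - 1 →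
      ∃ p : Finset E, Disjoint p S ∧ chainBnd bnd p = {v1, v2}) ↔
    (∃ p : Fin k → Finset E,
      (∀ i j, i ≠ j → Disjoint (p i) (p j)) ∧
      ∀ i, chainBnd bnd (p i) = {v1, v2}) := by
  choose s t hne hst using fun e => Finset.card_eq_two.1 (hbnd e)
  simp only [chainBnd_eq_pair_iff hne hst _ hv]
  constructor
  · intro h
    obtain ⟨p, -, hd, hc⟩ := exists_disjoint_chains (s := s) (t := t) _ k Finset.univ {v1} {v2}
      (Nat.lt_succ_self _) (by simpa using hv) (fun U hU hUB => by
        by_contra hlt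
        obtain ⟨p, hpd, hpc⟩ := h (cut s t Finset.univ U) (by omega)
        obtain ⟨e, he⟩ := hpc.cut_nonempty hU hUB
        obtain ⟨h1, h2⟩ := mem_cut.1 he
        exact Finset.disjoint_left.mp hpd h1 (mem_cut.2 ⟨Finset.mem_univ _, h2⟩))
    exact ⟨p, hd, hc⟩
  · rintro ⟨p, hd, hc⟩ S hS
    by_contra hcon
    have hmeet : ∀ i, ∃ e, e ∈ p i ∧ e ∈ S := by
      intro i
      by_contra hi
      exact hcon ⟨p i, Finset.disjoint_left.mpr fun e h1 h2 => hi ⟨e, h1, h2⟩, hc i⟩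
    choose c hcp hcS using hmeet
    have hinj : Function.Injective c := by
      intro i j hij
      by_contra hne'
      exact Finset.disjoint_left.mp (hd i j hne') (hcp i) (hij ▸ hcp j)
    have hle := Finset.card_le_card_of_injOn (s := Finset.univ) (t := S) c
      (fun i _ => hcS i) hinj.injOn
    rw [Finset.card_univ, Fintype.card_fin] at hle
    omega
end

section
/- Let k be a positive integer and let G be a finite multigraph whose vertex set V is the disjoint union of a four-element set {v₁,v₂,v₃,v₄} and a (possibly empty) set Y. Let y₁,…,y_m be exactly the vertices of Y whose degree in G is odd. Suppose that after deleting any k−1 or fewer edges from G there still exists a chain of edges p with ∂(p) = v₁ + v₂ + v₃ + v₄. Let GN be any multigraph obtained from G by adjoining new edges ε₁,…,ε_n such that the boundary of each ε_i is a two-element set consisting of one vertex from {y₁,…,y_m} and one vertex from {v₁,v₂,v₃,v₄,y₁,…,y_m}, and such that each of y₁,…,y_m lies in the boundary of exactly one of the new edges ε₁,…,ε_n. Then in GN there exist k chains of edges p₁,…,p_k, no two of which have any common nontrivial summands, satisfying ∂(p₁) = ⋯ = ∂(p_k) = v₁ + v₂ + v₃ + v₄ in GN. -/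
section PackingProof

open Finset

set_option linter.unusedSectionVars false

/-! ### Cuts and splitting off -/

variable {V E ι : Type} [Fintype E] [DecidableEq V] [DecidableEq E] [DecidableEq ι]

/-- Contribution (`0` or `1`) of an edge with ends `a.1`, `a.2` to the cut of `X`; loops
`a.1 = a.2` contribute `0`. -/
def edgeCut (a : V × V) (X : Finset V) : ℤ := if (a.1 ∈ X ↔ a.2 ∈ X) then 0 else 1

/-- Number of edges leaving the vertex set `X`, where `f` lists the two ends of each edge. -/
def cutSize (f : E → V × V) (X : Finset V) : ℤ := ∑ e, edgeCut (f e) X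

/-- `X` contains the terminal `v i` and no other terminal. -/
def Isolates (v : ι → V) (i : ι) (X : Finset V) : Prop := ∀ j, v j ∈ X ↔ j = i

/-- The edge `e` joins `y` and `w`, listed in either order. -/
def Joins (f : E → V × V) (e : E) (y w : V) : Prop := f e = (y, w) ∨ f e = (w, y)

/-- Splitting off at `y`: the edge `e₁ = yu` becomes `uw`, while `e₂ = yw` becomes a loop at `y`.
The edge type does not change, deleted edges being represented by loops. -/
def splitOff (f : E → V × V) (e₁ e₂ : E) (y u w : V) : E → V × V :=
  Function.update (Function.update f e₁ (u, w)) e₂ (y, y)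

/-- The invariant kept by splitting off: the cut of each set isolating `v i` has at least `r i`
edges and the parity of `r i`, and the non-terminals have even degree. -/
def Admissible (f : E → V × V) (v : ι → V) (r : ι → ℤ) : Prop :=
  (∀ i X, Isolates v i X → r i ≤ cutSize f X ∧ Even (cutSize f X - r i)) ∧
  ∀ y, (∀ i, v i ≠ y) → Even (cutSize f {y})

lemma cutSize_inter_union (f : E → V × V) (X Y : Finset V) :
    cutSize f (X ∩ Y) + cutSize f (X ∪ Y) ≤ cutSize f X + cutSize f Y := by
  simp only [cutSize, ← sum_add_distrib]
  refine sum_le_sum fun e _ => ?_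
  simp only [edgeCut, mem_inter, mem_union]
  by_cases h1 : (f e).1 ∈ X <;> by_cases h2 : (f e).2 ∈ X <;> by_cases h3 : (f e).1 ∈ Y <;>
    by_cases h4 : (f e).2 ∈ Y <;> simp [h1, h2, h3, h4]

/-- Uncrossing by differences; strict because the edge `e` runs from `X ∩ Y` to the outside of
`X ∪ Y`. -/
lemma cutSize_sdiff_lt (f : E → V × V) (X Y : Finset V) (e : E) (y u : V) (he : Joins f e y u)
    (hyX : y ∈ X) (hyY : y ∈ Y) (huX : u ∉ X) (huY : u ∉ Y) :
    cutSize f (X \ Y) + cutSize f (Y \ X) < cutSize f X + cutSize f Y := by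
  simp only [cutSize, ← sum_add_distrib]
  refine sum_lt_sum (fun e _ => ?_) ⟨e, mem_univ _, ?_⟩
  · simp only [edgeCut, mem_sdiff]
    by_cases h1 : (f e).1 ∈ X <;> by_cases h2 : (f e).2 ∈ X <;> by_cases h3 : (f e).1 ∈ Y <;>
      by_cases h4 : (f e).2 ∈ Y <;> simp [h1, h2, h3, h4]
  · rcases he with h | h <;> simp [edgeCut, h, hyX, hyY, huX, huY]

lemma cutSize_splitOff (f : E → V × V) (e₁ e₂ : E) (y u w : V) (hne : e₁ ≠ e₂)
    (h1 : Joins f e₁ y u) (h2 : Joins f e₂ y w) (X : Finset V) :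
    cutSize f X - cutSize (splitOff f e₁ e₂ y u w) X
      = if (u ∈ X ↔ w ∈ X) ∧ ¬ (u ∈ X ↔ y ∈ X) then 2 else 0 := by
  simp only [cutSize, ← sum_sub_distrib]
  rw [Fintype.sum_eq_add e₁ e₂ hne]
  · simp only [splitOff, Function.update_self, Function.update_of_ne hne]
    rcases h1 with h1 | h1 <;> rcases h2 with h2 | h2 <;>
    by_cases a1 : y ∈ X <;> by_cases a2 : u ∈ X <;> by_cases a3 : w ∈ X <;>
    simp [edgeCut, h1, h2, a1, a2, a3]
  · rintro e ⟨a, b⟩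
    simp [splitOff, Function.update_of_ne a, Function.update_of_ne b]

lemma joins_or (f : E → V × V) (e : E) (y : V) :
    (∃ w, w ≠ y ∧ Joins f e y w) ∨
      ((f e).1 ≠ y ∧ (f e).2 ≠ y) ∨ ((f e).1 = y ∧ (f e).2 = y) := by
  unfold Joins
  by_cases h1 : (f e).1 = y <;> by_cases h2 : (f e).2 = y
  · simp [h1, h2]
  · exact Or.inl ⟨(f e).2, h2, Or.inl (by rw [← h1])⟩
  · exact Or.inl ⟨(f e).1, h1, Or.inr (by rw [← h2])⟩
  · simp [h1, h2]

lemma edgeCut_insert (f : E → V × V) (e : E) (y w : V) (A : Finset V) (hw : w ≠ y)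
    (h : Joins f e y w) (hy : y ∉ A) :
    edgeCut (f e) (insert y A) = edgeCut (f e) A + if w ∈ A then -1 else 1 := by
  by_cases hA : w ∈ A <;> rcases h with h | h <;> simp [edgeCut, h, hA, hy, hw]

lemma edgeCut_erase (f : E → V × V) (e : E) (y w : V) (B : Finset V) (hw : w ≠ y)
    (h : Joins f e y w) (hy : y ∈ B) :
    edgeCut (f e) (B.erase y) = edgeCut (f e) B + if w ∈ B then 1 else -1 := by
  by_cases hA : w ∈ B <;> rcases h with h | h <;> simp [edgeCut, h, hA, hy, hw]

lemma edgeCut_eq_of_not_incident (f : E → V × V) (e : E) (y : V) (X Y : Finset V)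
    (h : ((f e).1 ≠ y ∧ (f e).2 ≠ y) ∨ ((f e).1 = y ∧ (f e).2 = y))
    (hXY : ∀ x, x ≠ y → (x ∈ X ↔ x ∈ Y)) :
    edgeCut (f e) X = edgeCut (f e) Y := by
  rcases h with h | h
  · simp [edgeCut, hXY _ h.1, hXY _ h.2]
  · simp [edgeCut, h.1, h.2]

/-- If every edge at `y` leads into `A`, then moving `y` into `A` shrinks the cut. -/
lemma cutSize_insert_lt (f : E → V × V) (e₁ : E) (y u : V) (A : Finset V) (hu : u ≠ y)
    (he : Joins f e₁ y u) (hy : y ∉ A)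
    (hall : ∀ e w, w ≠ y → Joins f e y w → w ∈ A) :
    cutSize f (insert y A) < cutSize f A := by
  refine sum_lt_sum (fun e _ => ?_) ⟨e₁, mem_univ _, ?_⟩
  · rcases joins_or f e y with ⟨w, hw, h⟩ | h
    · rw [edgeCut_insert f e y w A hw h hy, if_pos (hall e w hw h)]; linarith
    · exact (edgeCut_eq_of_not_incident f e y _ _ h (by simp +contextual)).le
  · rw [edgeCut_insert f e₁ y u A hu he hy, if_pos (hall _ _ hu he)]; linarith

/-- If every edge at `y` leaves `B`, then removing `y` from `B` shrinks the cut. -/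
lemma cutSize_erase_lt (f : E → V × V) (e₁ : E) (y u : V) (B : Finset V) (hu : u ≠ y)
    (he : Joins f e₁ y u) (hy : y ∈ B)
    (hall : ∀ e w, w ≠ y → Joins f e y w → w ∉ B) :
    cutSize f (B.erase y) < cutSize f B := by
  refine sum_lt_sum (fun e _ => ?_) ⟨e₁, mem_univ _, ?_⟩
  · rcases joins_or f e y with ⟨w, hw, h⟩ | h
    · rw [edgeCut_erase f e y w B hw h hy, if_neg (hall e w hw h)]; linarith
    · exact (edgeCut_eq_of_not_incident f e y _ _ h (by simp +contextual)).le
  · rw [edgeCut_erase f e₁ y u B hu he hy, if_neg (hall _ _ hu he)]; linarith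

/-- If every edge at `y` leads into `A` or leaves `B`, and one edge does both, then moving `y`
into `A` and out of `B` shrinks the total of the two cuts. -/
lemma cutSize_insert_erase_lt (f : E → V × V) (e₁ : E) (y u : V) (A B : Finset V) (hu : u ≠ y)
    (he : Joins f e₁ y u) (hyA : y ∉ A) (hyB : y ∈ B) (huA : u ∈ A) (huB : u ∉ B)
    (hall : ∀ e w, w ≠ y → Joins f e y w → w ∈ A ∨ w ∉ B) :
    cutSize f (insert y A) + cutSize f (B.erase y) < cutSize f A + cutSize f B := by
  simp only [cutSize, ← sum_add_distrib]
  refine sum_lt_sum (fun e _ => ?_) ⟨e₁, mem_univ _, ?_⟩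
  · rcases joins_or f e y with ⟨w, hw, h⟩ | h
    · rw [edgeCut_erase f e y w B hw h hyB, edgeCut_insert f e y w A hw h hyA]
      rcases hall e w hw h with h | h
      · rw [if_pos h]; split_ifs <;> linarith
      · rw [if_neg h]; split_ifs <;> linarith
    · exact (add_le_add (edgeCut_eq_of_not_incident f e y _ _ h (by simp +contextual)).le
        (edgeCut_eq_of_not_incident f e y _ _ h (by simp +contextual)).le)
  · rw [edgeCut_erase f e₁ y u B hu he hyB, edgeCut_insert f e₁ y u A hu he hyA, if_pos huA,
      if_neg huB]
    linarith

/-- An edge at a vertex of even degree is accompanied by a second edge there. -/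
lemma exists_second_edge (f : E → V × V) (e₁ : E) (y u : V) (hu : u ≠ y) (he : Joins f e₁ y u)
    (hev : Even (cutSize f {y})) : ∃ e₂ w, e₁ ≠ e₂ ∧ w ≠ y ∧ Joins f e₂ y w := by
  by_contra! hcon
  have : cutSize f {y} = 1 := by
    unfold cutSize
    rw [Fintype.sum_eq_single e₁]
    · rcases he with h | h <;> simp [edgeCut, h, hu]
    · intro e hne
      rcases joins_or f e y with ⟨w, hw, h⟩ | h | h
      · exact absurd h (hcon e w hne.symm hw)
      · simp [edgeCut, h.1, h.2]
      · simp [edgeCut, h.1, h.2]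
  rw [this] at hev
  exact absurd hev (by decide)

/-- Splitting off (Lovász): an edge between a terminal and a non-terminal `y` can be split off
with a suitable second edge at `y` without violating the invariant. -/
lemma exists_splitOff [Fintype V] (f : E → V × V) (v : ι → V) (r : ι → ℤ) (hf : Admissible f v r)
    (i₀ : ι) (e₁ : E) (y : V) (hy : ∀ i, v i ≠ y) (he : Joins f e₁ y (v i₀)) :
    ∃ e₂ w, e₁ ≠ e₂ ∧ w ≠ y ∧ Joins f e₂ y w ∧
      Admissible (splitOff f e₁ e₂ y (v i₀) w) v r := by
  obtain ⟨hcut, heven⟩ := hf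
  by_contra! hcon
  -- A pair is blocked only by a tight set having `y` on one side and both other ends on the
  -- other side.
  have hbad : ∀ e₂ w, e₁ ≠ e₂ → w ≠ y → Joins f e₂ y w →
      (∃ X, Isolates v i₀ X ∧ cutSize f X = r i₀ ∧ y ∉ X ∧ w ∈ X) ∨
      (∃ j X, j ≠ i₀ ∧ Isolates v j X ∧ cutSize f X = r j ∧ y ∈ X ∧ w ∉ X) := by
    intro e₂ w hne hw h2
    by_contra hno
    refine hcon e₂ w hne hw h2 ⟨fun i X hX => ?_, fun x hx => ?_⟩
    · have hd := cutSize_splitOff f e₁ e₂ y (v i₀) w hne he h2 X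
      obtain ⟨hle, hev⟩ := hcut i X hX
      split_ifs at hd with hc
      · have hnt : cutSize f X ≠ r i := by
          intro ht
          apply hno
          by_cases hyX : y ∈ X
          · right
            have hvX : v i₀ ∉ X := by tauto
            refine ⟨i, X, ?_, hX, ht, hyX, by tauto⟩
            rintro rfl
            exact hvX ((hX i).2 rfl)
          · left
            have hvX : v i₀ ∈ X := by tauto
            obtain rfl := (hX i₀).1 hvX
            exact ⟨X, hX, ht, hyX, by tauto⟩
        grind
      · have : cutSize (splitOff f e₁ e₂ y (v i₀) w) X = cutSize f X := by linarith
        rw [this]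
        exact ⟨hle, hev⟩
    · have hd := cutSize_splitOff f e₁ e₂ y (v i₀) w hne he h2 {x}
      have := heven x hx
      grind
  have hA : (∃ A, Isolates v i₀ A ∧ cutSize f A = r i₀ ∧ y ∉ A ∧
      ∀ X, Isolates v i₀ X → cutSize f X = r i₀ → y ∉ X → X ⊆ A) ∨
      ∀ X, Isolates v i₀ X → cutSize f X = r i₀ → y ∈ X := by
    classical
    by_cases hex : ∃ X, Isolates v i₀ X ∧ cutSize f X = r i₀ ∧ y ∉ X
    · left
      obtain ⟨A, hAm, hmax⟩ := exists_max_image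
        (univ.filter fun X : Finset V => Isolates v i₀ X ∧ cutSize f X = r i₀ ∧ y ∉ X) card
        (by simpa [Finset.Nonempty] using hex)
      simp only [mem_filter, mem_univ, true_and] at hAm hmax
      obtain ⟨iA, tA, yA⟩ := hAm
      refine ⟨A, iA, tA, yA, fun X iX tX yX => ?_⟩
      -- Tight sets for the same terminal are closed under union.
      have hu := (hcut i₀ (A ∪ X) fun j => by simp [iA j, iX j]).1
      have hi := (hcut i₀ (A ∩ X) fun j => by simp [iA j, iX j]).1
      have hs := cutSize_inter_union f A X
      have hc := hmax (A ∪ X) ⟨fun j => by simp [iA j, iX j], by linarith, by simp [yA, yX]⟩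
      have := eq_of_subset_of_card_le subset_union_left hc
      rw [this]
      exact subset_union_right
    · right
      intro X h1 h2
      by_contra h3
      exact hex ⟨X, h1, h2, h3⟩
  have hB : (∃ j B, j ≠ i₀ ∧ Isolates v j B ∧ cutSize f B = r j ∧ y ∈ B ∧
      ∀ j₂ X, j₂ ≠ i₀ → Isolates v j₂ X → cutSize f X = r j₂ → y ∈ X → B ⊆ X) ∨
      ∀ j X, j ≠ i₀ → Isolates v j X → cutSize f X = r j → y ∉ X := by
    classical
    by_cases hex : ∃ X, ∃ j, j ≠ i₀ ∧ Isolates v j X ∧ cutSize f X = r j ∧ y ∈ X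
    · left
      obtain ⟨B, hBm, hmin⟩ := exists_min_image
        (univ.filter fun X : Finset V =>
          ∃ j, j ≠ i₀ ∧ Isolates v j X ∧ cutSize f X = r j ∧ y ∈ X) card
        (by simpa [Finset.Nonempty] using hex)
      simp only [mem_filter, mem_univ, true_and] at hBm hmin
      obtain ⟨j, hj, iB, tB, yB⟩ := hBm
      refine ⟨j, B, hj, iB, tB, yB, fun j₂ X hj₂ iX tX yX => ?_⟩
      by_cases hjj : j₂ = j
      -- Tight sets for the same terminal are closed under intersection.
      · subst hjj
        have hu := (hcut j₂ (B ∪ X) fun l => by simp [iB l, iX l]).1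
        have hi := (hcut j₂ (B ∩ X) fun l => by simp [iB l, iX l]).1
        have hs := cutSize_inter_union f B X
        have hc := hmin (B ∩ X) ⟨j₂, hj, fun l => by simp [iB l, iX l], by linarith,
          by simp [yB, yX]⟩
        have := eq_of_subset_of_card_le inter_subset_left hc
        rw [← this]
        exact inter_subset_right
      -- Tight sets for different terminals cannot both contain `y`: the edge `e₁` would make
      -- uncrossing by differences strict.
      · exfalso
        have h1 := (hcut j (B \ X) fun l => by
          simp only [mem_sdiff, iB l, iX l]
          exact ⟨fun h => h.1, fun h => ⟨h, fun h₂ => hjj (h₂.symm.trans h)⟩⟩).1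
        have h2 := (hcut j₂ (X \ B) fun l => by
          simp only [mem_sdiff, iB l, iX l]
          exact ⟨fun h => h.1, fun h => ⟨h, fun h₂ => hjj (h.symm.trans h₂)⟩⟩).1
        have := cutSize_sdiff_lt f B X e₁ y (v i₀) he yB yX
          (fun h => hj ((iB i₀).1 h).symm) (fun h => hj₂ ((iX i₀).1 h).symm)
        linarith
    · right
      intro j X h0 h1 h2 h3
      exact hex ⟨X, j, h0, h1, h2, h3⟩
  have hins : ∀ i A, Isolates v i A → r i ≤ cutSize f (insert y A) := fun i A h =>
    (hcut i _ fun j => by simp [hy j, h j]).1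
  have hers : ∀ i B, Isolates v i B → r i ≤ cutSize f (B.erase y) := fun i B h =>
    (hcut i _ fun j => by simp [hy j, h j]).1
  have hu := hy i₀
  rcases hA with ⟨A, iA, tA, yA, mA⟩ | hA <;> rcases hB with ⟨j, B, hj, iB, tB, yB, mB⟩ | hB
  · have huA : v i₀ ∈ A := (iA i₀).2 rfl
    have huB : v i₀ ∉ B := fun h => hj ((iB i₀).1 h).symm
    have := cutSize_insert_erase_lt f e₁ y _ A B hu he yA yB huA huB fun e w hw h => by
      by_cases hne : e₁ = e
      · subst hne
        have : w = v i₀ := by unfold Joins at h he; grind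
        exact Or.inl (this ▸ huA)
      · rcases hbad e w hne hw h with ⟨X, h1, h2, h3, h4⟩ | ⟨j₂, X, h0, h1, h2, h3, h4⟩
        · exact Or.inl (mA X h1 h2 h3 h4)
        · exact Or.inr fun hB => h4 (mB j₂ X h0 h1 h2 h3 hB)
    linarith [hins _ _ iA, hers _ _ iB]
  · have huA : v i₀ ∈ A := (iA i₀).2 rfl
    have := cutSize_insert_lt f e₁ y _ A hu he yA fun e w hw h => by
      by_cases hne : e₁ = e
      · subst hne
        have : w = v i₀ := by unfold Joins at h he; grind
        exact (this ▸ huA)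
      · rcases hbad e w hne hw h with ⟨X, h1, h2, h3, h4⟩ | ⟨j₂, X, h0, h1, h2, h3, h4⟩
        · exact (mA X h1 h2 h3 h4)
        · exact absurd h3 (hB j₂ X h0 h1 h2)
    linarith [hins _ _ iA]
  · have huB : v i₀ ∉ B := fun h => hj ((iB i₀).1 h).symm
    have := cutSize_erase_lt f e₁ y _ B hu he yB fun e w hw h => by
      by_cases hne : e₁ = e
      · subst hne
        have : w = v i₀ := by unfold Joins at h he; grind
        exact (this ▸ huB)
      · rcases hbad e w hne hw h with ⟨X, h1, h2, h3, h4⟩ | ⟨j₂, X, h0, h1, h2, h3, h4⟩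
        · exact absurd (hA X h1 h2) h3
        · exact fun hB => h4 (mB j₂ X h0 h1 h2 h3 hB)
    linarith [hers _ _ iB]
  · obtain ⟨e₂, w, hne, hw, h2⟩ := exists_second_edge f e₁ y _ hu he (heven y hy)
    rcases hbad e₂ w hne hw h2 with ⟨X, h1, h2, h3, h4⟩ | ⟨j₂, X, h0, h1, h2, h3, h4⟩
    · exact h3 (hA X h1 h2)
    · exact hB j₂ X h0 h1 h2 h3

/-! ### Chains and their boundaries -/

/-- Boundary over `F₂` of an edge with given ends; it vanishes for loops. -/
def edgeBnd (a : V × V) : V → ZMod 2 := Pi.single a.1 1 + Pi.single a.2 1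

lemma edgeBnd_joins (f : E → V × V) (e : E) (y w : V) (h : Joins f e y w) :
    edgeBnd (f e) = Pi.single y 1 + Pi.single w 1 := by
  rcases h with h | h <;> simp [edgeBnd, h, add_comm]

lemma char_two (g : V → ZMod 2) : g + g = 0 := by
  funext x; exact CharTwo.add_self_eq_zero _

/-- Disjoint chains in a split-off graph yield disjoint chains with the same boundaries in the
original graph: the new edge `uw` is replaced by the path `uy`, `yw`. -/
lemma lift_splitOff (f : E → V × V) (e₁ e₂ : E) (y u w : V) (hne : e₁ ≠ e₂)
    (h1 : Joins f e₁ y u) (h2 : Joins f e₂ y w) {k : ℕ} (τ : V → ZMod 2)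
    (hp : ∃ p : Fin k → Finset E, (∀ i j, i ≠ j → Disjoint (p i) (p j)) ∧
      ∀ i, ∑ e ∈ p i, edgeBnd (splitOff f e₁ e₂ y u w e) = τ) :
    ∃ p : Fin k → Finset E, (∀ i j, i ≠ j → Disjoint (p i) (p j)) ∧
      ∀ i, ∑ e ∈ p i, edgeBnd (f e) = τ := by
  obtain ⟨p, hd, hp⟩ := hp
  refine ⟨fun i => if e₁ ∈ p i then insert e₂ ((p i).erase e₂) else (p i).erase e₂, ?_, ?_⟩
  · intro i j hij
    have := hd i j hij
    rw [Finset.disjoint_left] at this ⊢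
    intro x hx hx₂
    have h3 := @this x
    have h4 := @this e₁
    dsimp only at hx hx₂
    split_ifs at hx hx₂ <;> simp only [mem_insert, mem_erase] at hx hx₂ <;> tauto
  · intro i
    have hq : ∑ e ∈ (p i).erase e₂, edgeBnd (splitOff f e₁ e₂ y u w e) = τ := by
      rw [sum_erase, hp i]
      simp [splitOff, edgeBnd, char_two]
    have hoff : ∀ e, e ≠ e₁ → e ≠ e₂ → splitOff f e₁ e₂ y u w e = f e := fun e a b => by
      simp [splitOff, Function.update_of_ne a, Function.update_of_ne b]
    dsimp only
    split_ifs with hm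
    · have hm₂ : e₁ ∈ (p i).erase e₂ := mem_erase.2 ⟨hne, hm⟩
      rw [sum_insert (notMem_erase _ _), ← add_sum_erase _ _ hm₂, ← hq,
        ← add_sum_erase _ _ hm₂, ← add_assoc]
      congr 1
      · rw [edgeBnd_joins f _ _ _ h1, edgeBnd_joins f _ _ _ h2]
        simp only [splitOff, Function.update_of_ne hne, Function.update_self, edgeBnd]
        have := char_two (Pi.single y 1 : V → ZMod 2)
        linear_combination this
      · refine sum_congr rfl fun e he => ?_
        simp only [mem_erase] at he
        rw [hoff e he.1 he.2.1]
    · rw [← hq]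
      refine sum_congr rfl fun e he => ?_
      simp only [mem_erase] at he
      rw [hoff e (fun h => hm (h ▸ he.2)) he.1]

/-- A packing of `k` chains outside `J` together with `J` itself is a packing of `k + 1` chains. -/
lemma extend_packing (f : E → V × V) (S J : Finset E) (hJ : J ⊆ S) (τ : V → ZMod 2) (k : ℕ)
    (hb : ∑ e ∈ J, edgeBnd (f e) = τ)
    (hp : ∃ p : Fin k → Finset E, (∀ i, p i ⊆ S \ J) ∧ (∀ i j, i ≠ j → Disjoint (p i) (p j)) ∧
      ∀ i, ∑ e ∈ p i, edgeBnd (f e) = τ) :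
    ∃ p : Fin (k + 1) → Finset E, (∀ i, p i ⊆ S) ∧ (∀ i j, i ≠ j → Disjoint (p i) (p j)) ∧
      ∀ i, ∑ e ∈ p i, edgeBnd (f e) = τ := by
  obtain ⟨p, hs, hd, hp⟩ := hp
  have hJd : ∀ i, Disjoint J (p i) := fun i =>
    disjoint_of_subset_right (hs i) disjoint_sdiff
  refine ⟨Fin.cons J p, ?_, ?_, ?_⟩
  · intro i
    refine Fin.cases hJ (fun i => ?_) i
    exact (hs i).trans sdiff_subset
  · intro i j
    refine Fin.cases ?_ (fun i => ?_) i <;> refine Fin.cases ?_ (fun j => ?_) j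
    · simp
    · intro _; simpa using hJd j
    · intro _; simpa using (hJd i).symm
    · intro h; simpa using hd i j (fun h₂ => h (by rw [h₂]))
  · intro i
    refine Fin.cases ?_ (fun i => ?_) i
    · simpa using hb
    · simpa using hp i

/-! ### Four terminals -/

instance (f : E → V × V) (e : E) (x y : V) : Decidable (Joins f e x y) :=
  inferInstanceAs (Decidable (_ ∨ _))

/-- Number of edges of `S` joining `x` and `y`. -/
def joinCount (f : E → V × V) (S : Finset E) (x y : V) : ℕ :=
  #{e ∈ S | Joins f e x y}

lemma joinCount_comm (f : E → V × V) (S : Finset E) (x y : V) :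
    joinCount f S x y = joinCount f S y x := by
  unfold joinCount
  congr 1
  exact filter_congr fun e _ => or_comm

lemma exists_of_joinCount_pos (f : E → V × V) (S : Finset E) (x y : V)
    (h : 0 < joinCount f S x y) : ∃ e ∈ S, Joins f e x y := by
  obtain ⟨e, he⟩ := card_pos.1 h
  exact ⟨e, (mem_filter.1 he).1, (mem_filter.1 he).2⟩

lemma joinCount_erase (f : E → V × V) (S : Finset E) (e : E) (he : e ∈ S) (a b x y : V)
    (h : Joins f e a b) :
    joinCount f S x y =
      joinCount f (S.erase e) x y + if (x = a ∧ y = b) ∨ (x = b ∧ y = a) then 1 else 0 := by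
  have hiff : Joins f e x y ↔ (x = a ∧ y = b) ∨ (x = b ∧ y = a) := by
    unfold Joins at *; grind
  unfold joinCount
  rw [← insert_erase he, filter_insert]
  by_cases hc : (x = a ∧ y = b) ∨ (x = b ∧ y = a)
  · rw [if_pos (hiff.2 hc), if_pos hc, card_insert_of_notMem (by simp)]
    simp
  · rw [if_neg (fun h => hc (hiff.1 h)), if_neg hc]
    simp

lemma ne_of_joins (f : E → V × V) (e e₂ : E) (a b c d : V) (h : Joins f e a b)
    (h₂ : Joins f e₂ c d) (h1 : a ≠ c ∨ b ≠ d) (h2 : a ≠ d ∨ b ≠ c) : e ≠ e₂ := by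
  rintro rfl
  unfold Joins at *
  grind

/-- Removing a perfect matching of the four terminals lowers two opposite counts by one. -/
lemma exists_matching (f : E → V × V) (S : Finset E) (a b c d : V) (hab : a ≠ b) (hac : a ≠ c)
    (had : a ≠ d) (hbc : b ≠ c) (hbd : b ≠ d) (hcd : c ≠ d)
    (h1 : 0 < joinCount f S a b) (h2 : 0 < joinCount f S c d) :
    ∃ J ⊆ S, ∑ e ∈ J, edgeBnd (f e)
        = Pi.single a 1 + Pi.single b 1 + Pi.single c 1 + Pi.single d 1 ∧
      joinCount f S a b = joinCount f (S \ J) a b + 1 ∧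
      joinCount f S c d = joinCount f (S \ J) c d + 1 ∧
      joinCount f S a c = joinCount f (S \ J) a c ∧
      joinCount f S a d = joinCount f (S \ J) a d ∧
      joinCount f S b c = joinCount f (S \ J) b c ∧
      joinCount f S b d = joinCount f (S \ J) b d := by
  obtain ⟨e, heS, he⟩ := exists_of_joinCount_pos f S a b h1
  obtain ⟨e₂, heS₂, he₂⟩ := exists_of_joinCount_pos f S c d h2
  have hne : e ≠ e₂ := ne_of_joins f e e₂ a b c d he he₂ (Or.inl hac) (Or.inl had)
  have hJ : S \ {e, e₂} = (S.erase e).erase e₂ := by ext; simp; tauto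
  have key : ∀ x y, joinCount f S x y = joinCount f (S \ {e, e₂}) x y +
      (if (x = c ∧ y = d) ∨ (x = d ∧ y = c) then 1 else 0) +
      (if (x = a ∧ y = b) ∨ (x = b ∧ y = a) then 1 else 0) := fun x y => by
    rw [joinCount_erase f S e heS a b x y he,
      joinCount_erase f (S.erase e) e₂ (mem_erase.2 ⟨hne.symm, heS₂⟩) c d x y he₂, hJ]
  refine ⟨{e, e₂}, ?_, ?_, ?_⟩
  · intro x; simp only [mem_insert, mem_singleton]; rintro (rfl | rfl) <;> assumption
  · rw [sum_pair hne, edgeBnd_joins f _ _ _ he, edgeBnd_joins f _ _ _ he₂]; abel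
  · simp only [key]
    simp [hab, hac, had, hbc, hbd, hcd, hab.symm, hac.symm, had.symm, hbc.symm, hbd.symm,
      hcd.symm]

/-- A graph with at least `k` edges from `a` to each of `b`, `c`, `d` contains `k` disjoint
three-edge stars centred at `a`. -/
lemma star_packing (f : E → V × V) (a b c d : V) (hab : a ≠ b) (hac : a ≠ c)
    (had : a ≠ d) (hbc : b ≠ c) (hbd : b ≠ d) (hcd : c ≠ d) (k : ℕ) (S : Finset E)
    (h1 : k ≤ joinCount f S a b) (h2 : k ≤ joinCount f S a c) (h3 : k ≤ joinCount f S a d) :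
    ∃ p : Fin k → Finset E, (∀ i, p i ⊆ S) ∧ (∀ i j, i ≠ j → Disjoint (p i) (p j)) ∧
      ∀ i, ∑ e ∈ p i, edgeBnd (f e)
        = Pi.single a 1 + Pi.single b 1 + Pi.single c 1 + Pi.single d 1 := by
  induction k generalizing S with
  | zero => exact ⟨fun _ => ∅, fun i => i.elim0, fun i => i.elim0, fun i => i.elim0⟩
  | succ k ih =>
    obtain ⟨e, heS, he⟩ := exists_of_joinCount_pos f S a b (by omega)
    obtain ⟨e₂, heS₂, he₂⟩ := exists_of_joinCount_pos f S a c (by omega)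
    obtain ⟨e₃, heS₃, he₃⟩ := exists_of_joinCount_pos f S a d (by omega)
    have n1 : e ≠ e₂ := ne_of_joins f e e₂ a b a c he he₂ (Or.inr hbc) (Or.inl hac)
    have n2 : e ≠ e₃ := ne_of_joins f e e₃ a b a d he he₃ (Or.inr hbd) (Or.inl had)
    have n3 : e₂ ≠ e₃ := ne_of_joins f e₂ e₃ a c a d he₂ he₃ (Or.inr hcd) (Or.inl had)
    have hJ : S \ {e, e₂, e₃} = ((S.erase e).erase e₂).erase e₃ := by ext; simp; tauto
    have key : ∀ x y, joinCount f S x y = joinCount f (S \ {e, e₂, e₃}) x y +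
        (if (x = a ∧ y = d) ∨ (x = d ∧ y = a) then 1 else 0) +
        (if (x = a ∧ y = c) ∨ (x = c ∧ y = a) then 1 else 0) +
        (if (x = a ∧ y = b) ∨ (x = b ∧ y = a) then 1 else 0) := fun x y => by
      rw [joinCount_erase f S e heS a b x y he,
        joinCount_erase f (S.erase e) e₂ (mem_erase.2 ⟨n1.symm, heS₂⟩) a c x y he₂,
        joinCount_erase f ((S.erase e).erase e₂) e₃
          (mem_erase.2 ⟨n3.symm, mem_erase.2 ⟨n2.symm, heS₃⟩⟩) a d x y he₃, hJ]
    refine extend_packing f S {e, e₂, e₃} ?_ _ k ?_ (ih _ ?_ ?_ ?_)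
    · intro x; simp only [mem_insert, mem_singleton]; rintro (rfl | rfl | rfl) <;> assumption
    · rw [sum_insert (by simp [n1, n2]), sum_pair n3, edgeBnd_joins f _ _ _ he,
        edgeBnd_joins f _ _ _ he₂, edgeBnd_joins f _ _ _ he₃]
      have := char_two (Pi.single a 1 : V → ZMod 2)
      linear_combination this
    · have := key a b
      simp [hab, hac, had, hbc, hbd] at this; omega
    · have := key a c
      simp [hab, hac, had, hbc.symm, hcd] at this; omega
    · have := key a d
      simp [hab, hac, had, hbd.symm, hcd.symm] at this; omega

/-- A graph on four vertices with all degrees at least `k` has `k` disjoint chains with boundary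
the sum of the vertices: remove perfect matchings as long as possible; when none is left, the
graph is a star. -/
lemma four_vertex_packing_s8 (f : E → V × V) (a b c d : V) (hab : a ≠ b) (hac : a ≠ c)
    (had : a ≠ d) (hbc : b ≠ c) (hbd : b ≠ d) (hcd : c ≠ d) (k : ℕ) (S : Finset E)
    (h1 : k ≤ joinCount f S a b + joinCount f S a c + joinCount f S a d)
    (h2 : k ≤ joinCount f S a b + joinCount f S b c + joinCount f S b d)
    (h3 : k ≤ joinCount f S a c + joinCount f S b c + joinCount f S c d)
    (h4 : k ≤ joinCount f S a d + joinCount f S b d + joinCount f S c d) :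
    ∃ p : Fin k → Finset E, (∀ i, p i ⊆ S) ∧ (∀ i j, i ≠ j → Disjoint (p i) (p j)) ∧
      ∀ i, ∑ e ∈ p i, edgeBnd (f e)
        = Pi.single a 1 + Pi.single b 1 + Pi.single c 1 + Pi.single d 1 := by
  induction k generalizing S with
  | zero => exact ⟨fun _ => ∅, fun i => i.elim0, fun i => i.elim0, fun i => i.elim0⟩
  | succ k ih =>
    have cab := joinCount_comm f S a b
    have cac := joinCount_comm f S a c
    have cad := joinCount_comm f S a d
    have cbc := joinCount_comm f S b c
    have cbd := joinCount_comm f S b d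
    have ccd := joinCount_comm f S c d
    have hcases : (0 < joinCount f S a b ∧ 0 < joinCount f S c d) ∨
        (0 < joinCount f S a c ∧ 0 < joinCount f S b d) ∨
        (0 < joinCount f S a d ∧ 0 < joinCount f S b c) ∨
        (k + 1 ≤ joinCount f S a b ∧ k + 1 ≤ joinCount f S a c ∧ k + 1 ≤ joinCount f S a d) ∨
        (k + 1 ≤ joinCount f S a b ∧ k + 1 ≤ joinCount f S b c ∧ k + 1 ≤ joinCount f S b d) ∨
        (k + 1 ≤ joinCount f S a c ∧ k + 1 ≤ joinCount f S b c ∧ k + 1 ≤ joinCount f S c d) ∨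
        (k + 1 ≤ joinCount f S a d ∧ k + 1 ≤ joinCount f S b d ∧ k + 1 ≤ joinCount f S c d) := by
      omega
    rcases hcases with ⟨g, g₂⟩ | ⟨g, g₂⟩ | ⟨g, g₂⟩ | ⟨g, g₂, g₃⟩ | ⟨g, g₂, g₃⟩ | ⟨g, g₂, g₃⟩ |
      ⟨g, g₂, g₃⟩
    · obtain ⟨J, hJ, hb, t⟩ := exists_matching f S a b c d hab hac had hbc hbd hcd g g₂
      exact extend_packing f S J hJ _ k hb
        (ih _ (by omega) (by omega) (by omega) (by omega))
    · obtain ⟨J, hJ, hb, t⟩ := exists_matching f S a c b d hac hab had hbc.symm hcd hbd g g₂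
      have := joinCount_comm f (S \ J) b c
      exact extend_packing f S J hJ _ k (hb.trans (by abel))
        (ih _ (by omega) (by omega) (by omega) (by omega))
    · obtain ⟨J, hJ, hb, t⟩ :=
        exists_matching f S a d b c had hab hac hbd.symm hcd.symm hbc g g₂
      have := joinCount_comm f (S \ J) b d
      have := joinCount_comm f (S \ J) c d
      exact extend_packing f S J hJ _ k (hb.trans (by abel))
        (ih _ (by omega) (by omega) (by omega) (by omega))
    · exact star_packing f a b c d hab hac had hbc hbd hcd _ S g g₂ g₃
    · obtain ⟨p, q, q₂, hp⟩ := star_packing f b a c d hab.symm hbc hbd hac had hcd (k + 1) S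
        (by omega) g₂ g₃
      exact ⟨p, q, q₂, fun i => (hp i).trans (by abel)⟩
    · obtain ⟨p, q, q₂, hp⟩ := star_packing f c a b d hac.symm hbc.symm hcd hab had hbd (k + 1) S
        (by omega) (by omega) g₃
      exact ⟨p, q, q₂, fun i => (hp i).trans (by abel)⟩
    · obtain ⟨p, q, q₂, hp⟩ := star_packing f d a b c had.symm hbd.symm hcd.symm hab hac hbc
        (k + 1) S (by omega) (by omega) (by omega)
      exact ⟨p, q, q₂, fun i => (hp i).trans (by abel)⟩

lemma cutSize_singleton_le (f : E → V × V) (a b c d : V)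
    (h : ∀ e w, w ≠ a → Joins f e a w → w = b ∨ w = c ∨ w = d) :
    cutSize f {a} ≤ joinCount f univ a b + joinCount f univ a c + joinCount f univ a d := by
  simp only [joinCount, card_filter, Nat.cast_sum, cutSize, ← sum_add_distrib]
  refine sum_le_sum fun e _ => ?_
  rcases joins_or f e a with ⟨w, hw, hj⟩ | h₂ | h₂
  · have h1 : edgeCut (f e) {a} = 1 := by
      rcases hj with h | h <;> simp [edgeCut, h, hw]
    rw [h1]
    rcases h e w hw hj with rfl | rfl | rfl <;> simp only [hj, if_true] <;> split_ifs <;> simp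
  · simp only [edgeCut, mem_singleton, h₂.1, h₂.2, iff_self, if_true]; positivity
  · simp only [edgeCut, mem_singleton, h₂.1, h₂.2, iff_self, if_true]; positivity

/-- Packing in an admissible graph with four terminals: split off edges joining a terminal to a
non-terminal until the terminals span a union of components. -/
lemma admissible_packing [Fintype V] (v : Fin 4 → V) (hv : Function.Injective v) (r : Fin 4 → ℤ)
    (k : ℕ) (hr : ∀ i, (k : ℤ) ≤ r i) (f : E → V × V)
    (hf : Admissible f v r) :
    ∃ p : Fin k → Finset E, (∀ i j, i ≠ j → Disjoint (p i) (p j)) ∧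
      ∀ i, ∑ e ∈ p i, edgeBnd (f e) = ∑ i, Pi.single (v i) 1 := by
  induction hN : #{e | (f e).1 ≠ (f e).2} using Nat.strong_induction_on generalizing f with
  | _ N ih =>
  by_cases hex : ∃ i e y, (∀ j, v j ≠ y) ∧ Joins f e y (v i)
  · obtain ⟨i, e₁, y, hy, he⟩ := hex
    obtain ⟨e₂, w, hne, hw, h2, had⟩ := exists_splitOff f v r hf i e₁ y hy he
    refine lift_splitOff f e₁ e₂ y (v i) w hne he h2 _ (ih _ ?_ _ had rfl)
    rw [← hN]
    · refine card_lt_card ((ssubset_iff_of_subset ?_).2 ⟨e₂, ?_, ?_⟩)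
      · intro e
        simp only [mem_filter, mem_univ, true_and]
        by_cases h3 : e = e₂
        · simp [splitOff, h3]
        · by_cases h4 : e = e₁
          · subst h4
            have := hy i
            rcases he with h | h <;> simp [h, this, this.symm]
          · simp [splitOff, h3, h4]
      · rcases h2 with h | h <;> simp [h, hw, hw.symm]
      · rw [mem_filter]; simp [splitOff]
  · have hin : ∀ i e w, w ≠ v i → Joins f e (v i) w → ∃ j, w = v j := by
      intro i e w hw h
      by_contra! hno
      exact hex ⟨i, e, w, fun j => (hno j).symm, h.symm⟩
    have hcase : ∀ i e w, w ≠ v i → Joins f e (v i) w →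
        w = v 0 ∨ w = v 1 ∨ w = v 2 ∨ w = v 3 := by
      intro i e w hw h
      obtain ⟨j, rfl⟩ := hin i e w hw h
      fin_cases j <;> simp
    have hdeg : ∀ i, (k : ℤ) ≤ cutSize f {v i} := fun i =>
      (hr i).trans (hf.1 i {v i} fun j => by simp [hv.eq_iff]).1
    have hd : ∀ i j : Fin 4, i ≠ j → v i ≠ v j := fun i j h => hv.ne h
    have d0 := (hdeg 0).trans (cutSize_singleton_le f (v 0) (v 1) (v 2) (v 3) fun e w hw h => by
      have := hcase 0 e w hw h; tauto)
    have d1 := (hdeg 1).trans (cutSize_singleton_le f (v 1) (v 0) (v 2) (v 3) fun e w hw h => by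
      have := hcase 1 e w hw h; tauto)
    have d2 := (hdeg 2).trans (cutSize_singleton_le f (v 2) (v 0) (v 1) (v 3) fun e w hw h => by
      have := hcase 2 e w hw h; tauto)
    have d3 := (hdeg 3).trans (cutSize_singleton_le f (v 3) (v 0) (v 1) (v 2) fun e w hw h => by
      have := hcase 3 e w hw h; tauto)
    rw [joinCount_comm f _ (v 1) (v 0)] at d1
    rw [joinCount_comm f _ (v 2) (v 0), joinCount_comm f _ (v 2) (v 1)] at d2
    rw [joinCount_comm f _ (v 3) (v 0), joinCount_comm f _ (v 3) (v 1),
      joinCount_comm f _ (v 3) (v 2)] at d3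
    obtain ⟨p, -, q, hp⟩ := four_vertex_packing_s8 f (v 0) (v 1) (v 2) (v 3)
      (hd _ _ (by decide)) (hd _ _ (by decide)) (hd _ _ (by decide)) (hd _ _ (by decide))
      (hd _ _ (by decide)) (hd _ _ (by decide)) k univ (by exact_mod_cast d0)
      (by exact_mod_cast d1) (by exact_mod_cast d2) (by exact_mod_cast d3)
    exact ⟨p, q, fun i => by rw [hp i, Fin.sum_univ_four]⟩

/-! ### Translation from the set-valued boundary -/

/-- Modulo 2, an edge crosses the cut of `X` as often as it has ends in `X`. -/
lemma edgeCut_cast (a : V × V) (X : Finset V) :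
    ((edgeCut a X : ℤ) : ZMod 2) = ∑ x ∈ X, edgeBnd a x := by
  have h2 : (1 : ZMod 2) + 1 = 0 := by decide
  simp only [edgeBnd, Pi.add_apply, sum_add_distrib, Pi.single_apply, sum_ite_eq', edgeCut]
  by_cases h1 : a.1 ∈ X <;> by_cases h3 : a.2 ∈ X <;> simp [h1, h3, h2]

lemma cutSize_cast (f : E → V × V) (X : Finset V) :
    ((cutSize f X : ℤ) : ZMod 2) = ∑ x ∈ X, ∑ e, edgeBnd (f e) x := by
  rw [cutSize, Int.cast_sum, sum_comm]
  exact sum_congr rfl fun e _ => edgeCut_cast _ _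

lemma cutSize_cast_singleton (f : E → V × V) (X : Finset V) :
    ((cutSize f X : ℤ) : ZMod 2) = ∑ x ∈ X, ((cutSize f {x} : ℤ) : ZMod 2) := by
  simp only [cutSize_cast, sum_singleton]

/-- Counting incidences modulo 2 gives the `F₂`-valued boundary. -/
lemma card_cast_eq (B : E → Finset V) (f : E → V × V)
    (hf : ∀ e, (f e).1 ≠ (f e).2 ∧ B e = {(f e).1, (f e).2}) (p : Finset E) (x : V) :
    ((#{e ∈ p | x ∈ B e} : ℕ) : ZMod 2) = ∑ e ∈ p, edgeBnd (f e) x := by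
  rw [card_filter, Nat.cast_sum]
  refine sum_congr rfl fun e _ => ?_
  obtain ⟨hne, hB⟩ := hf e
  rw [hB]
  by_cases h1 : x = (f e).1
  · simp [edgeBnd, h1, hne]
  · by_cases h2 : x = (f e).2 <;> simp [edgeBnd, h1, h2, hne.symm]

lemma mem_chainBnd_iff [Fintype V] (B : E → Finset V) (f : E → V × V)
    (hf : ∀ e, (f e).1 ≠ (f e).2 ∧ B e = {(f e).1, (f e).2}) (p : Finset E) (x : V) :
    x ∈ chainBnd B p ↔ ∑ e ∈ p, edgeBnd (f e) x = 1 := by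
  rw [chainBnd, mem_filter, ← card_cast_eq B f hf, ZMod.natCast_eq_one_iff_odd]
  simp

/-- Every cut isolating one terminal has at least `k` edges: otherwise the surviving chain would
have even total boundary on `X`. -/
lemma le_cutSize_of_chains [Fintype V] (B : E → Finset V) (f : E → V × V)
    (hf : ∀ e, (f e).1 ≠ (f e).2 ∧ B e = {(f e).1, (f e).2}) (k : ℕ) (hk : 1 ≤ k) (T : Finset V)
    (hdel : ∀ S : Finset E, #S ≤ k - 1 → ∃ p : Finset E, Disjoint p S ∧ chainBnd B p = T)
    (X : Finset V) (t : V) (hX : T ∩ X = {t}) : (k : ℤ) ≤ cutSize f X := by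
  by_contra! hlt
  have hcard : cutSize f X = #{e | ¬ ((f e).1 ∈ X ↔ (f e).2 ∈ X)} := by
    rw [card_filter, Nat.cast_sum]
    refine sum_congr rfl fun e _ => ?_
    by_cases h : ((f e).1 ∈ X ↔ (f e).2 ∈ X) <;> simp [edgeCut, h]
  obtain ⟨p, hd, hp⟩ := hdel {e | ¬ ((f e).1 ∈ X ↔ (f e).2 ∈ X)} (by omega)
  have h0 : ∑ x ∈ X, ∑ e ∈ p, edgeBnd (f e) x = 0 := by
    rw [sum_comm]
    refine sum_eq_zero fun e he => ?_
    rw [← edgeCut_cast]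
    have : e ∉ ({e | ¬ ((f e).1 ∈ X ↔ (f e).2 ∈ X)} : Finset E) := Finset.disjoint_left.1 hd he
    simp only [mem_filter, mem_univ, true_and, not_not] at this
    simp [edgeCut, this]
  have h1 : ∑ x ∈ X, ∑ e ∈ p, edgeBnd (f e) x = ∑ x ∈ X, if x ∈ T then 1 else 0 := by
    refine sum_congr rfl fun x _ => ?_
    have := mem_chainBnd_iff B f hf p x
    rw [hp] at this
    split_ifs with hx
    · exact this.1 hx
    · have h : ∑ e ∈ p, edgeBnd (f e) x ≠ 1 := fun h => hx (this.2 h)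
      generalize ∑ e ∈ p, edgeBnd (f e) x = z at h
      revert z; decide
  rw [h0, ← sum_filter, filter_mem_eq_inter, inter_comm, hX] at h1
  simp at h1

end PackingProof

open Finset in
theorem stmt8 {V E : Type} [Fintype V] [Fintype E] [DecidableEq V] [DecidableEq E]
    (bnd : E → Finset V) (hbnd : ∀ e, (bnd e).card = 2)
    (k : ℕ) (hk : 1 ≤ k)
    (v1 v2 v3 v4 : V) (hdist : ({v1, v2, v3, v4} : Finset V).card = 4)
    -- after deleting any `k-1` or fewer edges there is still a suitable chain:
    (hdel : ∀ S : Finset E, S.card ≤ k - 1 →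
      ∃ p : Finset E, Disjoint p S ∧ chainBnd bnd p = {v1, v2, v3, v4})
    -- `GN` : adjoin `n` new edges (indexed by `Fin n`) with boundaries `newbnd`:
    (n : ℕ) (newbnd : Fin n → Finset V)
    -- each new edge joins an odd-degree vertex outside the four to a vertex which
    -- is one of the four or another odd-degree vertex outside the four:
    (hnew : ∀ i : Fin n, ∃ a b : V,
      (a ∉ ({v1, v2, v3, v4} : Finset V) ∧ Odd (vdeg bnd a)) ∧
      (b ∈ ({v1, v2, v3, v4} : Finset V) ∨
        (b ∉ ({v1, v2, v3, v4} : Finset V) ∧ Odd (vdeg bnd b))) ∧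
      a ≠ b ∧ newbnd i = {a, b})
    -- each odd-degree vertex outside the four lies in the boundary of exactly one new edge:
    (hcover : ∀ y : V, y ∉ ({v1, v2, v3, v4} : Finset V) → Odd (vdeg bnd y) →
      ∃! i : Fin n, y ∈ newbnd i) :
    ∃ p : Fin k → Finset (E ⊕ Fin n),
      (∀ i j, i ≠ j → Disjoint (p i) (p j)) ∧
      ∀ i, chainBnd (Sum.elim bnd newbnd) (p i) = {v1, v2, v3, v4} := by
  set T : Finset V := {v1, v2, v3, v4} with hT
  have hends : ∀ e : E ⊕ Fin n, ∃ q : V × V, q.1 ≠ q.2 ∧ Sum.elim bnd newbnd e = {q.1, q.2} := by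
    rintro (e | i)
    · obtain ⟨a, b, hne, h⟩ := card_eq_two.1 (hbnd e)
      exact ⟨(a, b), hne, h⟩
    · obtain ⟨a, b, -, -, hne, h⟩ := hnew i
      exact ⟨(a, b), hne, h⟩
  choose f hf using hends
  have hfE : ∀ e, (f (Sum.inl e)).1 ≠ (f (Sum.inl e)).2 ∧
      bnd e = {(f (Sum.inl e)).1, (f (Sum.inl e)).2} := fun e => hf (Sum.inl e)
  set v : Fin 4 → V := ![v1, v2, v3, v4] with hv
  have hvT : ∀ x, x ∈ T ↔ ∃ i, v i = x := by
    intro x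
    simp only [hT, hv, mem_insert, mem_singleton, Fin.exists_fin_succ, Fin.exists_fin_zero]
    simp [eq_comm]
  have hTim : univ.image v = T := by
    ext x; simp [hvT]
  have hinj : Function.Injective v := by
    have h : #(univ.image v) = #(univ : Finset (Fin 4)) := by rw [hTim, hdist]; rfl
    exact Set.injOn_univ.1 (by simpa using card_image_iff.1 h)
  have hlow : ∀ i X, Isolates v i X → (k : ℤ) ≤ cutSize f X := by
    intro i X hX
    have hG := le_cutSize_of_chains bnd (fun e => f (Sum.inl e)) hfE k hk T hdel X (v i) (by
      ext x
      simp only [mem_inter, hvT, mem_singleton]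
      constructor
      · rintro ⟨⟨j, rfl⟩, hj⟩
        rw [(hX j).1 hj]
      · rintro rfl
        exact ⟨⟨i, rfl⟩, (hX i).2 rfl⟩)
    have : 0 ≤ ∑ j : Fin n, edgeCut (f (Sum.inr j)) X :=
      sum_nonneg fun j _ => by unfold edgeCut; split_ifs <;> simp
    rw [cutSize, Fintype.sum_sum_type]
    unfold cutSize at hG
    linarith
  have heven : ∀ y, (∀ i, v i ≠ y) → Even (cutSize f {y}) := by
    intro y hy
    have hyT : y ∉ T := by rw [hvT]; push Not; exact hy
    rw [← ZMod.intCast_eq_zero_iff_even, cutSize_cast, sum_singleton,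
      ← card_cast_eq (Sum.elim bnd newbnd) f hf, ZMod.natCast_eq_zero_iff_even]
    have hsplit : #{e | y ∈ Sum.elim bnd newbnd e} = vdeg bnd y + #{i | y ∈ newbnd i} := by
      simp only [vdeg, card_filter, Fintype.sum_sum_type, Sum.elim_inl, Sum.elim_inr]
      rfl
    rw [hsplit]
    by_cases hodd : Odd (vdeg bnd y)
    · obtain ⟨i, hi, huniq⟩ := hcover y hyT hodd
      have : ({i | y ∈ newbnd i} : Finset (Fin n)) = {i} := by
        ext j
        simp only [mem_filter, mem_univ, true_and, mem_singleton]
        exact ⟨huniq j, fun h => h ▸ hi⟩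
      rw [this, card_singleton]
      exact hodd.add_odd odd_one
    · have : ({i | y ∈ newbnd i} : Finset (Fin n)) = ∅ := by
        refine filter_eq_empty_iff.2 fun j _ hj => ?_
        obtain ⟨a, b, ha, hb, -, hab⟩ := hnew j
        rw [hab, mem_insert, mem_singleton] at hj
        rcases hj with rfl | rfl
        · exact hodd ha.2
        · rcases hb with hb | hb
          · exact hyT hb
          · exact hodd hb.2
      rw [this, card_empty, add_zero]
      exact Nat.not_odd_iff_even.1 hodd
  have hpar : ∀ i X, Isolates v i X → Even (cutSize f X - cutSize f {v i}) := by
    intro i X hX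
    rw [← ZMod.intCast_eq_zero_iff_even, Int.cast_sub, cutSize_cast_singleton, sub_eq_zero]
    refine sum_eq_single_of_mem _ ((hX i).2 rfl) fun x hx hne => ?_
    rw [ZMod.intCast_eq_zero_iff_even]
    refine heven x fun j hj => hne ?_
    rw [← hj, (hX j).1 (hj ▸ hx)]
  -- The requirement at `v i` is `k`, raised by one if the cuts isolating `v i` have other parity.
  obtain ⟨p, hdisj, hp⟩ := admissible_packing v hinj
    (fun i => if Even (cutSize f {v i} - k) then (k : ℤ) else k + 1) k
    (fun i => by split_ifs <;> omega) f
    ⟨fun i X hX => by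
      have h1 := hlow i X hX
      have h2 := hpar i X hX
      dsimp only
      split_ifs with h
      · exact ⟨h1, by grind⟩
      · constructor <;> grind, heven⟩
  refine ⟨p, hdisj, fun i => ?_⟩
  ext x
  rw [mem_chainBnd_iff _ f hf, ← Finset.sum_apply, hp i, Finset.sum_apply, hvT]
  constructor
  · intro h
    by_contra! hno
    rw [sum_eq_zero fun j _ => by simp [(hno j).symm]] at h
    exact absurd h (by decide)
  · rintro ⟨j, rfl⟩
    rw [sum_eq_single_of_mem j (mem_univ _) fun l _ hl => by
      simp [hinj.eq_iff, hl.symm]]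
    simp
end
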